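/- arXiv:2402.09647 — 5 statements merged into one kernel-verified Lean document; each statement's English description precedes it below -/
import Mathlib

section
/- There exists a real constant C ≥ 1 such that for all positive integers n, n' the following are equivalent: (1) δ_C(n, n') holds; (2) there exists a positive integer t such that n' = t·n and ⌊α·n'⌉ = t·⌊α·n⌉. -/
/-!
STATEMENT 11: δ_C(n, n') holds if and only if n' = t·n and ⌊α·n'⌉ = t·⌊α·n⌉ for
some positive integer t.
-/

namespace Stmt11

/-- The symmetric discrete derivative `Δ∘g(n, m) = g(n+m) − g(n) − g(m) + g(0)`. -/
def Δo (g : ℤ → ℤ) (n m : ℤ) : ℤ := g (n + m) - g n - g m + g 0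

/-- The second symmetric discrete derivative. -/
def Δ2 (g : ℤ → ℤ) (n₀ n₁ n₂ : ℤ) : ℤ :=
  g (n₀ + n₁ + n₂) - g (n₀ + n₁) - g (n₁ + n₂) - g (n₂ + n₀)
    + g n₀ + g n₁ + g n₂ - g 0

/-- `μ_C(n₀, n₁)`: there is a positive integer `n₂ ≥ C·n₁` with `Δ²g(n₀,n₁,n₂) = 0`. -/
def mu (C : ℝ) (g : ℤ → ℤ) (n₀ n₁ : ℤ) : Prop :=
  ∃ n₂ : ℤ, 0 < n₂ ∧ C * n₁ ≤ (n₂ : ℝ) ∧ Δ2 g n₀ n₁ n₂ = 0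

/-- `ψ_C(m, N)`: `μ_C(n, m)` holds for every positive integer `n ≤ N`. -/
def psi (C : ℝ) (g : ℤ → ℤ) (m N : ℤ) : Prop :=
  ∀ n : ℤ, 0 < n → n ≤ N → mu C g n m

/-- `δ_C(n, n')`. -/
def delta (C : ℝ) (g : ℤ → ℤ) (n n' : ℤ) : Prop :=
  ∃ H : ℤ, 0 < H ∧ ∀ M' : ℤ, 0 < M' → ∃ M : ℤ, 0 < M ∧
    ∀ m : ℤ, 0 < m → psi C g m M → ∃ m' : ℤ, 0 < m' ∧ psi C g m' M' ∧
      |Δo g n m' - Δo g n' m| ≤ H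

/-!
Let `q n = αn + ⌊αn⌉`. If `‖αn‖ + ‖αm‖ < 1/2`, then `⌊α(n + m)⌉` splits without carry and
`Δ²g(n, m, n₂) = 0` for arbitrarily large return times `n₂` of an auxiliary orbit, which exist by
van der Waerden's theorem. If `‖αm‖` is bounded below, then for a suitable `n` independent of `m`
the carries make `|Δ²g(n, m, n₂)|` large for all large `n₂`. Hence the sets `{m | ψ_C(m, M)}` form a
basis of the Bohr filter of `α`, along which `Δ∘g(n, m)` is within a bounded distance of `β`
times the integer `n⌊αm⌉ + m⌊αn⌉ = m · q n + o(1)`.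

So `δ_C(n, n')` bounds the integers
`n'⌊αm⌉ + m⌊αn'⌉ - n⌊αm'⌉ - m'⌊αn⌉ = m · q n' - m' · q n + o(1)`.
With `ρ = q n' / q n`, this confines the cluster points of `mρ` modulo `1` to integer multiples of
`1 / q n`, none of which is a nonzero torsion point since `q n` is irrational. If `ρ` is irrational,
Kronecker's theorem makes `1/2` a cluster point; if `ρ` is rational, `ρ` itself is one. Therefore
`ρ` is an integer `t`, and `q n' = t · q n` gives the claim.
-/

open Filter Topology

section Rounding

/-- The signed fractional part `⟨x⟩ ∈ [-1/2, 1/2)` of the paper. -/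
noncomputable def signedFract (x : ℝ) : ℝ := x - round x

theorem signedFract_mem_Ico (x : ℝ) : signedFract x ∈ Set.Ico (-(1 / 2)) (1 / 2) := by
  have h := round_eq_iff.mp (rfl : round x = round x)
  constructor <;> unfold signedFract <;> linarith [h.1, h.2]

theorem norm_coe_eq_abs_signedFract (x : ℝ) : ‖(x : UnitAddCircle)‖ = |signedFract x| :=
  UnitAddCircle.norm_eq

theorem round_eq_of_abs_sub_lt {x : ℝ} {k : ℤ} (h : |x - k| < 1 / 2) : round x = k := by
  rw [abs_lt] at h
  exact round_eq_iff.mpr ⟨by linarith, by linarith⟩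

theorem round_add (x y : ℝ) :
    round (x + y) = round x + round y + round (signedFract x + signedFract y) := by
  have h : signedFract x + signedFract y = x + y - ((round x + round y : ℤ) : ℝ) := by
    push_cast [signedFract]; ring
  rw [h, round_sub_intCast]
  ring

theorem round_add_of_abs_signedFract_lt {x y : ℝ}
    (h : |signedFract x| + |signedFract y| < 1 / 2) : round (x + y) = round x + round y := by
  have hcarry : round (signedFract x + signedFract y) = 0 :=
    round_eq_of_abs_sub_lt (by simpa using (abs_add_le _ _).trans_lt h)
  rw [round_add, hcarry, add_zero]

theorem round_add_of_abs_signedFract_sub_lt {x y : ℝ}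
    (h : |signedFract (x + y) - signedFract x| < 1 / 2) :
    round (x + y) = round x + round y := by
  have hy : round y = round (x + y) - round x :=
    round_eq_of_abs_sub_lt <| by
      convert h using 2
      push_cast [signedFract]
      ring
  rw [hy]
  ring

theorem round_mul_add_of_abs_signedFract_sub_lt {x : ℝ} {m n : ℤ}
    (h : |signedFract (x * (m + n : ℤ)) - signedFract (x * m)| < 1 / 2) :
    round (x * (m + n : ℤ)) = round (x * m) + round (x * n) := by
  rw [Int.cast_add, mul_add] at h ⊢
  exact round_add_of_abs_signedFract_sub_lt h

theorem round_neg_of_abs_signedFract_lt {x : ℝ} (h : |signedFract x| < 1 / 2) :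
    round (-x) = -round x :=
  round_eq_of_abs_sub_lt <| by
    rwa [Int.cast_neg, neg_sub_neg, abs_sub_comm]

/-- No integer multiple of `x` is a half-integer, so that rounding is continuous at all of them. -/
def AvoidsHalfIntegers (x : ℝ) : Prop := ∀ n : ℤ, |signedFract (x * n)| < 1 / 2

theorem abs_signedFract_lt_of_irrational {x : ℝ} (hx : Irrational x) :
    |signedFract x| < 1 / 2 := by
  refine abs_lt.mpr ⟨(signedFract_mem_Ico x).1.lt_of_ne fun h => ?_, (signedFract_mem_Ico x).2⟩
  exact hx ⟨round x - 1 / 2, by push_cast; unfold signedFract at h; linarith⟩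

theorem avoidsHalfIntegers_of_irrational {x : ℝ} (hx : Irrational x) : AvoidsHalfIntegers x := by
  intro n
  rcases eq_or_ne n 0 with rfl | hn
  · simp [signedFract]
  · exact abs_signedFract_lt_of_irrational (hx.mul_intCast hn)

theorem avoidsHalfIntegers_of_int_or_irrational {x : ℝ}
    (hx : (∃ k : ℤ, x = k) ∨ Irrational x) : AvoidsHalfIntegers x := by
  obtain ⟨k, rfl⟩ | hx := hx
  · intro n
    rw [signedFract, ← Int.cast_mul, round_intCast]
    norm_num
  · exact avoidsHalfIntegers_of_irrational hx

end Rounding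

section ReturnTimes

/-- The map `n ↦ n⌊αn⌉`, which satisfies `⌊βn⌊αn⌉⌉ = ⌊β · mulRound α n⌉`. -/
noncomputable def mulRound (α : ℝ) (n : ℤ) : ℤ := n * round (α * n)

/-- The generalised quadratic polynomial `n ↦ ⌊βn⌊αn⌉⌉`. -/
noncomputable def bracketQuad (α β : ℝ) (n : ℤ) : ℤ := round (β * mulRound α n)

theorem exists_homothety_forall_dist_lt {X M : Type*} [PseudoMetricSpace X] [CompactSpace X]
    [AddCommMonoid M] (f : M → X) (S : Finset M) {ε : ℝ} (hε : 0 < ε) :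
    ∃ a > 0, ∃ b, ∀ s ∈ S, ∀ t ∈ S, dist (f (a • s + b)) (f (a • t + b)) < ε := by
  obtain ⟨T, -, hT, hcover⟩ :=
    finite_cover_balls_of_compact (isCompact_univ (X := X)) (half_pos hε)
  have := hT.to_subtype
  choose c hc using fun x : X => Set.mem_iUnion₂.mp (hcover (Set.mem_univ x))
  obtain ⟨a, ha, b, y, hy⟩ :=
    Combinatorics.exists_mono_homothetic_copy S fun n => (⟨c (f n), (hc (f n)).1⟩ : T)
  have hnear (s) (hs : s ∈ S) : dist (f (a • s + b)) y < ε / 2 := by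
    rw [← hy s hs]
    exact (hc (f (a • s + b))).2
  refine ⟨a, ha, b, fun s hs t ht => ?_⟩
  linarith [dist_triangle_right (f (a • s + b)) (f (a • t + b)) y, hnear s hs, hnear t ht]

/-- The point of `𝕋⁴` whose return to `0` makes rounding additive in every term of the expansion of
`β(n + s)⌊α(n + s)⌉`. -/
noncomputable def bracketOrbit (α β : ℝ) (s : ℤ) :
    UnitAddCircle × UnitAddCircle × UnitAddCircle × UnitAddCircle :=
  ((α * s : ℝ), (β * s : ℝ), (β * round (α * s) : ℝ), (β * mulRound α s : ℝ))

theorem bracketOrbit_zero (α β : ℝ) : bracketOrbit α β 0 = 0 := by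
  simp [bracketOrbit, mulRound]

theorem dist_bracketOrbit_lt_iff {α β ε : ℝ} {m n : ℤ} :
    dist (bracketOrbit α β m) (bracketOrbit α β n) < ε ↔
      ‖((α * m - α * n : ℝ) : UnitAddCircle)‖ < ε ∧ ‖((β * m - β * n : ℝ) : UnitAddCircle)‖ < ε ∧
      ‖((β * round (α * m) - β * round (α * n) : ℝ) : UnitAddCircle)‖ < ε ∧
      ‖((β * mulRound α m - β * mulRound α n : ℝ) : UnitAddCircle)‖ < ε := by
  simp only [AddCircle.coe_sub, ← dist_eq_norm]
  simp only [bracketOrbit, Prod.dist_eq, max_lt_iff]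

theorem dist_bracketOrbit_two_mul_lt {α β ε : ℝ} {b d : ℤ} (hε : ε ≤ 1 / 4)
    (hr₁ : |signedFract (α * (b + d : ℤ)) - signedFract (α * b)| < ε)
    (hr₂ : |signedFract (α * (b + 2 * d : ℤ)) - signedFract (α * b)| < ε)
    (h₁ : dist (bracketOrbit α β (b + d)) (bracketOrbit α β b) < ε)
    (h₂ : dist (bracketOrbit α β (b + 2 * d)) (bracketOrbit α β b) < ε) :
    dist (bracketOrbit α β (2 * d)) 0 < 6 * ε := by
  have hround₁ := round_mul_add_of_abs_signedFract_sub_lt (hr₁.trans (by linarith))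
  have hround₂ := round_mul_add_of_abs_signedFract_sub_lt (hr₂.trans (by linarith))
  have hround₃ : round (α * (b + d + d : ℤ)) = round (α * (b + d : ℤ)) + round (α * d) := by
    refine round_mul_add_of_abs_signedFract_sub_lt ?_
    rw [add_assoc, ← two_mul]
    rw [abs_lt] at *
    constructor <;> linarith
  rw [add_assoc, ← two_mul] at hround₃
  have hdouble : round (α * (2 * d : ℤ)) = 2 * round (α * d) := by linarith
  obtain ⟨-, -, -, hq₁⟩ := dist_bracketOrbit_lt_iff.mp h₁
  obtain ⟨hα₂, hβ₂, hβα₂, hq₂⟩ := dist_bracketOrbit_lt_iff.mp h₂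
  have hε₀ : 0 < ε := (norm_nonneg _).trans_lt hα₂
  rw [← bracketOrbit_zero α β, dist_bracketOrbit_lt_iff]
  refine ⟨?_, ?_, ?_, ?_⟩
  · have : α * (2 * d : ℤ) - α * (0 : ℤ) = α * (b + 2 * d : ℤ) - α * b := by push_cast; ring
    rw [this]; linarith
  · have : β * (2 * d : ℤ) - β * (0 : ℤ) = β * (b + 2 * d : ℤ) - β * b := by push_cast; ring
    rw [this]; linarith
  · have : β * round (α * (2 * d : ℤ)) - β * round (α * (0 : ℤ)) =
        β * round (α * (b + 2 * d : ℤ)) - β * round (α * b) := by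
      rw [hround₂, Int.cast_zero, mul_zero, round_zero]; push_cast; ring
    rw [this]; linarith
  · -- The value at `2 * d` is twice the second difference along `b, b + d, b + 2 * d`.
    have : β * mulRound α (2 * d) - β * mulRound α 0 =
        (2 : ℕ) • (β * mulRound α (b + 2 * d) - β * mulRound α b)
          - (4 : ℕ) • (β * mulRound α (b + d) - β * mulRound α b) := by
      simp only [mulRound, hround₁, hround₂, hdouble]
      push_cast [nsmul_eq_mul]
      ring
    rw [this, AddCircle.coe_sub, AddCircle.coe_nsmul, AddCircle.coe_nsmul]
    refine (norm_sub_le _ _).trans_lt ((add_le_add norm_nsmul_le norm_nsmul_le).trans_lt ?_)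
    push_cast
    linarith

theorem mapClusterPt_bracketOrbit (α β : ℝ) : MapClusterPt 0 atTop (bracketOrbit α β) := by
  refine Metric.nhds_basis_ball.mapClusterPt_iff_frequently.mpr fun ε hε => ?_
  refine frequently_atTop.mpr fun N => ?_
  let f (n : ℤ) : Set.Icc (-(1 / 2) : ℝ) (1 / 2) ×
      (UnitAddCircle × UnitAddCircle × UnitAddCircle × UnitAddCircle) :=
    (⟨signedFract (α * n), Set.Ico_subset_Icc_self (signedFract_mem_Ico _)⟩, bracketOrbit α β n)
  let L := max N 1
  obtain ⟨a, ha, b, hab⟩ := exists_homothety_forall_dist_lt f {0, L, 2 * L}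
    (lt_min (by positivity : 0 < ε / 6) (by norm_num : (0 : ℝ) < 1 / 4))
  have hclose {t : ℤ} (ht : t ∈ ({0, L, 2 * L} : Finset ℤ)) :
      |signedFract (α * (b + a * t : ℤ)) - signedFract (α * b)| < min (ε / 6) (1 / 4) ∧
      dist (bracketOrbit α β (b + a * t)) (bracketOrbit α β b) < min (ε / 6) (1 / 4) := by
    have h := hab t ht 0 (by simp)
    rw [smul_zero, zero_add, nsmul_eq_mul, add_comm, Prod.dist_eq] at h
    exact max_lt_iff.mp h
  obtain ⟨hr₁, h₁⟩ := hclose (t := L) (by simp)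
  obtain ⟨hr₂, h₂⟩ := hclose (t := 2 * L) (by simp)
  rw [mul_left_comm] at hr₂ h₂
  have hL : L ≤ a * L := le_mul_of_one_le_left (by positivity) (by exact_mod_cast ha)
  refine ⟨2 * (a * L), by grind, ?_⟩
  rw [Metric.mem_ball]
  linarith [dist_bracketOrbit_two_mul_lt (min_le_right _ _) hr₁ hr₂ h₁ h₂,
    min_le_left (ε / 6) (1 / 4)]

/-- Large times at which `bracketOrbit α β` is close to `0`. -/
noncomputable def returnTimes (α β : ℝ) : Filter ℤ := atTop ⊓ comap (bracketOrbit α β) (𝓝 0)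

instance (α β : ℝ) : (returnTimes α β).NeBot :=
  neBot_inf_comap_iff_map.mpr <| by rw [inf_comm]; exact mapClusterPt_bracketOrbit α β

theorem tendsto_bracketOrbit_returnTimes (α β : ℝ) :
    Tendsto (bracketOrbit α β) (returnTimes α β) (𝓝 0) :=
  tendsto_comap.mono_left inf_le_right

theorem eventually_bracketQuad_add_eq {α β : ℝ} (hα : AvoidsHalfIntegers α)
    (hβ : AvoidsHalfIntegers β) (n : ℤ) :
    ∀ᶠ s in returnTimes α β, bracketQuad α β (n + s) = bracketQuad α β n +
      round (β * mulRound α s) + n * round (β * round (α * s)) + round (α * n) * round (β * s) := by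
  have hlim := tendsto_bracketOrbit_returnTimes α β
  have hfst := hlim.fst_nhds.norm
  have hsnd := hlim.snd_nhds.fst_nhds.norm
  have hthird := hlim.snd_nhds.snd_nhds.fst_nhds.norm
  have hfourth := hlim.snd_nhds.snd_nhds.snd_nhds.norm
  simp only [bracketOrbit, norm_coe_eq_abs_signedFract, Prod.fst_zero, Prod.snd_zero,
    norm_zero] at hfst hsnd hthird hfourth
  have hcarry : ∀ᶠ s : ℤ in returnTimes α β,
      |signedFract (α * n)| + |signedFract (α * s)| < 1 / 2 :=
    (tendsto_const_nhds.add hfst).eventually_lt_const (by simpa using hα n)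
  have herror : ∀ᶠ s : ℤ in returnTimes α β, |signedFract (β * mulRound α n)| +
      |signedFract (β * mulRound α s)| + |(n : ℝ)| * |signedFract (β * round (α * s))| +
      |(round (α * n) : ℝ)| * |signedFract (β * s)| < 1 / 2 :=
    (((tendsto_const_nhds.add hfourth).add (hthird.const_mul _)).add
      (hsnd.const_mul _)).eventually_lt_const (by simpa using hβ (mulRound α n))
  filter_upwards [hcarry, herror] with s hcarry herror
  refine round_eq_of_abs_sub_lt (lt_of_le_of_lt ?_ herror)
  have hround : round (α * (n + s : ℤ)) = round (α * n) + round (α * s) := by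
    rw [Int.cast_add, mul_add, round_add_of_abs_signedFract_lt hcarry]
  calc |β * mulRound α (n + s) - (bracketQuad α β n + round (β * mulRound α s) +
          n * round (β * round (α * s)) + round (α * n) * round (β * s) : ℤ)|
      = |signedFract (β * mulRound α n) + signedFract (β * mulRound α s) +
          n * signedFract (β * round (α * s)) + round (α * n) * signedFract (β * s)| := by
        congr 1
        rw [mulRound, hround]
        simp only [signedFract, bracketQuad, mulRound]
        push_cast
        ring
    _ ≤ _ := by
        rw [← abs_mul, ← abs_mul]
        exact (abs_add_le _ _).trans (add_le_add_left (abs_add_three _ _ _) _)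

theorem mu_bracketQuad_of_abs_signedFract_lt {α β : ℝ} (hα : AvoidsHalfIntegers α)
    (hβ : AvoidsHalfIntegers β) (C : ℝ) {n m : ℤ}
    (hnm : |signedFract (α * n)| + |signedFract (α * m)| < 1 / 2) :
    mu C (bracketQuad α β) n m := by
  have hround : round (α * (n + m : ℤ)) = round (α * n) + round (α * m) := by
    rw [Int.cast_add, mul_add, round_add_of_abs_signedFract_lt hnm]
  have hlarge : ∀ᶠ s : ℤ in returnTimes α β, 0 < s ∧ C * m ≤ s :=
    inf_le_left (a := atTop) ((eventually_gt_atTop 0).and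
      (tendsto_intCast_atTop_atTop.eventually_ge_atTop _))
  have hshift := eventually_bracketQuad_add_eq hα hβ
  obtain ⟨s, ⟨hs, hCs⟩, h₀, hn, hm, hnm⟩ :=
    (hlarge.and ((hshift 0).and ((hshift n).and ((hshift m).and (hshift (n + m)))))).exists
  refine ⟨s, hs, hCs, ?_⟩
  have h00 : bracketQuad α β 0 = 0 := by simp [bracketQuad, mulRound]
  simp only [zero_add, Int.cast_zero, mul_zero, round_zero, zero_mul, add_zero, h00] at h₀
  rw [Δ2, hnm, hm, add_comm s n, hn, h₀, hround, h00]
  ring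

end ReturnTimes

section Kronecker

open UnitAddTorus

variable {ι : Type*} [Fintype ι]

theorem mFourier_apply_add (k : ι → ℤ) (x y : UnitAddTorus ι) :
    mFourier k (x + y) = mFourier k x * mFourier k y := by
  simp [mFourier, fourier_apply, AddCircle.toCircle_add, Finset.prod_mul_distrib]

theorem toCircle_sum {κ : Type*} {T : ℝ} (s : Finset κ) (x : κ → AddCircle T) :
    AddCircle.toCircle (∑ i ∈ s, x i) = ∏ i ∈ s, AddCircle.toCircle (x i) :=
  map_prod AddCircle.toCircle_addChar.toMonoidHom (fun i => Multiplicative.ofAdd (x i)) s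

theorem mFourier_apply_eq_toCircle (k : ι → ℤ) (x : UnitAddTorus ι) :
    mFourier k x = AddCircle.toCircle (∑ i, k i • x i) := by
  rw [toCircle_sum]
  simp only [mFourier, fourier_apply, ContinuousMap.coe_mk]
  exact (map_prod Circle.coeHom _ _).symm

theorem tendsto_birkhoffAverage_mFourier {k : ι → ℤ} {x : UnitAddTorus ι}
    (hk : mFourier k x ≠ 1) (y : UnitAddTorus ι) :
    Tendsto (birkhoffAverage ℝ (· + x) (mFourier k) · y) atTop (𝓝 0) := by
  have hbdd : Bornology.IsBounded (Set.range (mFourier k)) :=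
    (isCompact_range (mFourier k).continuous).isBounded
  have hcocycle (n : ℕ) : birkhoffAverage ℝ (· + x) (mFourier k) n (y + x)
      - birkhoffAverage ℝ (· + x) (mFourier k) n y
      = (mFourier k x - 1) * birkhoffAverage ℝ (· + x) (mFourier k) n y := by
    simp only [birkhoffAverage, birkhoffSum, add_right_iterate, add_right_comm y x,
      mFourier_apply_add, ← Finset.sum_mul, Complex.real_smul]
    ring
  have hlim := (tendsto_birkhoffAverage_apply_sub_birkhoffAverage' ℝ hbdd (· + x) y).const_mul
    (mFourier k x - 1)⁻¹
  simpa [hcocycle, inv_mul_cancel_left₀ (sub_ne_zero.mpr hk)] using hlim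

theorem exists_tendsto_birkhoffAverage_of_mem_span {x : UnitAddTorus ι}
    (hx : ∀ k, k ≠ 0 → mFourier k x ≠ 1) {p : C(UnitAddTorus ι, ℂ)}
    (hp : p ∈ Submodule.span ℂ (Set.range mFourier)) :
    ∃ c : ℂ, ∀ y, Tendsto (birkhoffAverage ℝ (· + x) p · y) atTop (𝓝 c) := by
  induction hp using Submodule.span_induction with
  | mem _ h =>
    obtain ⟨k, rfl⟩ := h
    rcases eq_or_ne k 0 with rfl | hk
    · refine ⟨1, fun y => tendsto_const_nhds.congr' ?_⟩
      filter_upwards [eventually_ne_atTop 0] with n hn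
      rw [birkhoffAverage_of_comp_eq ℝ (by ext; simp [mFourier_zero]) (by exact_mod_cast hn)]
      simp [mFourier_zero]
    · exact ⟨0, tendsto_birkhoffAverage_mFourier (hx k hk)⟩
  | zero => exact ⟨0, fun y => by simp [birkhoffAverage, birkhoffSum]⟩
  | add p q _ _ hp hq =>
    obtain ⟨⟨c, hc⟩, d, hd⟩ := hp, hq
    refine ⟨c + d, fun y => ?_⟩
    simpa only [ContinuousMap.coe_add, birkhoffAverage_add, Pi.add_apply] using (hc y).add (hd y)
  | smul a p _ hp =>
    obtain ⟨c, hc⟩ := hp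
    refine ⟨a * c, fun y => ((hc y).const_mul a).congr fun n => ?_⟩
    simp [birkhoffAverage, birkhoffSum, ← Finset.mul_sum, mul_left_comm]

theorem eq_of_comp_add_right_eq {x : UnitAddTorus ι} (hx : ∀ k, k ≠ 0 → mFourier k x ≠ 1)
    {f : C(UnitAddTorus ι, ℂ)} (hf : ∀ y, f (y + x) = f y) (y z : UnitAddTorus ι) :
    f y = f z := by
  refine eq_of_forall_dist_le fun ε hε => ?_
  obtain ⟨p, hp, hfp⟩ : ∃ p ∈ Submodule.span ℂ (Set.range (mFourier (d := ι))),
      dist f p < ε / 2 := by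
    refine Metric.mem_closure_iff.mp ?_ (ε / 2) (half_pos hε)
    rw [← Submodule.topologicalClosure_coe, span_mFourier_closure_eq_top]
    trivial
  obtain ⟨c, hc⟩ := exists_tendsto_birkhoffAverage_of_mem_span hx hp
  have hfc (y) : dist (f y) c ≤ ε / 2 := by
    refine le_of_tendsto (tendsto_const_nhds.dist (hc y)) ?_
    filter_upwards [eventually_ne_atTop 0] with n hn
    have horbit (j : ℕ) : f ((· + x)^[j] y) = f y := by
      induction j with
      | zero => rfl
      | succ j ih => rw [Function.iterate_succ_apply', hf, ih]
    rw [dist_comm, ← Metric.mem_closedBall, birkhoffAverage, birkhoffSum, Finset.smul_sum]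
    refine (convex_closedBall (f y) (ε / 2)).sum_mem (fun _ _ => by positivity) ?_ fun j _ => ?_
    · simp [hn]
    · rw [Metric.mem_closedBall', ← horbit j]
      exact (ContinuousMap.dist_apply_le_dist _).trans hfp.le
  linarith [dist_triangle_right (f y) (f z) c, hfc y, hfc z]

theorem denseRange_zsmul_unitAddTorus {x : UnitAddTorus ι}
    (hx : ∀ k, k ≠ 0 → mFourier k x ≠ 1) : DenseRange (fun n : ℤ => n • x) := by
  let H := AddSubgroup.zmultiples x
  let f : C(UnitAddTorus ι, ℂ) := ⟨fun y => ‖(y : UnitAddTorus ι ⧸ H)‖, by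
    exact Complex.continuous_ofReal.comp (continuous_norm.comp QuotientAddGroup.continuous_mk)⟩
  have hf (y) : f (y + x) = f y := by
    have hx0 : (x : UnitAddTorus ι ⧸ H) = 0 :=
      (QuotientAddGroup.eq_zero_iff x).mpr (AddSubgroup.mem_zmultiples x)
    simp [f, hx0]
  intro y
  have hy : f y = 0 := by simpa [f] using eq_of_comp_add_right_eq hx hf y 0
  exact QuotientAddGroup.norm_mk_eq_zero_iff_mem_closure.mp (by simpa [f] using hy)

theorem mapClusterPt_nsmul_unitAddTorus {θ : ι → ℝ}
    (hθ : ∀ (k : ι → ℤ) (l : ℤ), ∑ i, k i * θ i = l → k = 0) (y : UnitAddTorus ι) :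
    MapClusterPt y atTop fun n : ℕ => n • (fun i => (θ i : UnitAddCircle)) := by
  refine ((mapClusterPt_atTop_nsmul_tfae y _).out 0 3).mpr (denseRange_zsmul_unitAddTorus ?_ y)
  intro k hk h1
  have hcoe : ∑ i, k i • (θ i : UnitAddCircle) = ((∑ i, k i * θ i : ℝ) : UnitAddCircle) := by
    rw [← QuotientAddGroup.coe_mk', map_sum]
    simp
  rw [mFourier_apply_eq_toCircle, Circle.coe_eq_one, ← AddCircle.toCircle_zero,
    (AddCircle.injective_toCircle one_ne_zero).eq_iff, hcoe, AddCircle.coe_eq_zero_iff] at h1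
  obtain ⟨l, hl⟩ := h1
  exact hk (hθ k l (by simpa using hl.symm))

theorem mapClusterPt_nsmul_coe_of_irrational {α : ℝ} (hα : Irrational α) (y : UnitAddCircle) :
    MapClusterPt y atTop fun n : ℕ => n • (α : UnitAddCircle) :=
  ((mapClusterPt_atTop_nsmul_tfae y _).out 0 3).mpr <|
    AddCircle.denseRange_zsmul_coe_iff.mpr (by simpa using hα) y

theorem coe_signedFract (x : ℝ) : (signedFract x : UnitAddCircle) = x := by
  simp [signedFract]

theorem frequently_signedFract_mem_Ioo {α a b : ℝ} (hα : Irrational α) (ha : -(1 / 2) ≤ a)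
    (hab : a < b) (hb : b ≤ 1 / 2) : ∃ᶠ n : ℕ in atTop, signedFract (α * n) ∈ Set.Ioo a b := by
  have hopen : IsOpen ((↑) '' Set.Ioo a b : Set UnitAddCircle) :=
    QuotientAddGroup.isOpenMap_coe _ isOpen_Ioo
  obtain ⟨c, hc⟩ := Set.nonempty_Ioo.mpr hab
  refine ((mapClusterPt_nsmul_coe_of_irrational hα c).frequently
    (hopen.mem_nhds (Set.mem_image_of_mem _ hc))).mono fun n ⟨x, hx, hxn⟩ => ?_
  rw [← AddCircle.coe_nsmul, nsmul_eq_mul, mul_comm, ← coe_signedFract (α * n)] at hxn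
  have hmem := signedFract_mem_Ico (α * n)
  rwa [← (AddCircle.coe_eq_coe_iff_of_mem_Ico (a := -(1 / 2))
    ⟨by linarith [hx.1], by linarith [hx.2]⟩ ⟨hmem.1, by linarith [hmem.2]⟩).mp hxn]

end Kronecker
section Carries

theorem round_add_add (x y z : ℝ) :
    round (x + y + z) = round x + round y + round z +
      round (signedFract x + signedFract y + signedFract z) := by
  have h : signedFract x + signedFract y + signedFract z =
      x + y + z - ((round x + round y + round z : ℤ) : ℝ) := by
    push_cast [signedFract]; ring
  rw [h, round_sub_intCast]
  ring

theorem round_eq_ite {x : ℝ} (hx : x ∈ Set.Ico (-(1 / 2)) (3 / 2)) :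
    round x = if x < 1 / 2 then 0 else 1 := by
  split_ifs with h <;> rw [round_eq_iff] <;> push_cast <;>
    constructor <;> linarith [hx.1, hx.2]

theorem Δ2_mulRound (α : ℝ) (n₀ n₁ n₂ : ℤ) :
    Δ2 (mulRound α) n₀ n₁ n₂ =
      (n₀ + n₁ + n₂) *
        round (signedFract (α * n₀) + signedFract (α * n₁) + signedFract (α * n₂))
      - (n₀ + n₁) * round (signedFract (α * n₀) + signedFract (α * n₁))
      - (n₁ + n₂) * round (signedFract (α * n₁) + signedFract (α * n₂))
      - (n₂ + n₀) * round (signedFract (α * n₂) + signedFract (α * n₀)) := by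
  have hpair (a b : ℤ) : round (α * (a + b : ℤ)) = round (α * a) + round (α * b) +
      round (signedFract (α * a) + signedFract (α * b)) := by
    rw [Int.cast_add, mul_add, round_add]
  have htriple : round (α * (n₀ + n₁ + n₂ : ℤ)) =
      round (α * n₀) + round (α * n₁) + round (α * n₂) +
        round (signedFract (α * n₀) + signedFract (α * n₁) + signedFract (α * n₂)) := by
    rw [Int.cast_add, Int.cast_add, mul_add, mul_add, round_add_add]
  simp only [Δ2, mulRound]
  rw [htriple, hpair n₀, hpair n₁, hpair n₂]
  ring

theorem le_abs_Δ2_mulRound {α : ℝ} {K n₀ n₁ n₂ : ℤ} (h₁ : 0 < n₁)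
    (hx₀ : 0 < signedFract (α * n₀)) (hx₁ : 0 < signedFract (α * n₁))
    (hcarry : 1 / 2 ≤ signedFract (α * n₀) + signedFract (α * n₁)) (hK₀ : K ≤ n₀)
    (hK₁ : signedFract (α * n₀) < signedFract (α * n₁) → K ≤ n₁) (hK₂ : K ≤ n₂) :
    K ≤ |Δ2 (mulRound α) n₀ n₁ n₂| := by
  rw [Δ2_mulRound]
  obtain ⟨-, hx₀'⟩ := signedFract_mem_Ico (α * n₀)
  obtain ⟨-, hx₁'⟩ := signedFract_mem_Ico (α * n₁)
  obtain ⟨hx₂, hx₂'⟩ := signedFract_mem_Ico (α * n₂)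
  generalize signedFract (α * n₀) = x₀ at *
  generalize signedFract (α * n₁) = x₁ at *
  generalize signedFract (α * n₂) = x₂ at *
  rw [round_eq_ite (x := x₀ + x₁ + x₂) ⟨by linarith, by linarith⟩,
    round_eq_ite (x := x₀ + x₁) ⟨by linarith, by linarith⟩,
    round_eq_ite (x := x₁ + x₂) ⟨by linarith, by linarith⟩,
    round_eq_ite (x := x₂ + x₀) ⟨by linarith, by linarith⟩, if_neg hcarry.not_gt, le_abs]
  -- If only `x₁ + x₂` carries then the value is `-n₁`, and `x₀ < x₁`.
  have hlt : x₂ + x₀ < 1 / 2 → ¬x₁ + x₂ < 1 / 2 → K ≤ n₁ := fun h h' => hK₁ (by linarith)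
  split_ifs with h₀₁₂ h₁₂ h₀₂ h₀₂ h₁₂ h₀₂ h₀₂
  all_goals first | exfalso; linarith | grind

theorem Δ2_mulRound_neg {α : ℝ} (hα : AvoidsHalfIntegers α) (n₀ n₁ n₂ : ℤ) :
    Δ2 (mulRound (-α)) n₀ n₁ n₂ = -Δ2 (mulRound α) n₀ n₁ n₂ := by
  have h (n : ℤ) : mulRound (-α) n = -mulRound α n := by
    rw [mulRound, neg_mul, round_neg_of_abs_signedFract_lt (hα n), mulRound, mul_neg]
  simp only [Δ2, h]
  ring

theorem exists_forall_le_abs_Δ2_mulRound {α ε : ℝ} (hα : Irrational α) (hε : 0 < ε) (K : ℤ) :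
    ∃ n₀ : ℤ, 0 < n₀ ∧ ∀ m : ℤ, 0 < m → ε ≤ signedFract (α * m) →
      ∀ n₂ : ℤ, K ≤ n₂ → K ≤ |Δ2 (mulRound α) n₀ m n₂| := by
  have hthreshold : ∀ᶠ t : ℝ in 𝓝[<] (1 / 2),
      0 < t ∧ 1 / 2 - ε < t ∧ ∀ m ∈ Finset.Icc 1 K, signedFract (α * m) < t := by
    have hgt {a : ℝ} (ha : a < 1 / 2) : ∀ᶠ t in 𝓝[<] (1 / 2 : ℝ), a < t :=
      eventually_nhdsWithin_of_eventually_nhds (eventually_gt_nhds ha)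
    exact (hgt (by norm_num)).and ((hgt (by linarith)).and
      ((Finset.eventually_all _).mpr fun m _ => hgt (signedFract_mem_Ico _).2))
  obtain ⟨t, ⟨ht₀, htε, htK⟩, ht⟩ := (hthreshold.and self_mem_nhdsWithin).exists
  obtain ⟨n₀, ⟨hn₀t, -⟩, hn₀, hKn₀⟩ :=
    ((frequently_signedFract_mem_Ioo hα (by linarith) ht le_rfl).and_eventually
      ((eventually_gt_atTop 0).and (eventually_ge_atTop K.toNat))).exists
  refine ⟨n₀, by exact_mod_cast hn₀, fun m hm hεm n₂ hK₂ => ?_⟩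
  refine le_abs_Δ2_mulRound hm ?_ (hε.trans_le hεm) ?_
    (Int.toNat_le.mp hKn₀) (fun hlt => ?_) hK₂
  · exact ht₀.trans (by exact_mod_cast hn₀t)
  · rw [Int.cast_natCast]; linarith
  · by_contra! hmK
    rw [Int.cast_natCast] at hlt
    linarith [htK m (Finset.mem_Icc.mpr ⟨hm, hmK.le⟩)]

theorem exists_forall_exists_le_abs_Δ2_mulRound {α ε : ℝ} (hα : Irrational α) (hε : 0 < ε)
    (K : ℤ) :
    ∃ M : ℤ, 0 < M ∧ ∀ m : ℤ, 0 < m → ε ≤ |signedFract (α * m)| →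
      ∃ n : ℤ, 0 < n ∧ n ≤ M ∧ ∀ n₂ : ℤ, K ≤ n₂ → K ≤ |Δ2 (mulRound α) n m n₂| := by
  have hhalf := avoidsHalfIntegers_of_irrational hα
  obtain ⟨n, hn, hpos⟩ := exists_forall_le_abs_Δ2_mulRound hα hε K
  obtain ⟨n', hn', hneg⟩ := exists_forall_le_abs_Δ2_mulRound hα.neg hε K
  refine ⟨max n n', lt_max_of_lt_left hn, fun m hm hεm => ?_⟩
  rcases le_abs.mp hεm with h | h
  · exact ⟨n, hn, le_max_left _ _, hpos m hm h⟩
  · refine ⟨n', hn', le_max_right _ _, fun n₂ hK => ?_⟩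
    have hsign : signedFract (-α * m) = -signedFract (α * m) := by
      rw [neg_mul, signedFract, round_neg_of_abs_signedFract_lt (hhalf m), signedFract]
      push_cast; ring
    simpa only [Δ2_mulRound_neg hhalf, abs_neg] using hneg m hm (hsign ▸ h) n₂ hK

end Carries

section BohrFilter

theorem abs_Δo_round_mul_sub_le (β : ℝ) (f : ℤ → ℤ) (n m : ℤ) :
    |Δo (fun k => round (β * f k)) n m - β * Δo f n m| ≤ 2 := by
  have h (k : ℤ) := abs_le.mp (abs_sub_round (β * f k))
  rw [abs_le]
  push_cast [Δo]
  constructor <;> linarith [h (n + m), h n, h m, h 0]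

theorem abs_Δ2_round_mul_sub_le (β : ℝ) (f : ℤ → ℤ) (n₀ n₁ n₂ : ℤ) :
    |Δ2 (fun k => round (β * f k)) n₀ n₁ n₂ - β * Δ2 f n₀ n₁ n₂| ≤ 4 := by
  have h (k : ℤ) := abs_le.mp (abs_sub_round (β * f k))
  rw [abs_le]
  push_cast [Δ2]
  constructor <;> linarith [h (n₀ + n₁ + n₂), h (n₀ + n₁), h (n₁ + n₂), h (n₂ + n₀), h n₀, h n₁,
    h n₂, h 0]

theorem exists_forall_psi_imp_abs_signedFract_lt {α β C ε : ℝ} (hα : Irrational α)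
    (hC : 4 < |β| * C) (hε : 0 < ε) :
    ∃ M : ℤ, 0 < M ∧ ∀ m : ℤ, 0 < m → psi C (bracketQuad α β) m M →
      |signedFract (α * m)| < ε := by
  obtain ⟨M, hM, hlarge⟩ := exists_forall_exists_le_abs_Δ2_mulRound hα hε ⌈C⌉
  refine ⟨M, hM, fun m hm hpsi => ?_⟩
  by_contra! hεm
  obtain ⟨n, hn, hnM, hΔ⟩ := hlarge m hm hεm
  obtain ⟨n₂, -, hCn₂, hzero⟩ := hpsi n hn hnM
  have hC₀ : 0 < C := pos_of_mul_pos_right (by linarith) (abs_nonneg β)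
  have hCm : C ≤ C * m := le_mul_of_one_le_right hC₀.le (by exact_mod_cast hm)
  have hCΔ : C ≤ |(Δ2 (mulRound α) n m n₂ : ℝ)| := by
    exact_mod_cast Int.ceil_le.mp (hΔ n₂ (Int.ceil_le.mpr (hCm.trans hCn₂)))
  have hbound : |(Δ2 (bracketQuad α β) n m n₂ : ℝ) - β * Δ2 (mulRound α) n m n₂| ≤ 4 :=
    abs_Δ2_round_mul_sub_le β (mulRound α) n m n₂
  rw [hzero, Int.cast_zero, zero_sub, abs_neg, abs_mul] at hbound
  linarith [mul_le_mul_of_nonneg_left hCΔ (abs_nonneg β)]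

/-- The filter of sets of positive integers generated by the Bohr sets
`{m > 0 | ‖αm‖ < ε}`, `ε > 0`. -/
def bohrFilter (α : ℝ) : Filter ℤ :=
  comap (fun m : ℤ => m • (α : UnitAddCircle)) (𝓝 0) ⊓ 𝓟 (Set.Ioi 0)

theorem hasBasis_bohrFilter (α : ℝ) :
    (bohrFilter α).HasBasis (fun ε : ℝ => 0 < ε)
      fun ε => {m : ℤ | 0 < m ∧ |signedFract (α * m)| < ε} := by
  refine ((Metric.nhds_basis_ball.comap _).inf_principal (Set.Ioi 0)).congr
    (fun _ => Iff.rfl) fun ε _ => Set.ext fun m => ?_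
  simp only [← norm_coe_eq_abs_signedFract, mul_comm α, ← zsmul_eq_mul, AddCircle.coe_zsmul]
  simp [and_comm]

theorem eventually_bohrFilter_pos (α : ℝ) : ∀ᶠ m in bohrFilter α, 0 < m :=
  inf_le_right (a := comap _ _) (mem_principal_self _)

theorem tendsto_abs_signedFract_bohrFilter (α : ℝ) :
    Tendsto (fun m : ℤ => |signedFract (α * m)|) (bohrFilter α) (𝓝 0) := by
  simp_rw [← norm_coe_eq_abs_signedFract, mul_comm α, ← zsmul_eq_mul, AddCircle.coe_zsmul]
  exact tendsto_norm_zero.comp (tendsto_comap.mono_left inf_le_left)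

theorem eventually_bohrFilter_psi_bracketQuad {α β : ℝ} (hα : AvoidsHalfIntegers α)
    (hβ : AvoidsHalfIntegers β) (C : ℝ) (M : ℤ) :
    ∀ᶠ m in bohrFilter α, psi C (bracketQuad α β) m M := by
  have hmu : ∀ᶠ m in bohrFilter α, ∀ n ∈ Finset.Icc 1 M, mu C (bracketQuad α β) n m := by
    refine (Finset.eventually_all _).mpr fun n _ => ?_
    filter_upwards [(tendsto_abs_signedFract_bohrFilter α).eventually_lt_const
      (sub_pos.mpr (hα n))] with m hm
    exact mu_bracketQuad_of_abs_signedFract_lt hα hβ C (by linarith)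
  exact hmu.mono fun m h n hn hnM => h n (Finset.mem_Icc.mpr ⟨hn, hnM⟩)

theorem hasBasis_bohrFilter_psi_bracketQuad {α β C : ℝ} (hα : Irrational α)
    (hβ : AvoidsHalfIntegers β) (hC : 4 < |β| * C) :
    (bohrFilter α).HasBasis (fun M : ℤ => 0 < M)
      fun M => {m | 0 < m ∧ psi C (bracketQuad α β) m M} := by
  refine ⟨fun U => ⟨fun hU => ?_, fun ⟨M, _, hMU⟩ => mem_of_superset ?_ hMU⟩⟩
  · obtain ⟨ε, hε, hεU⟩ := (hasBasis_bohrFilter α).mem_iff.mp hU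
    obtain ⟨M, hM, h⟩ := exists_forall_psi_imp_abs_signedFract_lt hα hC hε
    exact ⟨M, hM, fun m ⟨hm, hpsi⟩ => hεU ⟨hm, h m hm hpsi⟩⟩
  · exact (eventually_bohrFilter_pos α).and
      (eventually_bohrFilter_psi_bracketQuad (avoidsHalfIntegers_of_irrational hα) hβ C M)

end BohrFilter

section Shadowing

/-- Along `F`, every value of `b` is attained up to a bounded error by `a`, at points of any
prescribed member of `F`; this is the shape of `delta` once `psi` is replaced by a filter. -/
def BoundedlyShadows {X : Type*} (F : Filter X) (a b : X → ℝ) : Prop :=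
  ∃ H : ℝ, ∀ U ∈ F, ∀ᶠ x in F, ∃ y ∈ U, |a y - b x| ≤ H

theorem BoundedlyShadows.of_abs_sub_mul_le {X : Type*} {F : Filter X} {a b a' b' : X → ℝ}
    {β c : ℝ} (h : BoundedlyShadows F a b) (hβ : β ≠ 0)
    (ha : ∀ᶠ x in F, |a x - β * a' x| ≤ c) (hb : ∀ᶠ x in F, |b x - β * b' x| ≤ c) :
    BoundedlyShadows F a' b' := by
  obtain ⟨H, hH⟩ := h
  refine ⟨(H + 2 * c) / |β|, fun U hU => ?_⟩
  filter_upwards [hb, hH _ (inter_mem hU ha)] with x hbx ⟨y, ⟨hyU, hay⟩, hyx⟩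
  refine ⟨y, hyU, ?_⟩
  rw [le_div_iff₀' (abs_pos.mpr hβ), ← abs_mul, abs_le]
  rw [Set.mem_ofPred_eq] at hay
  rw [abs_le] at *
  constructor <;> linarith

theorem boundedlyShadows_iff_of_abs_sub_mul_le {X : Type*} {F : Filter X} {a b a' b' : X → ℝ}
    {β c : ℝ} (hβ : β ≠ 0) (ha : ∀ᶠ x in F, |a x - β * a' x| ≤ c)
    (hb : ∀ᶠ x in F, |b x - β * b' x| ≤ c) :
    BoundedlyShadows F a b ↔ BoundedlyShadows F a' b' := by
  have hinv {s s' : ℝ} (hs : |s - β * s'| ≤ c) : |s' - β⁻¹ * s| ≤ |β⁻¹| * c := by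
    calc |s' - β⁻¹ * s| = |β⁻¹| * |s - β * s'| := by
          rw [← abs_mul, mul_sub, inv_mul_cancel_left₀ hβ, abs_sub_comm]
      _ ≤ |β⁻¹| * c := by gcongr
  exact ⟨fun h => h.of_abs_sub_mul_le hβ ha hb, fun h => h.of_abs_sub_mul_le (inv_ne_zero hβ)
    (ha.mono fun _ => hinv) (hb.mono fun _ => hinv)⟩

theorem delta_iff_boundedlyShadows {C : ℝ} {g : ℤ → ℤ} {F : Filter ℤ}
    (hF : F.HasBasis (fun M : ℤ => 0 < M) fun M => {m | 0 < m ∧ psi C g m M}) (n n' : ℤ) :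
    delta C g n n' ↔ BoundedlyShadows F (fun m => Δo g n m) fun m => Δo g n' m := by
  constructor
  · rintro ⟨H, -, h⟩
    refine ⟨H, fun U hU => ?_⟩
    obtain ⟨M', hM', hU⟩ := hF.mem_iff.mp hU
    obtain ⟨M, hM, h⟩ := h M' hM'
    refine hF.eventually_iff.mpr ⟨M, hM, fun m ⟨hm, hpsi⟩ => ?_⟩
    obtain ⟨m', hm', hpsi', hle⟩ := h m hm hpsi
    exact ⟨m', hU ⟨hm', hpsi'⟩, by beta_reduce; exact_mod_cast hle⟩
  · rintro ⟨H, h⟩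
    refine ⟨max 1 ⌈H⌉, by positivity, fun M' hM' => ?_⟩
    obtain ⟨M, hM, h⟩ := hF.eventually_iff.mp (h _ (hF.mem_of_mem hM'))
    refine ⟨M, hM, fun m hm hpsi => ?_⟩
    obtain ⟨m', ⟨hm', hpsi'⟩, hle⟩ := h ⟨hm, hpsi⟩
    refine ⟨m', hm', hpsi', ?_⟩
    rw [← Int.cast_le (R := ℝ)]
    push_cast
    exact hle.trans (le_max_of_le_right (Int.le_ceil H))

/-- The bilinear expression `n⌊αm⌉ + m⌊αn⌉`, which is the derivative `Δ∘` of `n ↦ n⌊αn⌉` as long as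
no carry occurs. -/
noncomputable def bracketPolar (α : ℝ) (n m : ℤ) : ℤ := n * round (α * m) + m * round (α * n)

theorem Δo_mulRound_of_abs_signedFract_lt {α : ℝ} {n m : ℤ}
    (h : |signedFract (α * n)| + |signedFract (α * m)| < 1 / 2) :
    Δo (mulRound α) n m = bracketPolar α n m := by
  simp only [Δo, mulRound]
  rw [Int.cast_add, mul_add, round_add_of_abs_signedFract_lt h, bracketPolar]
  ring

theorem delta_bracketQuad_iff {α β C : ℝ} (hα : Irrational α) (hβ : AvoidsHalfIntegers β)
    (hC : 4 < |β| * C) (n n' : ℤ) :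
    delta C (bracketQuad α β) n n' ↔
      BoundedlyShadows (bohrFilter α) (fun m => bracketPolar α n m)
        fun m => bracketPolar α n' m := by
  have hβ₀ : β ≠ 0 := by rintro rfl; norm_num at hC
  have hclose (n : ℤ) : ∀ᶠ m in bohrFilter α,
      |(Δo (bracketQuad α β) n m : ℝ) - β * bracketPolar α n m| ≤ 2 := by
    filter_upwards [(tendsto_abs_signedFract_bohrFilter α).eventually_lt_const
      (sub_pos.mpr (avoidsHalfIntegers_of_irrational hα n))] with m hm
    rw [← Δo_mulRound_of_abs_signedFract_lt (by linarith)]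
    exact abs_Δo_round_mul_sub_le β (mulRound α) n m
  rw [delta_iff_boundedlyShadows (hasBasis_bohrFilter_psi_bracketQuad hα hβ hC),
    boundedlyShadows_iff_of_abs_sub_mul_le hβ₀ (hclose n) (hclose n')]

theorem round_intCast_mul_of_abs_signedFract_lt {x : ℝ} {t : ℤ}
    (h : |(t : ℝ)| * |signedFract x| < 1 / 2) : round (t * x) = t * round x := by
  refine round_eq_of_abs_sub_lt ?_
  rwa [Int.cast_mul, ← mul_sub, abs_mul]

theorem tendsto_mul_bohrFilter (α : ℝ) {t : ℤ} (ht : 0 < t) :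
    Tendsto (fun m => t * m) (bohrFilter α) (bohrFilter α) := by
  refine (tendsto_comap_iff.mpr ?_).inf (tendsto_principal_principal.mpr fun m hm => ?_)
  · simpa [Function.comp_def, mul_smul] using
      (tendsto_comap (f := fun m : ℤ => m • (α : UnitAddCircle)) (x := 𝓝 0)).const_smul t
  · exact mul_pos ht hm

theorem boundedlyShadows_bracketPolar_mul {α : ℝ} {n t : ℤ} (ht : 0 < t)
    (hround : round (α * (t * n : ℤ)) = t * round (α * n)) :
    BoundedlyShadows (bohrFilter α) (fun m => bracketPolar α n m)
      fun m => bracketPolar α (t * n) m := by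
  have hsmall : ∀ᶠ m : ℤ in bohrFilter α, |(t : ℝ)| * |signedFract (α * m)| < 1 / 2 :=
    ((tendsto_abs_signedFract_bohrFilter α).const_mul _).eventually_lt_const (by norm_num)
  refine ⟨0, fun U hU => ?_⟩
  filter_upwards [tendsto_mul_bohrFilter α ht hU, hsmall] with m hmU hm
  refine ⟨t * m, hmU, ?_⟩
  have hm' : round (α * (t * m : ℤ)) = t * round (α * m) := by
    rw [Int.cast_mul, mul_left_comm, round_intCast_mul_of_abs_signedFract_lt hm]
  rw [bracketPolar, bracketPolar, hround, hm']
  push_cast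
  ring_nf
  simp

end Shadowing

section ClusterPoints

theorem mapClusterPt_zsmul_bohrFilter {α ρ : ℝ}
    (h : ∀ k₁ k₂ l : ℤ, k₁ * α + k₂ * ρ = l → k₁ = 0 ∧ k₂ = 0) (y : UnitAddCircle) :
    MapClusterPt y (bohrFilter α) fun m : ℤ => m • (ρ : UnitAddCircle) := by
  have hdense : ∀ (k : Fin 2 → ℤ) (l : ℤ), ∑ i, k i * ![α, ρ] i = l → k = 0 := by
    intro k l hkl
    rw [Fin.sum_univ_two] at hkl
    obtain ⟨h₀, h₁⟩ := h (k 0) (k 1) l hkl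
    exact funext (Fin.forall_fin_two.mpr ⟨h₀, h₁⟩)
  refine mapClusterPt_iff_frequently.mpr fun s hs => ?_
  refine (hasBasis_bohrFilter α).frequently_iff.mpr fun ε hε => ?_
  have hnhds : ∀ᶠ z : UnitAddTorus (Fin 2) in 𝓝 ![0, y], ‖z 0‖ < ε ∧ z 1 ∈ s :=
    ((continuous_apply 0).norm.tendsto _ |>.eventually_lt_const (by simpa using hε)).and
      ((continuous_apply 1).tendsto _ hs)
  obtain ⟨m, ⟨hm₀, hm₁⟩, hm⟩ :=
    (((mapClusterPt_nsmul_unitAddTorus hdense _).frequently hnhds).and_eventually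
      (eventually_gt_atTop 0)).exists
  refine ⟨m, ⟨by exact_mod_cast hm, ?_⟩, by simpa using hm₁⟩
  rw [← norm_coe_eq_abs_signedFract]
  simpa [mul_comm α] using hm₀

theorem mapClusterPt_zsmul_bohrFilter_of_nsmul_eq_zero {α : ℝ} (hα : Irrational α) {d : ℕ}
    (hd : d ≠ 0) {y : UnitAddCircle} (hy : d • y = 0) :
    MapClusterPt y (bohrFilter α) fun m : ℤ => m • y := by
  refine mapClusterPt_iff_frequently.mpr fun s hs => ?_
  refine (hasBasis_bohrFilter α).frequently_iff.mpr fun ε hε => ?_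
  obtain ⟨j, hj⟩ := ((mapClusterPt_nsmul_coe_of_irrational (hα.natCast_mul hd) (-α : ℝ)).frequently
    (Metric.ball_mem_nhds _ hε)).exists
  have hmul : ((j * d + 1 : ℕ) : ℤ) • y = y := by
    rw [natCast_zsmul, add_smul, mul_smul, hy, smul_zero, zero_add, one_smul]
  refine ⟨(j * d + 1 : ℕ), ⟨by positivity, ?_⟩, by rw [hmul]; exact mem_of_mem_nhds hs⟩
  rw [dist_eq_norm, ← AddCircle.coe_nsmul, ← AddCircle.coe_sub,
    norm_coe_eq_abs_signedFract] at hj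
  convert hj using 3
  push_cast [nsmul_eq_mul]
  ring

/-- The slope of `bracketPolar α n`, which is linear up to an error that vanishes along
`bohrFilter α`. -/
noncomputable def polarSlope (α : ℝ) (n : ℤ) : ℝ := α * n + round (α * n)

theorem bracketPolar_eq_polarSlope_sub (α : ℝ) (n m : ℤ) :
    (bracketPolar α n m : ℝ) = m * polarSlope α n - n * signedFract (α * m) := by
  push_cast [bracketPolar, polarSlope, signedFract]
  ring

theorem dist_zsmul_coe_polarSlope_div_le {α : ℝ} {n n' m m' : ℤ} (hn : polarSlope α n ≠ 0) :
    dist (m • ((polarSlope α n' / polarSlope α n : ℝ) : UnitAddCircle))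
      (((bracketPolar α n' m - bracketPolar α n m' : ℤ) / polarSlope α n : ℝ) : UnitAddCircle) ≤
      (|(n' : ℝ)| * |signedFract (α * m)| + |(n : ℝ)| * |signedFract (α * m')|)
        / |polarSlope α n| := by
  have hdiff : m * (polarSlope α n' / polarSlope α n) -
      (bracketPolar α n' m - bracketPolar α n m' : ℤ) / polarSlope α n =
      m' + (n' * signedFract (α * m) - n * signedFract (α * m')) / polarSlope α n := by
    rw [Int.cast_sub, bracketPolar_eq_polarSlope_sub, bracketPolar_eq_polarSlope_sub]
    field_simp
    ring
  have hint : ((m' : ℝ) : UnitAddCircle) = 0 := by simp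
  rw [dist_eq_norm, ← AddCircle.coe_zsmul, ← AddCircle.coe_sub, zsmul_eq_mul, hdiff,
    AddCircle.coe_add, hint, zero_add]
  refine (QuotientAddGroup.norm_mk_le_norm).trans ?_
  rw [Real.norm_eq_abs, abs_div, ← abs_mul, ← abs_mul]
  gcongr
  exact abs_sub _ _

theorem exists_eq_coe_div_polarSlope_of_mapClusterPt {α : ℝ} {n n' : ℤ}
    (h : BoundedlyShadows (bohrFilter α) (fun m => bracketPolar α n m)
      fun m => bracketPolar α n' m) (hn : polarSlope α n ≠ 0) {y : UnitAddCircle}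
    (hy : MapClusterPt y (bohrFilter α) fun m : ℤ =>
      m • ((polarSlope α n' / polarSlope α n : ℝ) : UnitAddCircle)) :
    ∃ k : ℤ, y = ((k / polarSlope α n : ℝ) : UnitAddCircle) := by
  obtain ⟨H, hH⟩ := h
  let S : Set UnitAddCircle :=
    (fun k : ℤ => ((k / polarSlope α n : ℝ) : UnitAddCircle)) '' Set.Icc ⌈-H⌉ ⌊H⌋
  suffices hyS : y ∈ closure S by
    rw [((Set.finite_Icc _ _).image _).isClosed.closure_eq] at hyS
    obtain ⟨k, -, hk⟩ := hyS
    exact ⟨k, hk.symm⟩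
  refine Metric.mem_closure_iff.mpr fun ε hε => ?_
  have hpos : 0 < |polarSlope α n| := abs_pos.mpr hn
  have hsmall (n₁ : ℤ) : ∀ᶠ m : ℤ in bohrFilter α,
      |(n₁ : ℝ)| * |signedFract (α * m)| < ε / 3 * |polarSlope α n| :=
    ((tendsto_abs_signedFract_bohrFilter α).const_mul _).eventually_lt_const
      (by rw [mul_zero]; positivity)
  obtain ⟨m, hmy, hm, m', hm', hmm'⟩ := ((hy.frequently
    (Metric.ball_mem_nhds y (div_pos hε three_pos))).and_eventually
      ((hsmall n').and (hH _ (hsmall n)))).exists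
  rw [Set.mem_ofPred_eq] at hm'
  refine ⟨_, Set.mem_image_of_mem _ (?_ : bracketPolar α n' m - bracketPolar α n m' ∈ _), ?_⟩
  · rw [Set.mem_Icc, Int.ceil_le, Int.le_floor]
    push_cast
    constructor <;> linarith [abs_le.mp hmm']
  · refine (dist_triangle_left _ _ _).trans_lt
      ((add_lt_add_of_lt_of_le hmy (dist_zsmul_coe_polarSlope_div_le hn)).trans_le ?_)
    have : (|(n' : ℝ)| * |signedFract (α * m)| + |(n : ℝ)| * |signedFract (α * m')|)
        / |polarSlope α n| ≤ 2 * (ε / 3) := by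
      rw [div_le_iff₀ hpos]; linarith
    linarith

end ClusterPoints

section Rigidity

theorem irrational_polarSlope {α : ℝ} (hα : Irrational α) {n : ℤ} (hn : n ≠ 0) :
    Irrational (polarSlope α n) :=
  (hα.mul_intCast hn).add_intCast _

theorem coe_intCast_div_eq_zero_of_nsmul_eq_zero {q : ℝ} (hq : Irrational q) {k : ℤ} {d : ℕ}
    (hd : d ≠ 0) (h : d • ((k / q : ℝ) : UnitAddCircle) = 0) :
    ((k / q : ℝ) : UnitAddCircle) = 0 := by
  rcases eq_or_ne k 0 with rfl | hk
  · simp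
  · rw [← AddCircle.coe_nsmul, AddCircle.coe_eq_zero_iff] at h
    obtain ⟨l, hl⟩ := h
    refine absurd hl.symm ?_
    simpa using ((hq.intCast_div hk).natCast_mul hd).ne_int l

theorem intCast_eq_zero_of_linearIndependent {α : ℝ}
    (hα : LinearIndependent ℚ ![(1 : ℝ), α, α ^ 2]) {a b c : ℤ}
    (h : a + b * α + c * α ^ 2 = 0) : a = 0 ∧ b = 0 ∧ c = 0 := by
  have hzero := Fintype.linearIndependent_iff.mp hα ![(a : ℚ), b, c]
    (by simpa [Fin.sum_univ_three, Rat.smul_def] using h)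
  simpa [Fin.forall_fin_succ] using hzero

theorem irrational_of_linearIndependent {α : ℝ}
    (hα : LinearIndependent ℚ ![(1 : ℝ), α, α ^ 2]) : Irrational α := by
  rintro ⟨r, rfl⟩
  have hrel : ((-r.num : ℤ) : ℝ) + (r.den : ℤ) * r + (0 : ℤ) * (r : ℝ) ^ 2 = 0 := by
    push_cast
    rw [zero_mul, add_zero, neg_add_eq_zero]
    exact_mod_cast r.den_mul_eq_num.symm
  exact r.den_ne_zero (by exact_mod_cast (intCast_eq_zero_of_linearIndependent hα hrel).2.1)

theorem eq_mul_of_polarSlope_eq {α : ℝ} (hα : Irrational α) {n n' t : ℤ}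
    (h : polarSlope α n' = t * polarSlope α n) :
    n' = t * n ∧ round (α * n') = t * round (α * n) := by
  have hrel : α * (n' - t * n : ℤ) = (t * round (α * n) - round (α * n') : ℤ) := by
    push_cast [polarSlope] at h ⊢
    linarith
  have hn : n' - t * n = 0 := by
    by_contra hne
    exact (hα.mul_intCast hne).ne_int _ hrel
  rw [hn, Int.cast_zero, mul_zero, eq_comm, Int.cast_eq_zero] at hrel
  exact ⟨by linarith, by linarith⟩

theorem exists_intCast_eq_of_torsion_clusterPt {α ρ : ℝ} (hα : Irrational α)
    (hρ : Irrational ρ → ∀ k₁ k₂ l : ℤ, k₁ * α + k₂ * ρ = l → k₁ = 0 ∧ k₂ = 0)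
    (htors : ∀ y : UnitAddCircle,
      MapClusterPt y (bohrFilter α) (fun m : ℤ => m • (ρ : UnitAddCircle)) →
      ∀ d : ℕ, d ≠ 0 → d • y = 0 → y = 0) : ∃ t : ℤ, ρ = t := by
  by_cases hirr : Irrational ρ
  · have hhalf := htors _ (mapClusterPt_zsmul_bohrFilter (hρ hirr) ((1 / 2 : ℝ) : UnitAddCircle))
      2 two_ne_zero (by rw [← AddCircle.coe_nsmul]; norm_num)
    obtain ⟨k, hk⟩ := (AddCircle.coe_eq_zero_iff _).mp hhalf
    have hodd : 2 * k = 1 := by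
      rw [zsmul_one] at hk
      rify
      linarith
    omega
  · obtain ⟨r, rfl⟩ := not_not.mp hirr
    have hr : r.den • ((r : ℝ) : UnitAddCircle) = 0 := by
      rw [← AddCircle.coe_nsmul, AddCircle.coe_eq_zero_iff]
      refine ⟨r.num, ?_⟩
      rw [zsmul_one, nsmul_eq_mul]
      exact_mod_cast r.den_mul_eq_num.symm
    have hzero := htors _ (mapClusterPt_zsmul_bohrFilter_of_nsmul_eq_zero hα r.den_ne_zero hr)
      r.den r.den_ne_zero hr
    obtain ⟨t, ht⟩ := (AddCircle.coe_eq_zero_iff _).mp hzero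
    exact ⟨t, by simpa using ht.symm⟩

theorem eq_zero_of_irrational_polarSlope_div {α : ℝ}
    (hα : LinearIndependent ℚ ![(1 : ℝ), α, α ^ 2]) {n n' : ℤ} (hn : n ≠ 0)
    (hρ : Irrational (polarSlope α n' / polarSlope α n)) {k₁ k₂ l : ℤ}
    (h : k₁ * α + k₂ * (polarSlope α n' / polarSlope α n) = l) : k₁ = 0 ∧ k₂ = 0 := by
  have hq := (irrational_polarSlope (irrational_of_linearIndependent hα) hn).ne_zero
  have hk₁ : k₁ = 0 := by
    field_simp at h
    have hrel := (intCast_eq_zero_of_linearIndependent hα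
      (a := k₂ * round (α * n') - l * round (α * n))
      (b := k₁ * round (α * n) + k₂ * n' - l * n) (c := k₁ * n)
      (by push_cast [polarSlope] at h ⊢; linarith)).2.2
    exact (mul_eq_zero.mp hrel).resolve_right hn
  refine ⟨hk₁, by_contra fun hk₂ => (hρ.intCast_mul hk₂).ne_int l ?_⟩
  simpa [hk₁] using h

theorem exists_eq_mul_of_boundedlyShadows {α : ℝ}
    (hα : LinearIndependent ℚ ![(1 : ℝ), α, α ^ 2]) {n n' : ℤ} (hn : n ≠ 0)
    (h : BoundedlyShadows (bohrFilter α) (fun m => bracketPolar α n m)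
      fun m => bracketPolar α n' m) :
    ∃ t : ℤ, n' = t * n ∧ round (α * n') = t * round (α * n) := by
  have hirr := irrational_of_linearIndependent hα
  have hq := irrational_polarSlope hirr hn
  obtain ⟨t, ht⟩ := exists_intCast_eq_of_torsion_clusterPt hirr
    (fun hρ _ _ _ => eq_zero_of_irrational_polarSlope_div hα hn hρ) fun y hy d hd hdy => by
      obtain ⟨k, rfl⟩ := exists_eq_coe_div_polarSlope_of_mapClusterPt h hq.ne_zero hy
      exact coe_intCast_div_eq_zero_of_nsmul_eq_zero hq hd hdy
  exact ⟨t, eq_mul_of_polarSlope_eq hirr ((div_eq_iff hq.ne_zero).mp ht)⟩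

end Rigidity

theorem characterization_general {α β C : ℝ} (hα : LinearIndependent ℚ ![(1 : ℝ), α, α ^ 2])
    (hβ : AvoidsHalfIntegers β) (hC : 4 < |β| * C) {n n' : ℤ} (hn : 0 < n) (hn' : 0 < n') :
    delta C (bracketQuad α β) n n' ↔
      ∃ t : ℤ, 0 < t ∧ n' = t * n ∧ round (α * n') = t * round (α * n) := by
  rw [delta_bracketQuad_iff (irrational_of_linearIndependent hα) hβ hC]
  constructor
  · intro h
    obtain ⟨t, rfl, hround⟩ := exists_eq_mul_of_boundedlyShadows hα hn.ne' h
    exact ⟨t, pos_of_mul_pos_left hn' hn.le, rfl, hround⟩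
  · rintro ⟨t, ht, rfl, hround⟩
    exact boundedlyShadows_bracketPolar_mul ht hround

theorem characterization (α β : ℝ) (hα : 0 < α) (hβ : 0 < β)
    (hind : LinearIndependent ℚ ![(1 : ℝ), α, α ^ 2])
    (hβ' : (∃ b : ℤ, β = (b : ℝ)) ∨ Irrational β)
    (g : ℤ → ℤ) (hg : ∀ n : ℤ, g n = round (β * n * round (α * n))) :
    ∃ C : ℝ, 1 ≤ C ∧ ∀ n n' : ℤ, 0 < n → 0 < n' →
      (delta C g n n' ↔
        ∃ t : ℤ, 0 < t ∧ n' = t * n ∧ round (α * n') = t * round (α * n)) := by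
  obtain rfl : g = bracketQuad α β := funext fun n => by
    rw [hg, bracketQuad, mulRound, Int.cast_mul, mul_assoc]
  have hC : 4 < |β| * (1 + 4 / β) := by
    rw [abs_of_pos hβ, mul_add, mul_one, mul_div_cancel₀ _ hβ.ne']; linarith
  exact ⟨1 + 4 / β, le_add_of_nonneg_right (by positivity), fun n n' hn hn' =>
    characterization_general hind (avoidsHalfIntegers_of_int_or_irrational hβ') hC hn hn'⟩

end Stmt11
end

section
/- The following two assertions hold: (a) for every ε > 0 there exists a positive integer N such that for every positive integer m, if μ(m, N) holds then ‖2·α·m‖ < ε and ‖α·m²‖ < ε; (b) for every positive integer N there exists ε > 0 such that for every positive integer m, if ‖2·α·m‖ < ε and ‖α·m²‖ < ε then μ(m, N) holds. -/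
/-!
STATEMENT 14: μ(m, N) characterises smallness of ‖2·α·m‖ and ‖α·m²‖.
-/

namespace Stmt14

/-- `μ(m, N)`: `g(n + m) = g(n)` for every positive integer `n ≤ N`. -/
def mu (g : ℤ → ℤ) (m N : ℤ) : Prop :=
  ∀ n : ℤ, 0 < n → n ≤ N → g (n + m) = g n

/-- `λ(m, N)`: there is a positive integer `n` with `μ(n, N)` and `μ(n + m, N)`. -/
def lam (g : ℤ → ℤ) (m N : ℤ) : Prop :=
  ∃ n : ℤ, 0 < n ∧ mu g n N ∧ mu g (n + m) N

/-- `κ(m, N)`. -/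
def kap (g : ℤ → ℤ) (m N : ℤ) : Prop :=
  ∃ M : ℤ, 0 < M ∧ ∀ h : ℤ, 0 < h → g h = 1 → lam g h M →
    ∀ L : ℤ, 0 < L → ∃ n : ℤ, 0 < n ∧ lam g n L ∧ mu g n N ∧ g (h + m + n) = 1

/-- `ν(m, m̃, N)`. -/
def nu (g : ℤ → ℤ) (m mt N : ℤ) : Prop :=
  ∃ L : ℤ, 0 < L ∧ ∀ n : ℤ, 0 < n → lam g n L → kap g (m + n) L → kap g (mt + n) N

/-- `δ(m, m̃)`. -/
def del (g : ℤ → ℤ) (m mt : ℤ) : Prop :=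
  ∀ N : ℤ, 0 < N → ∃ L : ℤ, 0 < L ∧ ∀ n : ℤ, 0 < n →
    nu g (m + n) m L → kap g n L → nu g (mt + n) mt N

/-!
Work on the circle with `a = α mod 1`. Since `(n + m)² a = n² a + n (2ma) + m² a`, the
relation `μ(m, N)` is a condition on the point `w = (2ma, m² a)` of the torus only, and (b)
is continuity at `w = 0`, because `‖n² a‖` never equals `ρ`. For (a), the conditions on `w`
for growing `N` define a decreasing sequence of closed sets, so by compactness it is enough
that `0` is their only common point. If `(x, y)` is one, then `n² a + n x + y` lies in the
closed arc of radius `ρ` whenever `n² a` lies in the open one. The pairs `(n² a, n x)`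
accumulate at `(t, j x)` for every `t` and `j`, so the rotation by `j x + y` maps the open
arc into the closed one and is therefore trivial; `j = 0, 1` give `y = x = 0`.

To reach `(t, 0)`, take `n = l + i k` with `k` a very good and `l` a moderate return time: as `i`
varies, `n² a ≈ l² a + i (2lk a)` goes around the circle in small steps.
-/

open Filter Topology

attribute [local instance] Ultrafilter.add

section Recurrence

variable {M G : Type*}

-- Evaluating the limit `L` of `f` along `p = p + p` gives `L = L + L`.
theorem tendsto_zero_of_idempotent [Add M] {p : Ultrafilter M} (hp : p + p = p)
    [AddLeftCancelMonoid G] [TopologicalSpace G] [ContinuousAdd G] [CompactSpace G] [T2Space G]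
    {f : M → G} {B : M → M → G} (hf : ∀ m n, f (m + n) = f m + f n + B m n)
    (hB : ∀ m, Tendsto (B m) p (𝓝 0)) : Tendsto f p (𝓝 0) := by
  obtain ⟨L, -, hL⟩ := isCompact_univ.ultrafilter_le_nhds' (p.map f) univ_mem
  replace hL : Tendsto f p (𝓝 L) := hL
  have hLL : Tendsto f p (𝓝 (L + L)) := by
    rw [(nhds_basis_opens (L + L)).tendsto_right_iff]
    rintro U ⟨hLU, hU⟩
    rw [← hp, Ultrafilter.eventually_add]
    filter_upwards [(hL.add_const L).eventually_mem (hU.mem_nhds hLU)] with m hm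
    have hlim : Tendsto (fun n ↦ f (m + n)) p (𝓝 (f m + L)) := by
      simpa only [hf, add_zero] using (hL.const_add (f m)).add (hB m)
    exact hlim.eventually_mem (hU.mem_nhds hm)
  rwa [add_eq_left.mp (tendsto_nhds_unique hLL hL)] at hL

theorem exists_nsmul_and_sq_nsmul_norm_lt [NormedAddCommGroup G] [CompactSpace G] (a x : G)
    {ε : ℝ} (hε : 0 < ε) :
    ∃ k : ℕ, 0 < k ∧ ‖(2 * k) • a‖ < ε ∧ ‖k • x‖ < ε ∧ ‖k ^ 2 • a‖ < ε := by
  obtain ⟨p, hp⟩ : ∃ p : Ultrafilter ℕ+, p + p = p :=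
    letI := Ultrafilter.addSemigroup (M := ℕ+)
    exists_idempotent_of_compact_t2_of_continuous_add_left Ultrafilter.continuous_add_left
  have linear (y : G) : Tendsto (fun n : ℕ+ ↦ (n : ℕ) • y) p (𝓝 0) :=
    tendsto_zero_of_idempotent hp (B := fun _ _ ↦ 0)
      (fun m n ↦ by rw [PNat.add_coe, add_nsmul, add_zero]) fun _ ↦ tendsto_const_nhds
  have quadratic : Tendsto (fun n : ℕ+ ↦ (n : ℕ) ^ 2 • a) p (𝓝 0) :=
    tendsto_zero_of_idempotent hp (B := fun m n ↦ (n : ℕ) • (2 * m : ℕ) • a)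
      (fun m n ↦ by rw [PNat.add_coe]; module) fun m ↦ linear _
  have small {f : ℕ+ → G} (hf : Tendsto f p (𝓝 0)) : ∀ᶠ n in p, ‖f n‖ < ε :=
    hf.norm.eventually_lt_const (by rwa [norm_zero])
  obtain ⟨k, hka, hkx, hkq⟩ :=
    ((small (linear (2 • a))).and ((small (linear x)).and (small quadratic))).exists
  exact ⟨k, k.pos, by rwa [mul_comm, mul_nsmul'], hkx, hkq⟩

theorem exists_bounded_gaps_nsmul_norm_lt [SeminormedAddCommGroup G] [CompactSpace G] (g : G)
    {ε : ℝ} (hε : 0 < ε) : ∃ R : ℕ, ∀ N : ℕ, ∃ l, N ≤ l ∧ l ≤ N + R ∧ ‖l • g‖ < ε := by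
  obtain ⟨t, ht, htfin, hcover⟩ := Metric.finite_approx_of_totallyBounded
    (isCompact_univ.totallyBounded.subset (Set.subset_univ (Set.range fun n : ℕ ↦ n • g))) ε hε
  obtain ⟨F, -, hF, rfl⟩ := htfin.exists_subset_finite_image_eq (Set.image_univ ▸ ht)
  obtain ⟨R, hR⟩ := hF.bddAbove
  refine ⟨R, fun N ↦ ?_⟩
  obtain ⟨_, ⟨m, hm, rfl⟩, hNm⟩ := Set.mem_iUnion₂.mp (hcover (Set.mem_range_self (N + R)))
  have hmR : m ≤ R := hR hm
  refine ⟨N + R - m, by lia, by lia, ?_⟩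
  rwa [mem_ball_iff_norm, ← Nat.sub_add_cancel (show m ≤ N + R by lia), add_nsmul,
    add_sub_cancel_right] at hNm

end Recurrence

section Circle

theorem exists_coe_eq_and_abs_eq_norm {p : ℝ} (t : AddCircle p) :
    ∃ s : ℝ, (s : AddCircle p) = t ∧ |s| = ‖t‖ := by
  obtain ⟨r, rfl⟩ := QuotientAddGroup.mk_surjective t
  refine ⟨r - round (p⁻¹ * r) * p, ?_, (AddCircle.norm_eq p).symm⟩
  rw [← zsmul_eq_mul, AddCircle.coe_sub, AddCircle.coe_zsmul, AddCircle.coe_period, smul_zero,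
    sub_zero]

variable {p : ℝ} [Fact (0 < p)]

theorem exists_nsmul_coe_sub_norm_le {s : ℝ} (hs : s ≠ 0) (t : AddCircle p) :
    ∃ i : ℕ, i * |s| ≤ p ∧ ‖i • (s : AddCircle p) - t‖ ≤ |s| := by
  wlog hpos : 0 < s generalizing s t
  · obtain ⟨i, hi, hit⟩ := this (neg_ne_zero.mpr hs) (-t)
      (neg_pos.mpr (lt_of_le_of_ne (not_lt.mp hpos) hs))
    rw [abs_neg] at hi hit
    refine ⟨i, hi, ?_⟩
    rwa [AddCircle.coe_neg, smul_neg, ← neg_sub', norm_neg] at hit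
  obtain ⟨b, ⟨hb, hbp⟩, rfl⟩ := AddCircle.eq_coe_Ico t
  have hle : ⌊b / s⌋₊ * s ≤ b := (le_div_iff₀ hpos).mp (Nat.floor_le (by positivity))
  have hlt : b < (⌊b / s⌋₊ + 1) * s := (div_lt_iff₀ hpos).mp (Nat.lt_floor_add_one _)
  rw [abs_of_pos hpos]
  refine ⟨⌊b / s⌋₊, hle.trans hbp.le, ?_⟩
  rw [← AddCircle.coe_nsmul, ← AddCircle.coe_sub, nsmul_eq_mul]
  refine QuotientAddGroup.norm_mk_le_norm.trans (abs_le.mpr ⟨?_, ?_⟩) <;> linarith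

theorem eq_zero_of_norm_add_le {ρ : ℝ} (hρ0 : 0 < ρ) (hρ : ρ < p / 2) {z : AddCircle p}
    (h : ∀ t : AddCircle p, ‖t‖ < ρ → ‖t + z‖ ≤ ρ) : z = 0 := by
  obtain ⟨r, rfl, hr⟩ := exists_coe_eq_and_abs_eq_norm z
  wlog hr0 : 0 ≤ r generalizing r
  · rw [← neg_eq_zero, ← AddCircle.coe_neg]
    refine this (-r) (fun t ht ↦ ?_) ?_ (by linarith)
    · rw [AddCircle.coe_neg, ← norm_neg, neg_add, neg_neg]
      exact h (-t) (by rwa [norm_neg])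
    · rw [abs_neg, AddCircle.coe_neg, norm_neg, hr]
  suffices r = 0 by rw [this, AddCircle.coe_zero]
  by_contra hne
  have hrρ : r ≤ ρ := by
    simpa only [zero_add, ← hr, abs_of_nonneg hr0] using h 0 (by rwa [norm_zero])
  -- The point `ρ - r + σ` of the open arc is rotated to `ρ + σ`, just outside the closed one.
  obtain ⟨σ, hσ0, hσ⟩ := exists_between (lt_min (lt_of_le_of_ne' hr0 hne) (sub_pos.mpr hρ))
  obtain ⟨hσr, hσp⟩ := lt_min_iff.mp hσ
  have hsrc : ‖((ρ - r + σ : ℝ) : AddCircle p)‖ < ρ :=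
    QuotientAddGroup.norm_mk_le_norm.trans_lt (abs_lt.mpr ⟨by linarith, by linarith⟩)
  have himg : ‖((ρ + σ : ℝ) : AddCircle p)‖ = ρ + σ := by
    have hp : 0 < p := Fact.out
    rw [(AddCircle.norm_coe_eq_abs_iff p hp.ne').mpr] <;> rw [abs_of_pos (by linarith)]
    rw [abs_of_pos hp]
    linarith
  have hle := h _ hsrc
  rw [← AddCircle.coe_add, show ρ - r + σ + r = ρ + σ by ring, himg] at hle
  linarith

end Circle

section QuadraticOrbit

variable {a : UnitAddCircle}

-- `l` is chosen after `k` in a prescribed range; bounded gaps leave a return time there.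
theorem exists_slow_rotation (ha : ¬IsOfFinAddOrder a) (x : UnitAddCircle) {η δ : ℝ} (hη : 0 < η)
    (hδ : 0 < δ) :
    ∃ (k l : ℕ) (s : ℝ), 0 < l ∧ (s : UnitAddCircle) = (2 * l * k) • a ∧ η ≤ |s| ∧ |s| ≤ 2 * η ∧
      (‖(2 * k) • a‖ < δ ∧ ‖k • x‖ < δ ∧ ‖k ^ 2 • a‖ < δ) ∧
      ‖(2 * l) • a‖ < η ∧ ‖l • x‖ < η := by
  obtain ⟨R, hR⟩ :=
    exists_bounded_gaps_nsmul_norm_lt ((2 • a, x) : UnitAddCircle × UnitAddCircle) hη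
  obtain ⟨k, hk0, hka, hkx, hkq⟩ := exists_nsmul_and_sq_nsmul_norm_lt a x
    (lt_min hδ (show 0 < η / (R + 1) by positivity))
  obtain ⟨hkaδ, hkaR⟩ := lt_min_iff.mp hka
  obtain ⟨b, hb, hbnorm⟩ := exists_coe_eq_and_abs_eq_norm ((2 * k) • a)
  have hb0 : 0 < |b| := by
    rw [hbnorm, norm_pos_iff]
    exact fun h0 ↦ ha (isOfFinAddOrder_iff_nsmul_eq_zero.mpr ⟨2 * k, by lia, h0⟩)
  obtain ⟨l, hNl, hlN, hl⟩ := hR ⌈η / |b|⌉₊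
  have hlower : η ≤ l * |b| := (div_le_iff₀ hb0).mp ((Nat.le_ceil _).trans (mod_cast hNl))
  have hupper : l * |b| ≤ 2 * η := by
    have hceil : ⌈η / |b|⌉₊ * |b| ≤ η + |b| := by
      have := mul_le_mul_of_nonneg_right (Nat.ceil_lt_add_one (a := η / |b|) (by positivity)).le
        hb0.le
      rwa [add_mul, div_mul_cancel₀ _ hb0.ne', one_mul] at this
    have hgap : |b| * (R + 1) < η := by rwa [hbnorm, ← lt_div_iff₀ (by positivity)]
    calc l * |b| ≤ (⌈η / |b|⌉₊ + R) * |b| := by gcongr; exact_mod_cast hlN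
      _ ≤ 2 * η := by linarith
  have habs : |l * b| = l * |b| := by rw [abs_mul, Nat.abs_cast]
  rw [Prod.smul_mk, Prod.norm_mk, max_lt_iff, ← mul_nsmul'] at hl
  refine ⟨k, l, l * b, ?_, ?_, habs ▸ hlower, habs ▸ hupper,
    ⟨hkaδ, hkx.trans_le (min_le_left _ _), hkq.trans_le (min_le_left _ _)⟩,
    by rw [mul_comm]; exact hl.1, hl.2⟩
  · exact (Nat.ceil_pos.mpr (by positivity)).trans_le hNl
  · rw [← nsmul_eq_mul, AddCircle.coe_nsmul, hb]
    module

theorem exists_sq_nsmul_sub_norm_lt (ha : ¬IsOfFinAddOrder a) (x t : UnitAddCircle) {ε : ℝ}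
    (hε : 0 < ε) :
    ∃ n : ℕ, 0 < n ∧ ‖(2 * n) • a‖ < ε ∧ ‖n • x‖ < ε ∧ ‖n ^ 2 • a - t‖ < ε := by
  obtain ⟨η, hη, hηε⟩ : ∃ η : ℝ, 0 < η ∧ 3 * η < ε := ⟨ε / 4, by linarith, by linarith⟩
  obtain ⟨k, l, s, hl0, hs, hηs, hsη, ⟨hka, hkx, hkq⟩, hla, hlx⟩ :=
    exists_slow_rotation ha x hη (pow_pos hη 3)
  obtain ⟨i, hi, hit⟩ :=
    exists_nsmul_coe_sub_norm_le (abs_pos.mp (hη.trans_le hηs)) (t - l ^ 2 • a)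
  have hiη : i * η ≤ 1 := (mul_le_mul_of_nonneg_left hηs i.cast_nonneg).trans hi
  have small {j : ℕ} {g : UnitAddCircle} (hj : j ≤ i ^ 2) (hg : ‖g‖ < η ^ 3) : ‖j • g‖ ≤ η :=
    calc ‖j • g‖ ≤ j * ‖g‖ := norm_nsmul_le
      _ ≤ (i ^ 2 : ℕ) * η ^ 3 := by gcongr
      _ = (i * η) ^ 2 * η := by push_cast; ring
      _ ≤ η := mul_le_of_le_one_left hη.le (pow_le_one₀ (by positivity) hiη)
  have hii : i ≤ i ^ 2 := Nat.le_self_pow two_ne_zero i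
  refine ⟨l + i * k, by lia, ?_, ?_, ?_⟩
  · calc ‖(2 * (l + i * k)) • a‖ = ‖(2 * l) • a + i • (2 * k) • a‖ := by congr 1; module
      _ ≤ ‖(2 * l) • a‖ + ‖i • (2 * k) • a‖ := norm_add_le _ _
      _ < ε := by linarith [small hii hka]
  · calc ‖(l + i * k) • x‖ = ‖l • x + i • k • x‖ := by congr 1; module
      _ ≤ ‖l • x‖ + ‖i • k • x‖ := norm_add_le _ _
      _ < ε := by linarith [small hii hkx]
  · calc ‖(l + i * k) ^ 2 • a - t‖
        = ‖i • (s : UnitAddCircle) - (t - l ^ 2 • a) + i ^ 2 • k ^ 2 • a‖ := by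
          rw [hs]; congr 1; module
      _ ≤ ‖i • (s : UnitAddCircle) - (t - l ^ 2 • a)‖ + ‖i ^ 2 • k ^ 2 • a‖ := norm_add_le _ _
      _ < ε := by linarith [small le_rfl hkq]

theorem mk_nsmul_mem_closure_quadratic_orbit (ha : ¬IsOfFinAddOrder a) (x t : UnitAddCircle)
    (j : ℕ) : (t, j • x) ∈ closure ((fun n : ℤ ↦ (n ^ 2 • a, n • x)) '' Set.Ioi 0) := by
  rw [Metric.mem_closure_iff]
  intro ε hε
  obtain ⟨n, hn, hna, hnx, hnt⟩ := exists_sq_nsmul_sub_norm_lt ha x (t - j ^ 2 • a)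
    (show 0 < ε / (j + 1) by positivity)
  have hεj : ε / (j + 1) + j * (ε / (j + 1)) = ε := by field_simp; ring
  refine ⟨_, ⟨(n + j : ℕ), Set.mem_Ioi.mpr (by lia), rfl⟩, ?_⟩
  rw [dist_comm, Prod.dist_eq, max_lt_iff, dist_eq_norm, dist_eq_norm]
  constructor
  · calc ‖((n + j : ℕ) : ℤ) ^ 2 • a - t‖
        = ‖(n ^ 2 • a - (t - j ^ 2 • a)) + j • (2 * n) • a‖ := by congr 1; push_cast; module
      _ ≤ ‖n ^ 2 • a - (t - j ^ 2 • a)‖ + j * ‖(2 * n) • a‖ :=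
        (norm_add_le _ _).trans (by gcongr; exact norm_nsmul_le)
      _ < ε / (j + 1) + j * (ε / (j + 1)) := add_lt_add_of_lt_of_le hnt (by gcongr)
      _ = ε := hεj
  · calc ‖((n + j : ℕ) : ℤ) • x - j • x‖ = ‖n • x‖ := by congr 1; push_cast; module
      _ < ε / (j + 1) := hnx
      _ ≤ ε := div_le_self hε.le (by simp)

end QuadraticOrbit

section QuadPhase

/-- The value at `n` of the quadratic polynomial with leading coefficient `a`, linear coefficient
`w.1` and constant term `w.2`, as a point of the circle. -/
def quadPhase (a : UnitAddCircle) (w : UnitAddCircle × UnitAddCircle) (n : ℤ) : UnitAddCircle :=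
  n ^ 2 • a + n • w.1 + w.2

/-- The linear and constant coefficients of `n ↦ (n + m)² a`. -/
def shiftCoeff (a : UnitAddCircle) (m : ℤ) : UnitAddCircle × UnitAddCircle :=
  ((2 * m) • a, m ^ 2 • a)

/-- The coefficients `w` for which `quadPhase a w n` lies in the closed arc of radius `ρ` whenever
`n ^ 2 • a` lies in the open one, for all `0 < n ≤ N`. Mixing the open and the closed arc makes this
a closed condition on `w`. -/
def arcPreserving (a : UnitAddCircle) (ρ : ℝ) (N : ℤ) : Set (UnitAddCircle × UnitAddCircle) :=
  {w | ∀ n : ℤ, 0 < n → n ≤ N → ‖n ^ 2 • a‖ < ρ → ‖quadPhase a w n‖ ≤ ρ}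

variable {a : UnitAddCircle} {ρ : ℝ}

theorem quadPhase_zero (n : ℤ) : quadPhase a 0 n = n ^ 2 • a := by
  simp only [quadPhase, Prod.fst_zero, Prod.snd_zero, smul_zero, add_zero]

theorem quadPhase_shiftCoeff (m n : ℤ) : quadPhase a (shiftCoeff a m) n = (n + m) ^ 2 • a := by
  simp only [quadPhase, shiftCoeff]
  module

theorem continuous_quadPhase (n : ℤ) : Continuous fun w ↦ quadPhase a w n := by
  unfold quadPhase
  fun_prop

theorem isClosed_arcPreserving (N : ℤ) : IsClosed (arcPreserving a ρ N) := by
  simp only [arcPreserving, Set.ofPred_forall]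
  exact isClosed_iInter fun n ↦ isClosed_iInter fun _ ↦ isClosed_iInter fun _ ↦
    isClosed_iInter fun _ ↦ isClosed_le (continuous_quadPhase n).norm continuous_const

theorem antitone_arcPreserving : Antitone (arcPreserving a ρ) :=
  fun _ _ hMN _ hw n hn hnM ↦ hw n hn (hnM.trans hMN)

theorem iInter_arcPreserving_subset (ha : ¬IsOfFinAddOrder a) (hρ0 : 0 < ρ) (hρ : ρ < 1 / 2) :
    ⋂ N, arcPreserving a ρ N ⊆ {0} := by
  rintro ⟨x, y⟩ hxy
  let S : Set (UnitAddCircle × UnitAddCircle) := {u | ‖u.1‖ < ρ → ‖u.1 + u.2 + y‖ ≤ ρ}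
  have hS : IsClosed S := isClosed_imp (isOpen_lt (by fun_prop) continuous_const)
    (isClosed_le (by fun_prop) continuous_const)
  have horbit : (fun n : ℤ ↦ (n ^ 2 • a, n • x)) '' Set.Ioi 0 ⊆ S := by
    rintro _ ⟨n, hn, rfl⟩
    exact Set.mem_iInter.mp hxy n n hn le_rfl
  have hrot (j : ℕ) : j • x + y = 0 := eq_zero_of_norm_add_le hρ0 hρ fun t ht ↦ by
    have hmem : (t, j • x) ∈ S :=
      closure_minimal horbit hS (mk_nsmul_mem_closure_quadratic_orbit ha x t j)
    rw [← add_assoc]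
    exact hmem ht
  have hy : y = 0 := by simpa using hrot 0
  have hx : x = 0 := by simpa [hy] using hrot 1
  rw [hx, hy, Set.mem_singleton_iff, Prod.mk_zero_zero]

theorem exists_arcPreserving_subset (ha : ¬IsOfFinAddOrder a) (hρ0 : 0 < ρ) (hρ : ρ < 1 / 2)
    {U : Set (UnitAddCircle × UnitAddCircle)} (hU : U ∈ 𝓝 0) :
    ∃ N : ℤ, 0 < N ∧ arcPreserving a ρ N ⊆ U := by
  obtain ⟨N, hN⟩ := exists_subset_nhds_of_compactSpace
    (antitone_arcPreserving (a := a) (ρ := ρ)).directed_ge isClosed_arcPreserving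
    fun w hw ↦ (iInter_arcPreserving_subset ha hρ0 hρ hw : w = 0) ▸ hU
  exact ⟨max N 1, by lia, (antitone_arcPreserving (le_max_left N 1)).trans hN⟩

theorem eventually_quadPhase_norm_lt_iff (N : ℤ) (hne : ∀ n : ℤ, 0 < n → ‖n ^ 2 • a‖ ≠ ρ) :
    ∀ᶠ w in 𝓝 0, ∀ n : ℤ, 0 < n → n ≤ N → (‖quadPhase a w n‖ < ρ ↔ ‖n ^ 2 • a‖ < ρ) := by
  suffices ∀ᶠ w in 𝓝 0, ∀ n ∈ Set.Ioc 0 N, (‖quadPhase a w n‖ < ρ ↔ ‖n ^ 2 • a‖ < ρ) from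
    this.mono fun w hw n hn hnN ↦ hw n ⟨hn, hnN⟩
  refine (Set.finite_Ioc 0 N).eventually_all.mpr fun n hn ↦ ?_
  have hlim : Tendsto (fun w ↦ ‖quadPhase a w n‖) (𝓝 0) (𝓝 ‖n ^ 2 • a‖) := by
    simpa only [quadPhase_zero] using (continuous_quadPhase (a := a) n).norm.tendsto 0
  obtain hlt | hgt := (hne n hn.1).lt_or_gt
  · exact (hlim.eventually_lt_const hlt).mono fun _ h ↦ iff_of_true h hlt
  · exact (hlim.eventually_const_lt hgt).mono fun _ h ↦ iff_of_false h.not_gt hgt.not_gt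

end QuadPhase

section Reduction

variable {α ρ : ℝ} {g : ℤ → ℤ}

theorem abs_sub_round_mul_intCast (α : ℝ) (k : ℤ) :
    |α * k - round (α * k)| = ‖k • (α : UnitAddCircle)‖ := by
  rw [← UnitAddCircle.norm_eq, mul_comm, ← zsmul_eq_mul, AddCircle.coe_zsmul]

theorem mu_iff {a : UnitAddCircle} (hg : ∀ n, g n = if ‖n ^ 2 • a‖ < ρ then 1 else 0) (m N : ℤ) :
    mu g m N ↔ ∀ n : ℤ, 0 < n → n ≤ N →
      (‖quadPhase a (shiftCoeff a m) n‖ < ρ ↔ ‖n ^ 2 • a‖ < ρ) := by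
  refine forall₃_congr fun n _ _ ↦ ?_
  rw [hg, hg, quadPhase_shiftCoeff]
  split_ifs with h k k <;> simp [h, k]

theorem norm_shiftCoeff_lt_iff {ε : ℝ} (m : ℤ) :
    ‖shiftCoeff α m‖ < ε ↔
      |2 * α * m - round (2 * α * m)| < ε ∧ |α * m ^ 2 - round (α * m ^ 2)| < ε := by
  have h1 := abs_sub_round_mul_intCast α (2 * m)
  have h2 := abs_sub_round_mul_intCast α (m ^ 2)
  push_cast at h1 h2
  rw [shiftCoeff, Prod.norm_mk, max_lt_iff, ← h1, ← h2, mul_left_comm, mul_assoc]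

theorem irrational_of_not_rat_combination (hα : ¬∃ q r : ℚ, α = (q : ℝ) + (r : ℝ) * ρ) :
    Irrational α := by
  rintro ⟨q, rfl⟩
  exact hα ⟨q, 0, by simp⟩

theorem abs_sub_round_ne_of_not_rat_combination
    (hα : ¬∃ q r : ℚ, α = (q : ℝ) + (r : ℝ) * ρ) (n : ℤ) (hn : 0 < n) :
    |α * n ^ 2 - round (α * n ^ 2)| ≠ ρ := by
  intro h
  have hn' : (n : ℝ) ≠ 0 := by exact_mod_cast hn.ne'
  obtain h | h := eq_or_eq_neg_of_abs_eq h
  · refine hα ⟨round (α * n ^ 2) / n ^ 2, 1 / n ^ 2, ?_⟩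
    push_cast
    field_simp
    linarith
  · refine hα ⟨round (α * n ^ 2) / n ^ 2, -1 / n ^ 2, ?_⟩
    push_cast
    field_simp
    linarith

theorem statement_general (hρ0 : 0 < ρ) (hρ : ρ < 1 / 2) (hα : Irrational α)
    (hne : ∀ n : ℤ, 0 < n → |α * n ^ 2 - round (α * n ^ 2)| ≠ ρ)
    (hg : ∀ n : ℤ, g n = if |α * n ^ 2 - round (α * n ^ 2)| < ρ then 1 else 0) :
    (∀ ε : ℝ, 0 < ε → ∃ N : ℤ, 0 < N ∧ ∀ m : ℤ, mu g m N →
        |2 * α * m - round (2 * α * m)| < ε ∧ |α * m ^ 2 - round (α * m ^ 2)| < ε) ∧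
      (∀ N : ℤ, ∃ ε : ℝ, 0 < ε ∧ ∀ m : ℤ,
        |2 * α * m - round (2 * α * m)| < ε → |α * m ^ 2 - round (α * m ^ 2)| < ε →
          mu g m N) := by
  have ha : ¬IsOfFinAddOrder (α : UnitAddCircle) :=
    AddCircle.not_isOfFinAddOrder_iff_forall_rat_ne_div.mpr fun q ↦ by
      simpa only [div_one] using (hα.ne_rat q).symm
  have hnorm (n : ℤ) := abs_sub_round_mul_intCast α (n ^ 2)
  simp only [Int.cast_pow] at hnorm
  simp only [hnorm] at hne hg
  refine ⟨fun ε hε ↦ ?_, fun N ↦ ?_⟩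
  · obtain ⟨N, hN, hsub⟩ := exists_arcPreserving_subset ha hρ0 hρ (Metric.ball_mem_nhds 0 hε)
    refine ⟨N, hN, fun m hm ↦ (norm_shiftCoeff_lt_iff m).mp (mem_ball_zero_iff.mp (hsub ?_))⟩
    exact fun n hn hnN hnρ ↦ (((mu_iff hg m N).mp hm n hn hnN).mpr hnρ).le
  · obtain ⟨ε, hε, hball⟩ :=
      Metric.eventually_nhds_iff_ball.mp (eventually_quadPhase_norm_lt_iff N hne)
    exact ⟨ε, hε, fun m hm₁ hm₂ ↦ (mu_iff hg m N).mpr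
      (hball _ (mem_ball_zero_iff.mpr ((norm_shiftCoeff_lt_iff m).mpr ⟨hm₁, hm₂⟩)))⟩

end Reduction

open scoped Classical in
theorem statement (α ρ : ℝ) (hρ0 : 0 < ρ) (hρ4 : ρ < 1 / 4)
    (hα : ¬ ∃ q r : ℚ, α = (q : ℝ) + (r : ℝ) * ρ)
    (g : ℤ → ℤ)
    (hg : ∀ n : ℤ, g n = if |α * n ^ 2 - round (α * n ^ 2)| < ρ then 1 else 0) :
    (∀ ε : ℝ, 0 < ε → ∃ N : ℤ, 0 < N ∧ ∀ m : ℤ, 0 < m → mu g m N →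
        |2 * α * m - round (2 * α * m)| < ε ∧ |α * m ^ 2 - round (α * m ^ 2)| < ε) ∧
      (∀ N : ℤ, 0 < N → ∃ ε : ℝ, 0 < ε ∧ ∀ m : ℤ, 0 < m →
        |2 * α * m - round (2 * α * m)| < ε → |α * m ^ 2 - round (α * m ^ 2)| < ε →
          mu g m N) := by
  obtain ⟨ha, hb⟩ := statement_general hρ0 (by linarith) (irrational_of_not_rat_combination hα)
    (abs_sub_round_ne_of_not_rat_combination hα) hg
  exact ⟨fun ε hε ↦ (ha ε hε).imp fun _ h ↦ ⟨h.1, fun m _ ↦ h.2 m⟩,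
    fun N _ ↦ (hb N).imp fun _ h ↦ ⟨h.1, fun m _ ↦ h.2 m⟩⟩

end Stmt14
end

section
/- The following two assertions hold: (a) for every ε > 0 there exists a positive integer N such that for every positive integer m, if λ(m, N) holds then ‖2·α·m‖ < ε; (b) for every positive integer N there exists ε > 0 such that for every positive integer m, if ‖2·α·m‖ < ε then λ(m, N) holds. -/
/-!
STATEMENT 15: λ(m, N) characterises smallness of ‖2·α·m‖.
-/

namespace Stmt15

/-- `μ(m, N)`: `g(n + m) = g(n)` for every positive integer `n ≤ N`. -/
def mu (g : ℤ → ℤ) (m N : ℤ) : Prop :=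
  ∀ n : ℤ, 0 < n → n ≤ N → g (n + m) = g n

/-- `λ(m, N)`: there is a positive integer `n` with `μ(n, N)` and `μ(n + m, N)`. -/
def lam (g : ℤ → ℤ) (m N : ℤ) : Prop :=
  ∃ n : ℤ, 0 < n ∧ mu g n N ∧ mu g (n + m) N

/-- `κ(m, N)`. -/
def kap (g : ℤ → ℤ) (m N : ℤ) : Prop :=
  ∃ M : ℤ, 0 < M ∧ ∀ h : ℤ, 0 < h → g h = 1 → lam g h M →
    ∀ L : ℤ, 0 < L → ∃ n : ℤ, 0 < n ∧ lam g n L ∧ mu g n N ∧ g (h + m + n) = 1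

/-- `ν(m, m̃, N)`. -/
def nu (g : ℤ → ℤ) (m mt N : ℤ) : Prop :=
  ∃ L : ℤ, 0 < L ∧ ∀ n : ℤ, 0 < n → lam g n L → kap g (m + n) L → kap g (mt + n) N

/-- `δ(m, m̃)`. -/
def del (g : ℤ → ℤ) (m mt : ℤ) : Prop :=
  ∀ N : ℤ, 0 < N → ∃ L : ℤ, 0 < L ∧ ∀ n : ℤ, 0 < n →
    nu g (m + n) m L → kap g n L → nu g (mt + n) mt N

open Filter Topology

/-!
Write `a` for the class of `α` in the circle and let `k → +∞` along the filter of integers for which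
`k • b → 0` for all `b` in the circle. The cluster points of `k² a` along it form a closed subgroup:
in `(k + l)² a = k² a + 2 k l a + l² a` the cross term vanishes in the iterated limit, so they are
closed under addition, and a closed subsemigroup of a compact group is a group. In the joint limit
the cross term takes every value, so this subgroup is the whole circle. Shifting `k`, the pairs
`(k b, k² a)` cluster at every `(t, x)` with `t` in the closure of `ℤ b`.

If `n` is an almost-period of `g` on long intervals but `2 n a` stays away from `0`, then in a limit
`2 n a → t ≠ 0` and `n² a → f` some `k` has `k² a` inside the `ρ`-ball and `k² a + k t + f` outside
its closure, a contradiction; `m` as a difference of two almost-periods inherits the conclusion.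
Conversely, for `2 m a` small one looks for `n` with `2 n a`, `n² a` and `(n + m)² a` all small,
which makes `n` and `n + m` almost-periods because `‖k² a‖ = ρ` never happens for `k > 0`.
-/

section Bohr

theorem exists_tendsto_nhds_of_compactSpace {X ι : Type*} [TopologicalSpace X] [CompactSpace X]
    (U : Ultrafilter ι) (f : ι → X) : ∃ x, Tendsto f U (𝓝 x) :=
  ⟨_, (U.map f).le_nhds_lim⟩

theorem add_sq_zsmul {G : Type*} [AddCommGroup G] (a : G) (k n : ℤ) :
    (k + n) ^ 2 • a = k ^ 2 • a + k • n • (2 : ℤ) • a + n ^ 2 • a := by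
  module

variable {G : Type*} [AddCommGroup G] [TopologicalSpace G]

/-- The filter of integers `k → +∞` tending to `0` in the Bohr topology relative to `G`, that is,
such that `k • b → 0` for every `b : G`. All `b` are treated at once by letting `k` act on the
identity of `G`, an element of the group `G → G`, which is compact when `G` is. -/
noncomputable def bohrAtTop (G : Type*) [AddCommGroup G] [TopologicalSpace G] : Filter ℤ :=
  atTop ⊓ comap (fun k : ℤ => k • (id : G → G)) (𝓝 0)

theorem tendsto_bohrAtTop_iff {ι : Type*} {F : Filter ι} {u : ι → ℤ} :
    Tendsto u F (bohrAtTop G) ↔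
      Tendsto u F atTop ∧ ∀ b : G, Tendsto (fun i => u i • b) F (𝓝 0) := by
  simp only [bohrAtTop, tendsto_inf, tendsto_comap_iff, tendsto_pi_nhds]
  rfl

theorem bohrAtTop_le_atTop : bohrAtTop G ≤ atTop :=
  inf_le_left

theorem tendsto_zsmul_bohrAtTop (b : G) :
    Tendsto (fun k : ℤ => k • b) (bohrAtTop G) (𝓝 0) :=
  (tendsto_bohrAtTop_iff.1 tendsto_id).2 b

variable [IsTopologicalAddGroup G]

theorem tendsto_add_bohrAtTop {ι : Type*} {F : Filter ι} {u v : ι → ℤ}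
    (hu : Tendsto u F (bohrAtTop G)) (hv : Tendsto v F (bohrAtTop G)) :
    Tendsto (fun i => u i + v i) F (bohrAtTop G) := by
  rw [tendsto_bohrAtTop_iff] at hu hv ⊢
  refine ⟨hu.1.atTop_add_atTop hv.1, fun b => ?_⟩
  simpa only [add_smul, add_zero] using (hu.2 b).add (hv.2 b)

-- In the iterated limit, with `l → 0` for fixed `k` before `k → 0`, the cross term of
-- `(k + l) ^ 2 • a` disappears.
theorem mapClusterPt_add_sq_zsmul_bohrAtTop {a x y : G}
    (hx : MapClusterPt x (bohrAtTop G) (fun k : ℤ => k ^ 2 • a))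
    (hy : MapClusterPt y (bohrAtTop G) (fun k : ℤ => k ^ 2 • a)) :
    MapClusterPt (x + y) (bohrAtTop G) (fun k : ℤ => k ^ 2 • a) := by
  obtain ⟨U, hU, hxy⟩ := mapClusterPt_iff_ultrafilter.1 (hx.curry_prodMap hy)
  have hcross : Tendsto (fun p : ℤ × ℤ => p.1 • p.2 • (2 : ℤ) • a) U (𝓝 0) := by
    have hiter (k : ℤ) : Tendsto (fun l : ℤ => k • l • (2 : ℤ) • a) (bohrAtTop G) (𝓝 0) := by
      simpa only [smul_zero] using (tendsto_zsmul_bohrAtTop ((2 : ℤ) • a)).const_smul k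
    exact (Tendsto.curry (la := bohrAtTop G) (.of_forall hiter)).mono_left hU
  have hadd : Tendsto (fun p : ℤ × ℤ => p.1 + p.2) U (bohrAtTop G) :=
    tendsto_add_bohrAtTop (tendsto_fst.mono_left (hU.trans curry_le_prod))
      (tendsto_snd.mono_left (hU.trans curry_le_prod))
  refine .of_comp hadd (Tendsto.mapClusterPt ?_)
  simpa only [Function.comp_def, add_sq_zsmul, add_zero, Prod.map] using
    (hxy.fst_nhds.add hcross).add hxy.snd_nhds

variable [CompactSpace G]

theorem neg_mem_of_isClosed_of_add_mem {S : Set G} (hS : IsClosed S)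
    (hadd : ∀ x ∈ S, ∀ y ∈ S, x + y ∈ S) {x : G} (hx : x ∈ S) : -x ∈ S := by
  have hmul : ∀ n : ℕ, 1 ≤ n → n • x ∈ S := fun n hn => by
    induction n, hn using Nat.le_induction with
    | base => rwa [one_smul]
    | succ n _ ih => exact succ_nsmul x n ▸ hadd _ ih _ hx
  have hneg : MapClusterPt (-x) atTop (fun n : ℕ => n • x) := by
    simpa only [neg_one_zsmul] using mapClusterPt_self_zsmul_atTop_nsmul x (-1)
  exact hS.mem_of_mapClusterPt hneg ((eventually_ge_atTop 1).mono hmul)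

theorem exists_finset_sub_zsmul_mem (c : G) {V : Set G} (hV : V ∈ 𝓝 0) :
    ∃ R : Finset ℤ, ∀ l : ℤ, ∃ r ∈ R, (l - r) • c ∈ V := by
  have hcover : closure (Set.range fun l : ℤ => l • c) ⊆ ⋃ r : ℤ, {x | x - r • c ∈ interior V} := by
    intro x hx
    have hnear : ∀ᶠ z in 𝓝 x, x - z ∈ interior V :=
      (continuous_const.sub continuous_id).continuousAt.eventually_mem (by
        simpa using interior_mem_nhds.2 hV)
    obtain ⟨_, hz, r, rfl⟩ := mem_closure_iff_nhds.1 hx _ hnear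
    exact Set.mem_iUnion.2 ⟨r, hz⟩
  obtain ⟨R, hR⟩ := isClosed_closure.isCompact.elim_finite_subcover _
    (fun r => isOpen_interior.preimage (continuous_sub_right (r • c))) hcover
  refine ⟨R, fun l => ?_⟩
  obtain ⟨r, hr, hl⟩ := Set.mem_iUnion₂.1 (hR (subset_closure ⟨l, rfl⟩))
  exact ⟨r, hr, sub_smul l r c ▸ interior_subset hl⟩

theorem exists_finset_eventually_sub_mem_of_mem_bohrAtTop {W : Set ℤ} (hW : W ∈ bohrAtTop G) :
    ∃ R : Finset ℤ, ∀ᶠ l in atTop, ∃ r ∈ R, l - r ∈ W := by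
  obtain ⟨A, hA, B, ⟨V, hV, hVB⟩, rfl⟩ := mem_inf_iff.1 hW
  obtain ⟨R, hR⟩ := exists_finset_sub_zsmul_mem (id : G → G) hV
  have hlarge : ∀ᶠ l : ℤ in atTop, ∀ r ∈ R, l - r ∈ A :=
    (eventually_all_finset R).2 fun r _ => tendsto_atTop_add_const_right _ (-r) tendsto_id hA
  refine ⟨R, hlarge.mono fun l hl => ?_⟩
  obtain ⟨r, hr, hrV⟩ := hR l
  exact ⟨r, hr, hl r hr, hVB hrV⟩

instance bohrAtTop_neBot : (bohrAtTop G).NeBot := by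
  have h : MapClusterPt 0 atTop (fun k : ℤ => k • (id : G → G)) :=
    mapClusterPt_atTop_zsmul_iff_nsmul.2 (mapClusterPt_zero_atTop_nsmul _)
  obtain ⟨U, hU, hlim⟩ := mapClusterPt_iff_ultrafilter.1 h
  exact neBot_of_le (le_inf hU (tendsto_iff_comap.1 hlim))

theorem mapClusterPt_mul_zsmul_bohrAtTop {a : G}
    (ha : ∀ k : ℤ, 0 < k → DenseRange fun l : ℤ => l • k • a) (y : G) :
    MapClusterPt y (bohrAtTop G ×ˢ bohrAtTop G) (fun p : ℤ × ℤ => (p.1 * p.2) • a) := by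
  rw [mapClusterPt_iff_frequently]
  intro O hO
  rw [(bohrAtTop G).basis_sets.prod_self.frequently_iff]
  intro W hW
  have hsub : Tendsto (fun p : G × G => p.1 - p.2) (𝓝 y ×ˢ 𝓝 0) (𝓝 y) := by
    simpa only [sub_zero] using
      (tendsto_fst (f := 𝓝 y) (g := 𝓝 (0 : G))).sub tendsto_snd
  obtain ⟨P, hP, Q, hQ, hPQ⟩ := eventually_prod_iff.1 (hsub hO)
  obtain ⟨R, hR⟩ := exists_finset_eventually_sub_mem_of_mem_bohrAtTop hW
  have hcorr : ∀ᶠ k in bohrAtTop G, ∀ r ∈ R, Q (k • r • a) :=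
    (eventually_all_finset R).2 fun r _ => tendsto_zsmul_bohrAtTop (r • a) hQ
  obtain ⟨k, ⟨hkR, hkW⟩, hk⟩ :=
    ((hcorr.and hW).and (bohrAtTop_le_atTop (eventually_gt_atTop 0))).exists
  have hy : MapClusterPt y atTop (fun l : ℤ => l • k • a) :=
    ((mapClusterPt_atTop_nsmul_tfae y (k • a)).out 1 3).2 (ha k hk y)
  obtain ⟨l, hl, r, hr, hlW⟩ := ((hy.frequently hP).and_eventually hR).exists
  refine ⟨(k, l - r), ⟨hkW, hlW⟩, ?_⟩
  have hkl : (k * (l - r)) • a = l • k • a - k • r • a := by module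
  change (k * (l - r)) • a ∈ O
  exact hkl ▸ hPQ hl (hkR r hr)

-- In the joint limit, on the other hand, the cross term can be made to tend to any `y`; since the
-- cluster points form a group, this puts `y` among them.
theorem mapClusterPt_sq_zsmul_bohrAtTop {a : G}
    (ha : ∀ k : ℤ, 0 < k → DenseRange fun l : ℤ => l • k • a) (y : G) :
    MapClusterPt y (bohrAtTop G) (fun k : ℤ => k ^ 2 • a) := by
  set C := {x : G | MapClusterPt x (bohrAtTop G) fun k : ℤ => k ^ 2 • a}
  have hadd : ∀ x ∈ C, ∀ y ∈ C, x + y ∈ C := fun _ hx _ hy =>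
    mapClusterPt_add_sq_zsmul_bohrAtTop hx hy
  have hneg : ∀ x ∈ C, -x ∈ C := fun _ => neg_mem_of_isClosed_of_add_mem
    isClosed_setOfPred_clusterPt hadd
  have ha2 : ∀ k : ℤ, 0 < k → DenseRange fun l : ℤ => l • k • (2 : ℤ) • a := fun k hk => by
    simpa only [mul_smul] using ha (k * 2) (by positivity)
  obtain ⟨U, hU, hlim⟩ :=
    mapClusterPt_iff_ultrafilter.1 (mapClusterPt_mul_zsmul_bohrAtTop ha2 y)
  have hfst : Tendsto (fun p : ℤ × ℤ => p.1) U (bohrAtTop G) := tendsto_fst.mono_left hU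
  have hsnd : Tendsto (fun p : ℤ × ℤ => p.2) U (bohrAtTop G) := tendsto_snd.mono_left hU
  obtain ⟨z, hz⟩ : ∃ z, Tendsto (fun p : ℤ × ℤ => p.1 ^ 2 • a) U (𝓝 z) :=
    exists_tendsto_nhds_of_compactSpace U _
  obtain ⟨w, hw⟩ : ∃ w, Tendsto (fun p : ℤ × ℤ => p.2 ^ 2 • a) U (𝓝 w) :=
    exists_tendsto_nhds_of_compactSpace U _
  have hzC : z ∈ C := .of_comp hfst hz.mapClusterPt
  have hwC : w ∈ C := .of_comp hsnd hw.mapClusterPt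
  have hsum : z + y + w ∈ C := by
    refine .of_comp (tendsto_add_bohrAtTop hfst hsnd) (Tendsto.mapClusterPt ?_)
    simpa only [Function.comp_def, add_sq_zsmul, mul_smul] using (hz.add hlim).add hw
  have hy : y = -z + (z + y + w) + -w := by abel
  exact hy ▸ hadd _ (hadd _ (hneg z hzC) _ hsum) _ (hneg w hwC)

theorem mapClusterPt_zsmul_sq_zsmul {a : G}
    (ha : ∀ k : ℤ, 0 < k → DenseRange fun l : ℤ => l • k • a) {b t : G}
    (ht : t ∈ closure (Set.range fun k : ℤ => k • b)) (x : G) :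
    MapClusterPt (t, x) atTop (fun k : ℤ => (k • b, k ^ 2 • a)) := by
  have hclosed : IsClosed {t | MapClusterPt (t, x) atTop fun k : ℤ => (k • b, k ^ 2 • a)} :=
    isClosed_setOfPred_clusterPt.preimage (.prodMk_left x)
  refine closure_minimal ?_ hclosed ht
  rintro _ ⟨k₀, rfl⟩
  obtain ⟨U, hU, hlim⟩ := mapClusterPt_iff_ultrafilter.1
    (mapClusterPt_sq_zsmul_bohrAtTop ha (x - k₀ ^ 2 • a))
  have hatTop : Tendsto (fun k : ℤ => k₀ + k) U atTop :=
    tendsto_atTop_add_const_left _ k₀ (hU.trans bohrAtTop_le_atTop)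
  have hzero (c : G) : Tendsto (fun k : ℤ => k • c) U (𝓝 0) :=
    (tendsto_zsmul_bohrAtTop c).mono_left hU
  refine .of_comp hatTop (Tendsto.mapClusterPt (.prodMk_nhds ?_ ?_))
  · simpa only [add_smul, add_zero] using (hzero b).const_add (k₀ • b)
  · have := ((hzero ((2 : ℤ) • a)).const_smul k₀).const_add (k₀ ^ 2 • a) |>.add hlim
    simpa only [add_sq_zsmul, smul_zero, add_zero, add_sub_cancel] using this

end Bohr

section Circle

theorem not_isOfFinAddOrder_zsmul {G : Type*} [AddGroup G] {a : G} (ha : ¬IsOfFinAddOrder a)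
    {k : ℤ} (hk : k ≠ 0) : ¬IsOfFinAddOrder (k • a) := by
  rw [isOfFinAddOrder_iff_zsmul_eq_zero] at ha ⊢
  rintro ⟨n, hn, h⟩
  exact ha ⟨n * k, mul_ne_zero hn hk, by rwa [mul_smul]⟩

theorem denseRange_zsmul_of_not_isOfFinAddOrder {p : ℝ} [Fact (0 < p)] {a : AddCircle p}
    (ha : ¬IsOfFinAddOrder a) : DenseRange fun l : ℤ => l • a :=
  AddCircle.denseRange_zsmul_iff.2 (addOrderOf_eq_zero ha)

theorem exists_pos_forall_norm_zsmul_lt_imp_lt {E : Type*} [NormedAddCommGroup E] {b : E}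
    (hb : ¬IsOfFinAddOrder b) (M : ℤ) :
    ∃ ε > 0, ∀ m : ℤ, 0 < m → ‖m • b‖ < ε → M < m := by
  have hpos : ∀ m ∈ Set.Ioc 0 M, 0 < ‖m • b‖ := fun m hm =>
    norm_pos_iff.2 fun h => hb (isOfFinAddOrder_iff_zsmul_eq_zero.2 ⟨m, hm.1.ne', h⟩)
  have hsmall : ∀ᶠ ε in 𝓝[>] (0 : ℝ), ∀ m ∈ Set.Ioc 0 M, ε < ‖m • b‖ :=
    ((Set.finite_Ioc 0 M).eventually_all.2 fun m hm => eventually_lt_nhds (hpos m hm)).filter_mono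
      nhdsWithin_le_nhds
  obtain ⟨ε, hε, hε0⟩ := (hsmall.and self_mem_nhdsWithin).exists
  exact ⟨ε, hε0, fun m hm hmε => not_le.1 fun hmM => (hε m ⟨hm, hmM⟩).not_gt hmε⟩

theorem exists_coe_eq_and_abs_eq_norm (x : UnitAddCircle) :
    ∃ r : ℝ, (r : UnitAddCircle) = x ∧ |r| = ‖x‖ := by
  induction x using QuotientAddGroup.induction_on with | _ r =>
  refine ⟨r - round r, ?_, UnitAddCircle.norm_eq.symm⟩
  simp

theorem exists_zsmul_eq_and_mul_norm_le {m : ℤ} (hm : 0 < m) (x : UnitAddCircle) :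
    ∃ y : UnitAddCircle, m • y = x ∧ m * ‖y‖ ≤ ‖x‖ := by
  obtain ⟨r, rfl, hr⟩ := exists_coe_eq_and_abs_eq_norm x
  have hm' : (0 : ℝ) < m := mod_cast hm
  refine ⟨(r / m : ℝ), ?_, ?_⟩
  · rw [← AddCircle.coe_zsmul, zsmul_eq_mul, mul_div_cancel₀ _ hm'.ne']
  · calc
      m * ‖((r / m : ℝ) : UnitAddCircle)‖ ≤ m * |r / m| := by
        gcongr
        exact QuotientAddGroup.norm_mk_le_norm
      _ = ‖(r : UnitAddCircle)‖ := by
        rw [abs_div, abs_of_pos hm', mul_div_cancel₀ _ hm'.ne', hr]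

theorem lt_norm_coe {ρ x : ℝ} (h₁ : ρ < x) (h₂ : x < 1 - ρ) : ρ < ‖(x : UnitAddCircle)‖ := by
  rw [UnitAddCircle.norm_eq, lt_abs]
  rcases le_or_gt (round x) 0 with h | h
  · have : (round x : ℝ) ≤ 0 := mod_cast h
    exact .inl (by linarith)
  · have : (1 : ℝ) ≤ round x := mod_cast h
    exact .inr (by linarith)

theorem exists_norm_lt_and_lt_norm_add {ρ : ℝ} (hρ₀ : 0 < ρ) (hρ : ρ < 1 / 2) {s : UnitAddCircle}
    (hs : s ≠ 0) : ∃ x, ‖x‖ < ρ ∧ ρ < ‖x + s‖ := by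
  obtain ⟨r, rfl, hr⟩ := exists_coe_eq_and_abs_eq_norm s
  have hr_half : |r| ≤ 1 / 2 := by
    simpa only [hr, abs_one] using AddCircle.norm_le_half_period (1 : ℝ) one_ne_zero
  wlog hr_nonneg : 0 ≤ r generalizing r
  · obtain ⟨x, hx, hxs⟩ :=
      this (-r) (by simpa using hs) (by simpa using hr) (by simpa using hr_half) (by linarith)
    refine ⟨-x, by rwa [norm_neg], ?_⟩
    rwa [← norm_neg, neg_add, neg_neg, ← AddCircle.coe_neg]
  have hr_pos : 0 < r := hr_nonneg.lt_of_ne fun h => hs (by rw [← h, AddCircle.coe_zero])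
  rw [abs_of_pos hr_pos] at hr_half
  obtain ⟨x, hxl, hxu⟩ : ∃ x, max (-ρ) (ρ - r) < x ∧ x < min ρ (1 - ρ - r) :=
    exists_between (max_lt (lt_min (by linarith) (by linarith))
      (lt_min (by linarith) (by linarith)))
  obtain ⟨hx₁, hx₂⟩ := max_lt_iff.1 hxl
  obtain ⟨hx₃, hx₄⟩ := lt_min_iff.1 hxu
  refine ⟨x, QuotientAddGroup.norm_mk_le_norm.trans_lt (abs_lt.2 ⟨hx₁, hx₃⟩), ?_⟩
  rw [← AddCircle.coe_add]
  exact lt_norm_coe (by linarith) (by linarith)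

end Circle

section NearSquare

/-- The paper's `g`: the indicator function of the integers `n` for which `n² a` is at distance
less than `ρ` from `0`. The number `α` enters only through its class `a` modulo `1`. -/
noncomputable def nearSquare (a : UnitAddCircle) (ρ : ℝ) : ℤ → ℤ :=
  {n | ‖n ^ 2 • a‖ < ρ}.indicator 1

variable {a : UnitAddCircle} {ρ : ℝ}

theorem nearSquare_eq_iff {m n : ℤ} :
    nearSquare a ρ m = nearSquare a ρ n ↔ (‖m ^ 2 • a‖ < ρ ↔ ‖n ^ 2 • a‖ < ρ) := by
  by_cases hm : ‖m ^ 2 • a‖ < ρ <;> by_cases hn : ‖n ^ 2 • a‖ < ρ <;>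
    simp [nearSquare, Set.indicator, hm, hn]

theorem mapClusterPt_zsmul_sq_zsmul_circle (ha : ¬IsOfFinAddOrder a) {b t : UnitAddCircle}
    (ht : t ∈ closure (Set.range fun k : ℤ => k • b)) (x : UnitAddCircle) :
    MapClusterPt (t, x) atTop (fun k : ℤ => (k • b, k ^ 2 • a)) :=
  mapClusterPt_zsmul_sq_zsmul (fun _ hk => denseRange_zsmul_of_not_isOfFinAddOrder
    (not_isOfFinAddOrder_zsmul ha hk.ne')) ht x

theorem exists_norm_sq_zsmul_lt_and_lt_norm (ha : ¬IsOfFinAddOrder a) (hρ₀ : 0 < ρ)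
    (hρ : ρ < 1 / 2) {t : UnitAddCircle} (ht : t ≠ 0) (f : UnitAddCircle) :
    ∃ k : ℤ, 0 < k ∧ ‖k ^ 2 • a‖ < ρ ∧ ρ < ‖k ^ 2 • a + k • t + f‖ := by
  obtain ⟨k₀, hk₀⟩ : ∃ k₀ : ℤ, k₀ • t + f ≠ 0 := by
    by_contra! h
    exact ht (by simpa [show f = 0 by simpa using h 0] using h 1)
  obtain ⟨x, hx, hxs⟩ := exists_norm_lt_and_lt_norm_add hρ₀ hρ hk₀
  obtain ⟨U, hU, hlim⟩ := mapClusterPt_iff_ultrafilter.1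
    (mapClusterPt_zsmul_sq_zsmul_circle ha (subset_closure ⟨k₀, rfl⟩) x)
  have hnear : ∀ᶠ k : ℤ in U, ‖k ^ 2 • a‖ < ρ := hlim.snd_nhds.norm.eventually_lt_const hx
  have hfar : ∀ᶠ k : ℤ in U, ρ < ‖k ^ 2 • a + k • t + f‖ :=
    ((hlim.snd_nhds.add hlim.fst_nhds).add_const f).norm.eventually_const_lt (by rwa [add_assoc])
  exact ((eventually_gt_atTop 0).filter_mono hU |>.and (hnear.and hfar)).exists

theorem exists_forall_mu_imp_norm_lt (ha : ¬IsOfFinAddOrder a) (hρ₀ : 0 < ρ) (hρ : ρ < 1 / 2)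
    {ε : ℝ} (hε : 0 < ε) :
    ∃ N : ℤ, 0 < N ∧ ∀ n : ℤ, mu (nearSquare a ρ) n N → ‖n • (2 : ℤ) • a‖ < ε := by
  by_contra! h
  choose! n hmu hn using h
  obtain ⟨⟨t, f⟩, htf⟩ : ∃ p, MapClusterPt p atTop
      fun N : ℤ => (n N • (2 : ℤ) • a, n N ^ 2 • a) := exists_clusterPt_of_compactSpace _
  obtain ⟨U, hU, hlim⟩ := mapClusterPt_iff_ultrafilter.1 htf
  have ht : ε ≤ ‖t‖ :=
    ge_of_tendsto hlim.fst_nhds.norm (hU ((eventually_gt_atTop 0).mono hn))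
  obtain ⟨k, hk, hkρ, hkf⟩ :=
    exists_norm_sq_zsmul_lt_and_lt_norm ha hρ₀ hρ (norm_pos_iff.1 (hε.trans_le ht)) f
  have hfar : ∀ᶠ N in U, ρ < ‖k ^ 2 • a + k • n N • (2 : ℤ) • a + n N ^ 2 • a‖ :=
    (((hlim.fst_nhds.const_smul k).const_add _).add hlim.snd_nhds).norm.eventually_const_lt hkf
  simp only [← add_sq_zsmul] at hfar
  obtain ⟨N, hN, hkN⟩ := (hfar.and (hU (eventually_ge_atTop k))).exists
  exact hN.not_gt ((nearSquare_eq_iff.1 (hmu N (hk.trans_le hkN) k hk hkN)).2 hkρ)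

theorem exists_forall_lam_imp_norm_lt (ha : ¬IsOfFinAddOrder a) (hρ₀ : 0 < ρ) (hρ : ρ < 1 / 2)
    {ε : ℝ} (hε : 0 < ε) :
    ∃ N : ℤ, 0 < N ∧ ∀ m : ℤ, lam (nearSquare a ρ) m N → ‖m • (2 : ℤ) • a‖ < ε := by
  obtain ⟨N, hN, hmu⟩ := exists_forall_mu_imp_norm_lt ha hρ₀ hρ (half_pos hε)
  refine ⟨N, hN, fun m ⟨n, _, hn, hnm⟩ => ?_⟩
  calc
    ‖m • (2 : ℤ) • a‖ = ‖(n + m) • (2 : ℤ) • a - n • (2 : ℤ) • a‖ := by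
      rw [add_smul, add_sub_cancel_left]
    _ ≤ ‖(n + m) • (2 : ℤ) • a‖ + ‖n • (2 : ℤ) • a‖ := norm_sub_le _ _
    _ < ε / 2 + ε / 2 := add_lt_add (hmu _ hnm) (hmu _ hn)
    _ = ε := add_halves ε

theorem exists_forall_norm_lt_imp_mu (hρ : ∀ k : ℤ, 0 < k → ‖k ^ 2 • a‖ ≠ ρ) (N : ℤ) :
    ∃ δ > 0, ∀ n : ℤ, ‖n • (2 : ℤ) • a‖ < δ → ‖n ^ 2 • a‖ < δ → mu (nearSquare a ρ) n N := by
  have hstable (k : ℤ) (hk : 0 < k) : ∀ᶠ p : UnitAddCircle × UnitAddCircle in 𝓝 0,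
      (‖k ^ 2 • a + k • p.1 + p.2‖ < ρ ↔ ‖k ^ 2 • a‖ < ρ) := by
    have hlim : Tendsto (fun p : UnitAddCircle × UnitAddCircle => ‖k ^ 2 • a + k • p.1 + p.2‖)
        (𝓝 0) (𝓝 ‖k ^ 2 • a‖) := by
      refine Continuous.tendsto' (by fun_prop) _ _ ?_
      simp
    rcases (hρ k hk).lt_or_gt with h | h
    · exact (hlim.eventually_lt_const h).mono fun p hp => iff_of_true hp h
    · exact (hlim.eventually_const_lt h).mono fun p hp => iff_of_false hp.not_gt h.not_gt
  obtain ⟨δ, hδ, hball⟩ := Metric.eventually_nhds_iff.1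
    ((Set.finite_Ioc 0 N).eventually_all.2 fun k hk => hstable k hk.1)
  refine ⟨δ, hδ, fun n hn hn2 k hk hkN => nearSquare_eq_iff.2 ?_⟩
  have hdist : dist (n • (2 : ℤ) • a, n ^ 2 • a) 0 < δ := by
    rw [dist_zero_right]
    exact max_lt hn hn2
  simpa only [add_sq_zsmul] using hball hdist k ⟨hk, hkN⟩

-- `m² a` is cancelled by the cross term of `(n + m)² a` as soon as `2 n a` is near an `m`-th part
-- of `-m² a`, which can be chosen of norm at most `1 / (2 m)`.
theorem exists_norm_sq_zsmul_add_lt (ha : ¬IsOfFinAddOrder a) {m : ℤ} (hm : 0 < m) :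
    ∃ n : ℤ, 0 < n ∧ ‖n • (2 : ℤ) • a‖ < 1 / m ∧ ‖n ^ 2 • a‖ < 1 / m ∧
      ‖(n + m) ^ 2 • a‖ < 1 / m := by
  have hm' : (0 : ℝ) < m := mod_cast hm
  obtain ⟨t, hmt, ht⟩ := exists_zsmul_eq_and_mul_norm_le hm (-(m ^ 2 • a))
  have ht' : ‖t‖ < 1 / m := by
    have := AddCircle.norm_le_half_period (1 : ℝ) one_ne_zero (x := -(m ^ 2 • a))
    rw [abs_one] at this
    rw [lt_div_iff₀' hm']
    linarith
  have hdense := denseRange_zsmul_of_not_isOfFinAddOrder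
    (not_isOfFinAddOrder_zsmul ha two_ne_zero)
  obtain ⟨U, hU, hlim⟩ := mapClusterPt_iff_ultrafilter.1
    (mapClusterPt_zsmul_sq_zsmul_circle ha (hdense t) 0)
  have hpos : ‖(0 : UnitAddCircle)‖ < 1 / m := by rw [norm_zero]; positivity
  have hn : ∀ᶠ n : ℤ in U, ‖n • (2 : ℤ) • a‖ < 1 / m :=
    hlim.fst_nhds.norm.eventually_lt_const ht'
  have hn2 : ∀ᶠ n : ℤ in U, ‖n ^ 2 • a‖ < 1 / m := hlim.snd_nhds.norm.eventually_lt_const hpos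
  have hcancel : Tendsto (fun n : ℤ => (n + m) ^ 2 • a) U (𝓝 0) := by
    have := ((hlim.fst_nhds.const_smul m).const_add (m ^ 2 • a)).add hlim.snd_nhds
    simpa only [add_comm _ m, add_sq_zsmul, hmt, add_neg_cancel, add_zero] using this
  have hnm : ∀ᶠ n : ℤ in U, ‖(n + m) ^ 2 • a‖ < 1 / m := hcancel.norm.eventually_lt_const hpos
  exact ((eventually_gt_atTop 0).filter_mono hU |>.and (hn.and (hn2.and hnm))).exists

theorem exists_forall_norm_lt_imp_lam (ha : ¬IsOfFinAddOrder a)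
    (hρ : ∀ k : ℤ, 0 < k → ‖k ^ 2 • a‖ ≠ ρ) (N : ℤ) :
    ∃ ε : ℝ, 0 < ε ∧ ∀ m : ℤ, 0 < m → ‖m • (2 : ℤ) • a‖ < ε → lam (nearSquare a ρ) m N := by
  obtain ⟨δ, hδ, hmu⟩ := exists_forall_norm_lt_imp_mu hρ N
  obtain ⟨M, hM⟩ := exists_int_gt (2 / δ)
  obtain ⟨ε, hε, hlarge⟩ := exists_pos_forall_norm_zsmul_lt_imp_lt
    (not_isOfFinAddOrder_zsmul ha two_ne_zero) M
  refine ⟨min ε (δ / 2), lt_min hε (half_pos hδ), fun m hm hmε => ?_⟩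
  obtain ⟨hmε, hmδ⟩ := lt_min_iff.1 hmε
  have hm' : 1 / (m : ℝ) < δ / 2 := by
    have hMm : (M : ℝ) < m := mod_cast hlarge m hm hmε
    rw [one_div_lt (mod_cast hm) (half_pos hδ), one_div_div]
    exact hM.trans hMm
  obtain ⟨n, hn0, hn, hn2, hnm⟩ := exists_norm_sq_zsmul_add_lt ha hm
  refine ⟨n, hn0, hmu n (by linarith) (by linarith), hmu (n + m) ?_ (by linarith)⟩
  calc
    ‖(n + m) • (2 : ℤ) • a‖ ≤ ‖n • (2 : ℤ) • a‖ + ‖m • (2 : ℤ) • a‖ :=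
      add_smul n m ((2 : ℤ) • a) ▸ norm_add_le _ _
    _ < δ := by linarith

end NearSquare

section Real

theorem abs_mul_sub_round_eq_norm_zsmul (x : ℝ) (k : ℤ) :
    |x * k - round (x * k)| = ‖k • (x : UnitAddCircle)‖ := by
  rw [← UnitAddCircle.norm_eq, ← AddCircle.coe_zsmul, zsmul_eq_mul, mul_comm]

theorem irrational_of_ne_rat_add_rat_mul {α ρ : ℝ}
    (hα : ¬∃ q r : ℚ, α = (q : ℝ) + (r : ℝ) * ρ) : Irrational α := by
  rintro ⟨q, rfl⟩
  exact hα ⟨q, 0, by simp⟩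

theorem abs_mul_sub_round_ne_of_ne_rat_add_rat_mul {α ρ : ℝ}
    (hα : ¬∃ q r : ℚ, α = (q : ℝ) + (r : ℝ) * ρ) {k : ℤ} (hk : k ≠ 0) :
    |α * k - round (α * k)| ≠ ρ := by
  rintro rfl
  have hk' : (k : ℝ) ≠ 0 := mod_cast hk
  rcases abs_choice (α * k - round (α * k)) with h | h
  · exact hα ⟨round (α * k) / k, 1 / k, by rw [h]; push_cast; field_simp; ring⟩
  · exact hα ⟨round (α * k) / k, -1 / k, by rw [h]; push_cast; field_simp; ring⟩

end Real

open scoped Classical in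
theorem statement_general (α ρ : ℝ) (hρ0 : 0 < ρ) (hρ2 : ρ < 1 / 2) (hα : Irrational α)
    (hρ : ∀ k : ℤ, 0 < k → |α * k ^ 2 - round (α * k ^ 2)| ≠ ρ)
    (g : ℤ → ℤ)
    (hg : ∀ n : ℤ, g n = if |α * n ^ 2 - round (α * n ^ 2)| < ρ then 1 else 0) :
    (∀ ε : ℝ, 0 < ε → ∃ N : ℤ, 0 < N ∧ ∀ m : ℤ, 0 < m → lam g m N →
        |2 * α * m - round (2 * α * m)| < ε) ∧
      (∀ N : ℤ, 0 < N → ∃ ε : ℝ, 0 < ε ∧ ∀ m : ℤ, 0 < m →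
        |2 * α * m - round (2 * α * m)| < ε → lam g m N) := by
  have ha : ¬IsOfFinAddOrder (α : UnitAddCircle) := by
    simpa [AddCircle.isOfFinAddOrder_iff_exists_rat_eq_div, Irrational] using hα
  have hsq (n : ℤ) : |α * n ^ 2 - round (α * n ^ 2)| = ‖n ^ 2 • (α : UnitAddCircle)‖ :=
    mod_cast abs_mul_sub_round_eq_norm_zsmul α (n ^ 2)
  have hlin (m : ℤ) :
      |2 * α * m - round (2 * α * m)| = ‖m • (2 : ℤ) • (α : UnitAddCircle)‖ := by
    rw [abs_mul_sub_round_eq_norm_zsmul, ← AddCircle.coe_zsmul (n := 2), zsmul_eq_mul,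
      Int.cast_ofNat]
  obtain rfl : g = nearSquare α ρ := by
    funext n
    rw [hg, hsq]
    rfl
  simp only [hsq] at hρ
  simp only [hlin]
  refine ⟨fun ε hε => ?_, fun N _ => exists_forall_norm_lt_imp_lam ha hρ N⟩
  obtain ⟨N, hN, h⟩ := exists_forall_lam_imp_norm_lt ha hρ0 hρ2 hε
  exact ⟨N, hN, fun m _ => h m⟩

open scoped Classical in
theorem statement (α ρ : ℝ) (hρ0 : 0 < ρ) (hρ4 : ρ < 1 / 4)
    (hα : ¬ ∃ q r : ℚ, α = (q : ℝ) + (r : ℝ) * ρ)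
    (g : ℤ → ℤ)
    (hg : ∀ n : ℤ, g n = if |α * n ^ 2 - round (α * n ^ 2)| < ρ then 1 else 0) :
    (∀ ε : ℝ, 0 < ε → ∃ N : ℤ, 0 < N ∧ ∀ m : ℤ, 0 < m → lam g m N →
        |2 * α * m - round (2 * α * m)| < ε) ∧
      (∀ N : ℤ, 0 < N → ∃ ε : ℝ, 0 < ε ∧ ∀ m : ℤ, 0 < m →
        |2 * α * m - round (2 * α * m)| < ε → lam g m N) :=
  statement_general α ρ hρ0 (by linarith) (irrational_of_ne_rat_add_rat_mul hα)
    (fun _ hk => mod_cast abs_mul_sub_round_ne_of_ne_rat_add_rat_mul hα (pow_ne_zero 2 hk.ne')) g hg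

end Stmt15
end

section
/- The following two assertions hold: (a) for every ε > 0 there exists a positive integer N such that for every positive integer m, if κ(m, N) holds then ‖α·m²‖ < ε; (b) for every positive integer N there exists ε > 0 such that for every positive integer m, if ‖α·m²‖ < ε then κ(m, N) holds. -/
/-!
STATEMENT 16: κ(m, N) characterises smallness of ‖α·m²‖.
-/

namespace Stmt16

/-- `μ(m, N)`: `g(n + m) = g(n)` for every positive integer `n ≤ N`. -/
def mu (g : ℤ → ℤ) (m N : ℤ) : Prop :=
  ∀ n : ℤ, 0 < n → n ≤ N → g (n + m) = g n

/-- `λ(m, N)`: there is a positive integer `n` with `μ(n, N)` and `μ(n + m, N)`. -/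
def lam (g : ℤ → ℤ) (m N : ℤ) : Prop :=
  ∃ n : ℤ, 0 < n ∧ mu g n N ∧ mu g (n + m) N

/-- `κ(m, N)`. -/
def kap (g : ℤ → ℤ) (m N : ℤ) : Prop :=
  ∃ M : ℤ, 0 < M ∧ ∀ h : ℤ, 0 < h → g h = 1 → lam g h M →
    ∀ L : ℤ, 0 < L → ∃ n : ℤ, 0 < n ∧ lam g n L ∧ mu g n N ∧ g (h + m + n) = 1

/-- `ν(m, m̃, N)`. -/
def nu (g : ℤ → ℤ) (m mt N : ℤ) : Prop :=
  ∃ L : ℤ, 0 < L ∧ ∀ n : ℤ, 0 < n → lam g n L → kap g (m + n) L → kap g (mt + n) N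

/-- `δ(m, m̃)`. -/
def del (g : ℤ → ℤ) (m mt : ℤ) : Prop :=
  ∀ N : ℤ, 0 < N → ∃ L : ℤ, 0 < L ∧ ∀ n : ℤ, 0 < n →
    nu g (m + n) m L → kap g n L → nu g (mt + n) mt N

/-!
Let `a` be the class of `α` in `ℝ / ℤ`. The density of `n ↦ (n • e, n ^ 2 • a)` does not need
exponential sums. The limits of `n ^ 2 • a` along `n → ∞` with `n • e → 0` form a closed
subsemigroup of the compact circle, hence a subgroup. The cross term `(2 * k * l) • a` in the
expansion of `(k + l) ^ 2 • a` makes this subgroup everything: if `(2 * k) • a` is small and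
nonzero, its multiples by `l` come close to every point of the circle.

Expanding `(n + m) ^ 2` shows that `m` influences the values of `g` at `n + m` only through its
phase `(m • 2 • a, m ^ 2 • a)`. By density and compactness, `μ(m, N)` for large `N` says that
this phase is close to `0`, and `λ(m, N)` that its first coordinate is. In `κ(m, N)` we
therefore have `(h + m + n) ^ 2 • a ≈ h ^ 2 • a + m ^ 2 • a + n ^ 2 • a`, because `h • 2 • a`
and `n • 2 • a` are close to `0`. Here `h ^ 2 • a` ranges over the arc of radius `ρ` and
`n ^ 2 • a` is small but otherwise at our disposal, so the sum can be brought into the arc for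
every `h` if `m ^ 2 • a` is small, whereas for some `h` it cannot if `m ^ 2 • a` is far from `0`.
-/

open Filter Topology Set

section QuadOrbit

variable {A E : Type*} [AddCommGroup A] [AddCommGroup E]

/-- The orbit `n ↦ (n • e, n² • a)`, recording a quadratic phase together with a linear one. -/
def quadOrbit (a : A) (e : E) (n : ℤ) : E × A := (n • e, n ^ 2 • a)

variable [TopologicalSpace A] [TopologicalSpace E]

/-- The limit values of `n² • a` as `n → ∞` along sequences with `n • e → 0`. -/
def returnLimits (a : A) (e : E) : Set A := {b | MapClusterPt (0, b) atTop (quadOrbit a e)}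

lemma isClosed_returnLimits (a : A) (e : E) : IsClosed (returnLimits a e) :=
  isClosed_setOfPred_clusterPt.preimage (Continuous.prodMk_right (0 : E))

variable {a b c : A} {e : E} {χ : E →ₜ+ A}

lemma quadOrbit_add (hχ : χ e = a) (k l : ℤ) :
    quadOrbit a e (k + l) =
      quadOrbit a e k + quadOrbit a e l + (0, (2 * k) • χ (quadOrbit a e l).1) := by
  ext
  · simp [quadOrbit, add_smul]
  · simp only [quadOrbit, Prod.snd_add, map_zsmul, hχ]
    module

variable [IsTopologicalAddGroup A] [IsTopologicalAddGroup E]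

lemma mapClusterPt_quadOrbit_add (hχ : χ e = a) (hb : b ∈ returnLimits a e) (k : ℤ) :
    MapClusterPt (quadOrbit a e k + (0, b)) atTop (quadOrbit a e) := by
  have hshift : quadOrbit a e ∘ (k + ·) =
      (fun q ↦ quadOrbit a e k + q + (0, (2 * k) • χ q.1)) ∘ quadOrbit a e :=
    funext fun l ↦ quadOrbit_add hχ k l
  have hcont : Continuous fun q ↦ quadOrbit a e k + q + (0, (2 * k) • χ q.1) := by
    have := map_continuous χ
    fun_prop
  refine .of_comp (tendsto_atTop_add_const_left atTop k tendsto_id) (hshift ▸ ?_)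
  have := MapClusterPt.continuousAt_comp hcont.continuousAt hb
  rwa [map_zero, smul_zero, Prod.mk_zero_zero, add_zero] at this

lemma add_mem_returnLimits (hχ : χ e = a) (hb : b ∈ returnLimits a e)
    (hc : c ∈ returnLimits a e) : b + c ∈ returnLimits a e := by
  have hcl : IsClosed {q : E × A | MapClusterPt (q + (0, c)) atTop (quadOrbit a e)} :=
    isClosed_setOfPred_clusterPt.preimage (continuous_add_const _)
  simpa using! hcl.mem_of_mapClusterPt hb (.of_forall (mapClusterPt_quadOrbit_add hχ hc))

lemma neg_mem_returnLimits [CompactSpace A] (hχ : χ e = a) (hb : b ∈ returnLimits a e) :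
    -b ∈ returnLimits a e := by
  have hmul : ∀ n : ℕ, 1 ≤ n → n • b ∈ returnLimits a e := fun n hn ↦ by
    induction n, hn using Nat.le_induction with
    | base => rwa [one_smul]
    | succ n _ ih => rw [succ_nsmul]; exact add_mem_returnLimits hχ ih hb
  -- In a compact group the positive multiples of `b` accumulate at `-b`.
  rw [← neg_one_zsmul]
  exact (isClosed_returnLimits a e).mem_of_mapClusterPt
    (mapClusterPt_self_zsmul_atTop_nsmul b (-1)) ((eventually_ge_atTop 1).mono hmul)

end QuadOrbit

section Density

lemma exists_tendsto_ultrafilter {ι X : Type*} [TopologicalSpace X] [CompactSpace X]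
    (U : Ultrafilter ι) (f : ι → X) : ∃ x, Tendsto f U (𝓝 x) :=
  ⟨_, (U.map f).le_nhds_lim⟩

variable {p : ℝ}

lemma exists_coe_eq_abs_eq_norm (x : AddCircle p) :
    ∃ t : ℝ, (t : AddCircle p) = x ∧ |t| = ‖x‖ := by
  obtain ⟨t, rfl⟩ := QuotientAddGroup.mk_surjective x
  refine ⟨t - round (p⁻¹ * t) * p, ?_, (AddCircle.norm_eq p).symm⟩
  rw [← zsmul_eq_mul, AddCircle.coe_sub, AddCircle.coe_zsmul, AddCircle.coe_period, smul_zero,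
    sub_zero]

lemma exists_norm_zsmul_sub_lt {x : AddCircle p} (hx : x ≠ 0) (c : AddCircle p) :
    ∃ n : ℤ, ‖n • x - c‖ < ‖x‖ := by
  obtain ⟨t, rfl, ht⟩ := exists_coe_eq_abs_eq_norm x
  obtain ⟨s, rfl⟩ := QuotientAddGroup.mk_surjective c
  have ht0 : t ≠ 0 := by rintro rfl; simp at hx
  refine ⟨round (s / t), ?_⟩
  calc ‖round (s / t) • (t : AddCircle p) - s‖
      = ‖((round (s / t) * t - s : ℝ) : AddCircle p)‖ := by
        rw [AddCircle.coe_sub, ← zsmul_eq_mul, AddCircle.coe_zsmul]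
    _ ≤ |round (s / t) * t - s| := QuotientAddGroup.norm_mk_le_norm
    _ = |s / t - round (s / t)| * |t| := by
        rw [← abs_mul, sub_mul, div_mul_cancel₀ _ ht0, abs_sub_comm]
    _ ≤ 1 / 2 * |t| := by gcongr; exact abs_sub_round _
    _ < ‖(t : AddCircle p)‖ := by rw [← ht]; linarith [abs_pos.2 ht0]

variable [Fact (0 < p)]

lemma exists_norm_lt_and_lt_norm_add {ρ d : ℝ} (hρ : 0 < ρ) (hρd : ρ + d < p / 2)
    {c : AddCircle p} (hc : d < ‖c‖) : ∃ b : AddCircle p, ‖b‖ < ρ ∧ ρ + d < ‖b + c‖ := by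
  have hp : 0 < p := Fact.out
  obtain ⟨t, rfl, ht⟩ := exists_coe_eq_abs_eq_norm c
  wlog ht0 : 0 ≤ t generalizing t
  · obtain ⟨b, hb, hbt⟩ := this (-t) (by simpa using hc) (by simpa using ht) (by linarith)
    exact ⟨-b, by rwa [norm_neg], by rwa [← norm_neg, neg_add, neg_neg, ← AddCircle.coe_neg]⟩
  have htp : t ≤ p / 2 := by
    have := AddCircle.norm_le_half_period p hp.ne' (x := (t : AddCircle p))
    rwa [← ht, abs_of_nonneg ht0, abs_of_pos hp] at this
  rw [← ht, abs_of_nonneg ht0] at hc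
  obtain ⟨r, hr, hrρ⟩ : ∃ r, max 0 (ρ + d - t) < r ∧ r < ρ :=
    exists_between (max_lt hρ (by linarith))
  obtain ⟨hr0, hrd⟩ := max_lt_iff.1 hr
  have hs0 : 0 ≤ min r (p / 2 - t) := le_min hr0.le (by linarith)
  have hst : min r (p / 2 - t) + t = min (r + t) (p / 2) := by
    rw [← min_add_add_right, sub_add_cancel]
  have hstp : |min r (p / 2 - t) + t| ≤ |p| / 2 := by
    rw [abs_of_nonneg (by positivity), abs_of_pos hp, hst]
    exact min_le_right _ _
  refine ⟨(min r (p / 2 - t) : ℝ), ?_, ?_⟩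
  · calc ‖((min r (p / 2 - t) : ℝ) : AddCircle p)‖ ≤ |min r (p / 2 - t)| :=
          QuotientAddGroup.norm_mk_le_norm
      _ ≤ r := by rw [abs_of_nonneg hs0]; exact min_le_left _ _
      _ < ρ := hrρ
  · rw [← AddCircle.coe_add, (AddCircle.norm_coe_eq_abs_iff p hp.ne').2 hstp,
      abs_of_nonneg (by positivity), hst]
    exact lt_min (by linarith) hρd

lemma exists_ge_norm_zsmul_sub_lt {x : AddCircle p} (hx : x ≠ 0) (c : AddCircle p) (K : ℤ) :
    ∃ n : ℤ, K ≤ n ∧ ‖n • x - c‖ < ‖x‖ := by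
  obtain ⟨n, hn⟩ := exists_norm_zsmul_sub_lt hx c
  have hcl : MapClusterPt (n • x) atTop (· • x : ℤ → AddCircle p) :=
    mapClusterPt_atTop_zsmul_iff_nsmul.2 (mapClusterPt_self_zsmul_atTop_nsmul x n)
  have hnear : ∀ᶠ y in 𝓝 (n • x), ‖y - c‖ < ‖x‖ :=
    ContinuousAt.eventually_lt (by fun_prop) continuousAt_const hn
  exact frequently_atTop.1 (hcl.frequently hnear) K

lemma exists_tendsto_zsmul {l : Filter ℤ} [l.NeBot] (hl : l ≤ atTop) {θ : ℤ → AddCircle p}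
    (hθ : Tendsto θ l (𝓝 0)) (hθ0 : ∀ᶠ u in l, θ u ≠ 0) (c : AddCircle p) :
    ∃ n : ℤ → ℤ, Tendsto n l atTop ∧ Tendsto (fun u ↦ n u • θ u) l (𝓝 c) := by
  obtain ⟨n, hn⟩ := (hθ0.mono fun u hu ↦ exists_ge_norm_zsmul_sub_lt hu c u).choice
  refine ⟨n, tendsto_atTop_mono' l (hn.mono fun _ h ↦ h.1) hl, ?_⟩
  rw [tendsto_iff_norm_sub_tendsto_zero]
  exact squeeze_zero' (.of_forall fun _ ↦ norm_nonneg _) (hn.mono fun _ h ↦ h.2.le)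
    (by simpa using hθ.norm)

variable {E : Type*} [AddCommGroup E] [TopologicalSpace E] [IsTopologicalAddGroup E]
  [CompactSpace E] {a : AddCircle p} {e : E} {χ : E →ₜ+ AddCircle p}

lemma mapClusterPt_bilinear (ha : addOrderOf a = 0) (hχ : χ e = a) (c : AddCircle p) :
    MapClusterPt ((0, 0), c) (atTop ×ˢ atTop)
      fun k : ℤ × ℤ ↦ ((k.1 • e, k.2 • e), k.2 • (2 * k.1) • a) := by
  obtain ⟨U, hU, hUe⟩ := mapClusterPt_iff_ultrafilter.1
    (mapClusterPt_atTop_zsmul_iff_nsmul.2 (mapClusterPt_zero_atTop_nsmul e))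
  have hθ : Tendsto (fun u : ℤ ↦ (2 * u) • a) U (𝓝 0) := by
    simpa [Function.comp_def, hχ, mul_smul] using
      (((map_continuous χ).tendsto 0).comp hUe).const_smul (2 : ℤ)
  have hθ0 : ∀ᶠ u : ℤ in U, (2 * u) • a ≠ 0 := by
    filter_upwards [hU (eventually_gt_atTop 0)] with u hu
    rw [Ne, ← addOrderOf_dvd_iff_zsmul_eq_zero, ha]
    simpa using hu.ne'
  obtain ⟨n, hn, hnθ⟩ := exists_tendsto_zsmul hU hθ hθ0 c
  -- `n u • e` need not tend to `0`, but the differences `(n u - n w) • e` do, letting first `u` and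
  -- then `w` run along `U`, while `n w • θ u → 0` for fixed `w`.
  obtain ⟨x, hx⟩ := exists_tendsto_ultrafilter U fun u ↦ n u • e
  have hcluster (w : ℤ) : MapClusterPt ((0, x - n w • e), c) (atTop ×ˢ atTop)
      fun k : ℤ × ℤ ↦ ((k.1 • e, k.2 • e), k.2 • (2 * k.1) • a) := by
    refine .of_comp (φ := fun u ↦ (u, n u - n w)) (p := U)
      (.prodMk hU ((tendsto_atTop_add_const_right _ (-n w) hn).congr fun _ ↦ rfl)) ?_
    refine Tendsto.mapClusterPt (.prodMk_nhds (.prodMk_nhds hUe ?_) ?_)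
    · simpa only [sub_smul] using! hx.sub_const _
    · simpa [sub_smul] using! hnθ.sub (hθ.const_smul (n w))
  have hcl : IsClosed {q : (E × E) × AddCircle p | MapClusterPt q (atTop ×ˢ atTop)
      fun k : ℤ × ℤ ↦ ((k.1 • e, k.2 • e), k.2 • (2 * k.1) • a)} := isClosed_setOfPred_clusterPt
  have hlim : Tendsto (fun w ↦ (((0, x - n w • e), c) : (E × E) × AddCircle p)) U
      (𝓝 ((0, 0), c)) := by
    simpa using (tendsto_const_nhds.prodMk_nhds (hx.const_sub x)).prodMk_nhds tendsto_const_nhds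
  exact (hcl.mem_of_tendsto hlim (.of_forall hcluster) :)

lemma returnLimits_eq_univ (ha : addOrderOf a = 0) (hχ : χ e = a) :
    returnLimits a e = univ := by
  refine eq_univ_of_forall fun c ↦ ?_
  obtain ⟨U, hU, hUc⟩ := mapClusterPt_iff_ultrafilter.1 (mapClusterPt_bilinear ha hχ c)
  simp only [nhds_prod_eq, tendsto_prod_iff'] at hUc
  obtain ⟨⟨h₁, h₂⟩, h₁₂⟩ := hUc
  obtain ⟨b₁, hb₁⟩ := exists_tendsto_ultrafilter U fun k ↦ k.1 ^ 2 • a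
  obtain ⟨b₂, hb₂⟩ := exists_tendsto_ultrafilter U fun k ↦ k.2 ^ 2 • a
  have mem₁ : b₁ ∈ returnLimits a e :=
    .of_comp (tendsto_fst.mono_left hU) (h₁.prodMk_nhds hb₁).mapClusterPt
  have mem₂ : b₂ ∈ returnLimits a e :=
    .of_comp (tendsto_snd.mono_left hU) (h₂.prodMk_nhds hb₂).mapClusterPt
  have hsum : b₁ + b₂ + c ∈ returnLimits a e := by
    refine .of_comp (φ := fun k : ℤ × ℤ ↦ k.1 + k.2) (p := U)
      ((tendsto_fst.mono_left hU).atTop_add_atTop (tendsto_snd.mono_left hU)) ?_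
    refine Tendsto.mapClusterPt (.prodMk_nhds ?_ ?_)
    · simpa [add_smul] using! h₁.add h₂
    · refine ((hb₁.add hb₂).add h₁₂).congr fun k ↦ ?_
      simp only
      module
  simpa only [neg_add_cancel_left] using add_mem_returnLimits hχ
    (neg_mem_returnLimits hχ (add_mem_returnLimits hχ mem₁ mem₂)) hsum

theorem mapClusterPt_quadOrbit (ha : addOrderOf a = 0) (e : E) (r : ℤ) (b : AddCircle p) :
    MapClusterPt (r • e, b) atTop (quadOrbit a e) := by
  let χ : AddCircle p × E →ₜ+ AddCircle p := ContinuousAddMonoidHom.fst _ _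
  have hχ : χ (a, e) = a := rfl
  have hb : b - r ^ 2 • a ∈ returnLimits a (a, e) := returnLimits_eq_univ ha hχ ▸ mem_univ _
  have := (mapClusterPt_quadOrbit_add hχ hb r).continuousAt_comp
    (f := fun q : (AddCircle p × E) × AddCircle p ↦ (q.1.2, q.2)) (by fun_prop)
  simpa [quadOrbit, Function.comp_def] using! this

theorem mapClusterPt_quadOrbit_of_denseRange (ha : addOrderOf a = 0)
    (he : DenseRange (· • e : ℤ → E)) (x : E) (b : AddCircle p) :
    MapClusterPt (x, b) atTop (quadOrbit a e) := by
  have hcl : IsClosed {y | MapClusterPt (y, b) atTop (quadOrbit a e)} :=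
    isClosed_setOfPred_clusterPt.preimage (Continuous.prodMk_left b)
  exact he.induction_on x hcl fun r ↦ mapClusterPt_quadOrbit ha e r b

end Density

section Definability

variable {p : ℝ}

/-- The function `g`: the indicator of `{n | ‖n² • a‖ < ρ}`, with `a` a point of a circle. -/
noncomputable def quadIndicator (a : AddCircle p) (ρ : ℝ) (n : ℤ) : ℤ :=
  if ‖n ^ 2 • a‖ < ρ then 1 else 0

/-- The condition on `q = (x, y)` that replacing `n² • a` by `n² • a + n • x + y` does not change
membership in the ball of radius `ρ` for `0 < n ≤ N`. As `(n + m)² = n² + 2nm + m²`, it expresses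
`μ(m, N)` for the phase `q = (m • 2 • a, m² • a)`. -/
def PhaseStable (a : AddCircle p) (ρ : ℝ) (N : ℤ) (q : AddCircle p × AddCircle p) : Prop :=
  ∀ n : ℤ, 0 < n → n ≤ N → (‖n ^ 2 • a + n • q.1 + q.2‖ < ρ ↔ ‖n ^ 2 • a‖ < ρ)

variable {a : AddCircle p} {ρ : ℝ}

lemma quadIndicator_eq_one_iff {n : ℤ} : quadIndicator a ρ n = 1 ↔ ‖n ^ 2 • a‖ < ρ := by
  simp [quadIndicator]

lemma quadIndicator_eq_iff {m n : ℤ} :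
    quadIndicator a ρ m = quadIndicator a ρ n ↔ (‖m ^ 2 • a‖ < ρ ↔ ‖n ^ 2 • a‖ < ρ) := by
  by_cases hm : ‖m ^ 2 • a‖ < ρ <;> by_cases hn : ‖n ^ 2 • a‖ < ρ <;>
    simp [quadIndicator, hm, hn]

lemma mu_quadIndicator_iff {m N : ℤ} :
    mu (quadIndicator a ρ) m N ↔ PhaseStable a ρ N (quadOrbit a (2 • a) m) := by
  refine forall₃_congr fun n _ _ ↦ ?_
  have : (n + m) ^ 2 • a = n ^ 2 • a + n • m • 2 • a + m ^ 2 • a := by module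
  rw [quadIndicator_eq_iff, this, quadOrbit]

lemma add_add_sq_zsmul (h m n : ℤ) : (h + m + n) ^ 2 • a =
    h ^ 2 • a + m ^ 2 • a + m • h • 2 • a + (h + m) • n • 2 • a + n ^ 2 • a := by
  module

lemma eventually_phaseStable (hne : ∀ n : ℤ, 0 < n → ‖n ^ 2 • a‖ ≠ ρ) (N : ℤ) :
    ∀ᶠ q in 𝓝 0, PhaseStable a ρ N q := by
  have hnear : ∀ᶠ q : AddCircle p × AddCircle p in 𝓝 0, ∀ n ∈ Ioc (0 : ℤ) N,
      (‖n ^ 2 • a + n • q.1 + q.2‖ < ρ ↔ ‖n ^ 2 • a‖ < ρ) := by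
    refine (eventually_all_finite (finite_Ioc _ _)).2 fun n hn ↦ ?_
    have hcont : Tendsto (fun q : AddCircle p × AddCircle p ↦ ‖n ^ 2 • a + n • q.1 + q.2‖)
        (𝓝 0) (𝓝 ‖n ^ 2 • a‖) := Continuous.tendsto' (by fun_prop) _ _ (by simp)
    obtain h | h := (hne n hn.1).lt_or_gt
    · filter_upwards [hcont.eventually_lt_const h] with q hq
      exact iff_of_true hq h
    · filter_upwards [hcont.eventually_const_lt h] with q hq
      exact iff_of_false hq.not_gt h.not_gt
  exact hnear.mono fun q hq n hn hnN ↦ hq n ⟨hn, hnN⟩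

variable [Fact (0 < p)]

lemma exists_pos_lt_norm_add (ha : addOrderOf a = 0) (hρ : 0 < ρ) (hρp : ρ < p / 2)
    {q : AddCircle p × AddCircle p} (hq : q ≠ 0) :
    ∃ n : ℤ, 0 < n ∧ ‖n ^ 2 • a‖ < ρ ∧ ρ < ‖n ^ 2 • a + n • q.1 + q.2‖ := by
  obtain ⟨r, hr⟩ : ∃ r : ℤ, r • q.1 + q.2 ≠ 0 := by
    by_contra! h
    have h₂ : q.2 = 0 := by simpa using h 0
    have h₁ : q.1 = 0 := by simpa [h₂] using h 1
    exact hq (Prod.ext h₁ h₂)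
  obtain ⟨b, hb, hbr⟩ :=
    exists_norm_lt_and_lt_norm_add hρ (by rwa [add_zero]) (norm_pos_iff.2 hr)
  have hnear : ∀ᶠ z in 𝓝 (r • q.1, b), ‖z.2‖ < ρ ∧ ρ < ‖z.2 + z.1 + q.2‖ :=
    .and (ContinuousAt.eventually_lt (by fun_prop) (by fun_prop) hb)
      (ContinuousAt.eventually_lt (by fun_prop) (by fun_prop) (by simpa [add_assoc] using hbr))
  exact frequently_atTop'.1 ((mapClusterPt_quadOrbit ha q.1 r b).frequently hnear) 0

lemma exists_forall_phaseStable_imp (ha : addOrderOf a = 0) (hρ : 0 < ρ) (hρp : ρ < p / 2)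
    {P : AddCircle p × AddCircle p → Prop} (hP : ∀ᶠ q in 𝓝 0, P q) :
    ∃ N : ℤ, 0 < N ∧ ∀ q, PhaseStable a ρ N q → P q := by
  let V (N : ℕ) : Set (AddCircle p × AddCircle p) :=
    {q | ∀ n : ℤ, 0 < n → n ≤ N → ‖n ^ 2 • a‖ < ρ → ‖n ^ 2 • a + n • q.1 + q.2‖ ≤ ρ}
  have hclosed : ∀ N, IsClosed (V N) := fun N ↦ by
    simp only [V, ofPred_forall]
    exact isClosed_iInter fun n ↦ isClosed_iInter fun _ ↦ isClosed_iInter fun _ ↦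
      isClosed_iInter fun _ ↦ isClosed_le (by fun_prop) continuous_const
  have hanti : Antitone V := fun N N' hN q hq n hn hnN ↦ hq n hn (hnN.trans (mod_cast hN))
  have hzero : ∀ q ∈ ⋂ N, V N, q = 0 := fun q hq ↦ by
    by_contra hq0
    obtain ⟨n, hn, hnρ, hnq⟩ := exists_pos_lt_norm_add ha hρ hρp hq0
    exact hnq.not_ge (mem_iInter.1 hq n.toNat n hn (Int.self_le_toNat n) hnρ)
  obtain ⟨N, hN⟩ := exists_subset_nhds_of_compactSpace hanti.directed_ge hclosed (U := {q | P q})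
    fun q hq ↦ hzero q hq ▸ hP
  exact ⟨N + 1, by positivity, fun q hq ↦ hN fun n hn hnN hnρ ↦
    ((hq n hn (hnN.trans (lt_add_one _).le)).2 hnρ).le⟩

lemma exists_forall_lam_imp (ha : addOrderOf a = 0) (hρ : 0 < ρ) (hρp : ρ < p / 2)
    {P : AddCircle p → Prop} (hP : ∀ᶠ x in 𝓝 0, P x) :
    ∃ N : ℤ, 0 < N ∧ ∀ m, lam (quadIndicator a ρ) m N → P (m • 2 • a) := by
  obtain ⟨U, hU, hUP⟩ := exists_nhds_half_neg hP
  obtain ⟨N, hN, hstable⟩ := exists_forall_phaseStable_imp ha hρ hρp (P := fun q ↦ q.1 ∈ U)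
    (continuous_fst.tendsto' 0 0 rfl hU)
  refine ⟨N, hN, fun m ⟨n, _, hn, hnm⟩ ↦ ?_⟩
  have : (n + m) • 2 • a - n • 2 • a = m • 2 • a := by module
  exact this ▸ hUP _ (hstable _ (mu_quadIndicator_iff.1 hnm)) _
    (hstable _ (mu_quadIndicator_iff.1 hn))

lemma eventually_lam (ha : addOrderOf a = 0) (hne : ∀ n : ℤ, 0 < n → ‖n ^ 2 • a‖ ≠ ρ) (L : ℤ) :
    ∀ᶠ x in 𝓝 0, ∀ m : ℤ, m • a = x → lam (quadIndicator a ρ) m L := by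
  have hstable {f : AddCircle p → AddCircle p} (hf : Tendsto f (𝓝 0) (𝓝 0)) :
      ∀ᶠ x in 𝓝 0, ∀ᶠ q in 𝓝 (f x, 0), PhaseStable a ρ L q :=
    (hf.prodMk_nhds tendsto_const_nhds).eventually (eventually_phaseStable hne L).eventually_nhds
  filter_upwards [hstable (continuous_neg.tendsto' 0 0 neg_zero), hstable tendsto_id]
    with x hneg hpos m hx
  have hdense : DenseRange (· • 2 • a : ℤ → AddCircle p) := by
    rw [AddCircle.denseRange_zsmul_iff, addOrderOf_eq_zero_iff]
    exact fun h ↦ addOrderOf_eq_zero_iff.1 ha (h.of_nsmul two_ne_zero)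
  -- If the phase of `n` is close to `(-x, 0)`, then that of `n + m` is close to `(x, 0)`.
  have hshift : Tendsto (fun q ↦ (q.1 + m • 2 • a, q.2 + m • q.1 + m ^ 2 • a))
      (𝓝 (-x, 0)) (𝓝 (x, 0)) := by
    subst hx
    exact Continuous.tendsto' (by fun_prop) _ _
      (Prod.ext (by simp only; module) (by simp only; module))
  obtain ⟨n, hn0, hn, hnm⟩ := frequently_atTop'.1
    ((mapClusterPt_quadOrbit_of_denseRange ha hdense (-x) 0).frequently
      (hneg.and (hshift.eventually hpos))) 0
  have hphase : quadOrbit a (2 • a) (n + m) =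
      (n • 2 • a + m • 2 • a, n ^ 2 • a + m • n • 2 • a + m ^ 2 • a) :=
    Prod.ext (add_smul _ _ _) (by simp only [quadOrbit]; module)
  exact ⟨n, hn0, mu_quadIndicator_iff.2 hn, mu_quadIndicator_iff.2 (hphase ▸ hnm)⟩

lemma exists_pos_lam_and_lt_norm (ha : addOrderOf a = 0)
    (hne : ∀ n : ℤ, 0 < n → ‖n ^ 2 • a‖ ≠ ρ) {b : AddCircle p} (hb : ‖b‖ < ρ) {δ : ℝ} {m : ℤ}
    (hbm : δ < ‖b + m ^ 2 • a‖) (M : ℤ) :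
    ∃ h : ℤ, 0 < h ∧ ‖h ^ 2 • a‖ < ρ ∧ δ < ‖h ^ 2 • a + m ^ 2 • a + m • h • 2 • a‖ ∧
      lam (quadIndicator a ρ) h M := by
  have hnear : ∀ᶠ q : AddCircle p × AddCircle p in 𝓝 (0, b), ‖q.2‖ < ρ ∧
      δ < ‖q.2 + m ^ 2 • a + m • 2 • q.1‖ ∧
      ∀ h : ℤ, h • a = q.1 → lam (quadIndicator a ρ) h M :=
    .and (ContinuousAt.eventually_lt (by fun_prop) (by fun_prop) hb) <|
      .and (ContinuousAt.eventually_lt (by fun_prop) (by fun_prop) (by simpa using hbm)) <|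
        (eventually_lam ha hne M).prod_inl_nhds b
  have hcl : MapClusterPt (0, b) atTop (quadOrbit a a) := by
    simpa using mapClusterPt_quadOrbit ha a 0 b
  obtain ⟨h, h0, hρ, hδ, hlam⟩ := frequently_atTop'.1 (hcl.frequently hnear) 0
  exact ⟨h, h0, hρ, by rwa [smul_comm h 2 a], hlam h rfl⟩

lemma exists_forall_kap_imp (ha : addOrderOf a = 0) (hρ : 0 < ρ) (hρp : ρ < p / 2)
    (hne : ∀ n : ℤ, 0 < n → ‖n ^ 2 • a‖ ≠ ρ) {ε : ℝ} (hε : 0 < ε) :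
    ∃ N : ℤ, 0 < N ∧ ∀ m, kap (quadIndicator a ρ) m N → ‖m ^ 2 • a‖ < ε := by
  obtain ⟨d, hd, hdmin⟩ := exists_between (lt_min hε (sub_pos.2 hρp))
  obtain ⟨hdε, hdρ⟩ := lt_min_iff.1 hdmin
  obtain ⟨N, hN, hstable⟩ := exists_forall_phaseStable_imp ha hρ hρp (P := fun q ↦ ‖q.2‖ < d)
    (ContinuousAt.eventually_lt (by fun_prop) (by fun_prop) (by simpa using hd))
  refine ⟨N, hN, fun m ⟨M, _, hkap⟩ ↦ ?_⟩
  by_contra! hm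
  obtain ⟨b, hb, hbm⟩ := exists_norm_lt_and_lt_norm_add hρ (by linarith) (hdε.trans_le hm)
  obtain ⟨h, h0, hhρ, hhm, hlam⟩ := exists_pos_lam_and_lt_norm ha hne hb hbm M
  obtain ⟨L, hL, hlamL⟩ := exists_forall_lam_imp ha hρ hρp
    (P := fun x ↦ ρ + d < ‖h ^ 2 • a + m ^ 2 • a + m • h • 2 • a + (h + m) • x‖)
    (ContinuousAt.eventually_lt (by fun_prop) (by fun_prop) (by simpa using hhm))
  obtain ⟨n, _, hlamn, hmun, hn⟩ := hkap h h0 (quadIndicator_eq_one_iff.2 hhρ) hlam L hL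
  have hnd : ‖n ^ 2 • a‖ < d :=
    hstable (quadOrbit a (2 • a) n) (mu_quadIndicator_iff.1 hmun)
  have hlt : ‖(h + m + n) ^ 2 • a‖ < ρ := quadIndicator_eq_one_iff.1 hn
  have hgt : ρ + d < ‖h ^ 2 • a + m ^ 2 • a + m • h • 2 • a + (h + m) • n • 2 • a‖ :=
    hlamL n hlamn
  rw [← sub_eq_of_eq_add (add_add_sq_zsmul h m n)] at hgt
  have htri := norm_sub_le ((h + m + n) ^ 2 • a) (n ^ 2 • a)
  linarith

lemma exists_forall_norm_lt_imp_kap (ha : addOrderOf a = 0) (hρ : 0 < ρ) (hρp : ρ < p / 2)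
    (hne : ∀ n : ℤ, 0 < n → ‖n ^ 2 • a‖ ≠ ρ) (N : ℤ) :
    ∃ ε : ℝ, 0 < ε ∧ ∀ m : ℤ, ‖m ^ 2 • a‖ < ε → kap (quadIndicator a ρ) m N := by
  have hstable : ∀ᶠ t : AddCircle p in 𝓝 0, ∀ᶠ q in 𝓝 (0, t), PhaseStable a ρ N q :=
    ((Continuous.prodMk_right 0).tendsto' 0 0 rfl).eventually
      (eventually_phaseStable hne N).eventually_nhds
  obtain ⟨ε, hε, hball⟩ := Metric.eventually_nhds_iff.1 hstable
  refine ⟨ε, hε, fun m hm ↦ ?_⟩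
  obtain ⟨M, hM, hlamM⟩ := exists_forall_lam_imp ha hρ hρp (P := fun x ↦ ‖m ^ 2 • a + m • x‖ < ε)
    (ContinuousAt.eventually_lt (by fun_prop) (by fun_prop) (by simpa using hm))
  refine ⟨M, hM, fun h _ hh hlam L _ ↦ ?_⟩
  obtain ⟨t, ht⟩ : ∃ t, t = -(m ^ 2 • a + m • h • 2 • a) := ⟨_, rfl⟩
  have htε : dist t 0 < ε := by rw [dist_zero_right, ht, norm_neg]; exact hlamM h hlam
  have hcl : MapClusterPt (0, t) atTop (quadOrbit a a) := by
    simpa using mapClusterPt_quadOrbit ha a 0 t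
  have hlamL : ∀ᶠ q in 𝓝 ((0 : AddCircle p), t), ∀ n : ℤ, n • a = q.1 →
      lam (quadIndicator a ρ) n L :=
    (eventually_lam ha hne L).prod_inl_nhds t
  have hmuN : ∀ᶠ q in 𝓝 ((0 : AddCircle p), t), PhaseStable a ρ N (2 • q.1, q.2) :=
    (Continuous.tendsto' (by fun_prop) _ _ (by simp)).eventually (hball htε)
  have hg : ∀ᶠ q in 𝓝 ((0 : AddCircle p), t),
      ‖h ^ 2 • a + m ^ 2 • a + m • h • 2 • a + (h + m) • 2 • q.1 + q.2‖ < ρ :=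
    ContinuousAt.eventually_lt (by fun_prop) (by fun_prop)
      (by simpa [ht, add_assoc] using quadIndicator_eq_one_iff.1 hh)
  obtain ⟨n, hn, hnL, hnN, hng⟩ :=
    frequently_atTop'.1 (hcl.frequently (hlamL.and (hmuN.and hg))) 0
  refine ⟨n, hn, hnL n rfl, mu_quadIndicator_iff.2 ?_, quadIndicator_eq_one_iff.2 ?_⟩
  · rwa [quadOrbit, smul_comm n 2 a]
  · rwa [add_add_sq_zsmul, smul_comm n 2 a]

theorem hasBasis_kap (ha : addOrderOf a = 0) (hρ : 0 < ρ) (hρp : ρ < p / 2)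
    (hne : ∀ n : ℤ, 0 < n → ‖n ^ 2 • a‖ ≠ ρ) :
    (comap (fun m : ℤ ↦ m ^ 2 • a) (𝓝 0)).HasBasis (fun N : ℤ ↦ 0 < N)
      fun N ↦ {m | kap (quadIndicator a ρ) m N} :=
  (NormedAddGroup.nhds_zero_basis_norm_lt.comap _).to_hasBasis
    (fun _ hε ↦ exists_forall_kap_imp ha hρ hρp hne hε)
    (fun N _ ↦ exists_forall_norm_lt_imp_kap ha hρ hρp hne N)

end Definability

lemma norm_sq_zsmul_coe (α : ℝ) (n : ℤ) :
    ‖n ^ 2 • (α : UnitAddCircle)‖ = |α * n ^ 2 - round (α * n ^ 2)| := by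
  rw [← AddCircle.coe_zsmul, UnitAddCircle.norm_eq, zsmul_eq_mul, mul_comm]
  push_cast
  rfl

lemma abs_mul_sq_sub_round_ne {α ρ : ℝ} (hα : ¬ ∃ q r : ℚ, α = (q : ℝ) + (r : ℝ) * ρ) {n : ℤ}
    (hn : n ≠ 0) : |α * n ^ 2 - round (α * n ^ 2)| ≠ ρ := by
  intro h
  have hn' : (n : ℝ) ≠ 0 := mod_cast hn
  set k := round (α * n ^ 2)
  obtain h | h := eq_or_eq_neg_of_abs_eq h
  · refine hα ⟨k / n ^ 2, 1 / n ^ 2, ?_⟩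
    push_cast
    field_simp
    linarith
  · refine hα ⟨k / n ^ 2, -1 / n ^ 2, ?_⟩
    push_cast
    field_simp
    linarith

theorem statement_general (α ρ : ℝ) (hρ0 : 0 < ρ) (hρ2 : ρ < 1 / 2) (hα : Irrational α)
    (hne : ∀ n : ℤ, 0 < n → |α * n ^ 2 - round (α * n ^ 2)| ≠ ρ)
    (g : ℤ → ℤ)
    (hg : ∀ n : ℤ, g n = if |α * n ^ 2 - round (α * n ^ 2)| < ρ then 1 else 0) :
    (∀ ε : ℝ, 0 < ε → ∃ N : ℤ, 0 < N ∧ ∀ m : ℤ, kap g m N →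
        |α * m ^ 2 - round (α * m ^ 2)| < ε) ∧
      (∀ N : ℤ, 0 < N → ∃ ε : ℝ, 0 < ε ∧ ∀ m : ℤ,
        |α * m ^ 2 - round (α * m ^ 2)| < ε → kap g m N) := by
  have ha : addOrderOf (α : UnitAddCircle) = 0 :=
    AddCircle.denseRange_zsmul_iff.1 (AddCircle.denseRange_zsmul_coe_iff.2 (by rwa [div_one]))
  obtain rfl : g = quadIndicator (α : UnitAddCircle) ρ :=
    funext fun n ↦ by simp only [hg, quadIndicator, norm_sq_zsmul_coe]
  simp only [← norm_sq_zsmul_coe] at hne ⊢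
  have hnorm := (NormedAddGroup.nhds_zero_basis_norm_lt (E := UnitAddCircle)).comap
    fun m : ℤ ↦ m ^ 2 • (α : UnitAddCircle)
  have hkap := hasBasis_kap ha hρ0 hρ2 hne
  exact ⟨(hkap.le_basis_iff hnorm).1 le_rfl, (hnorm.le_basis_iff hkap).1 le_rfl⟩

open scoped Classical in
theorem statement (α ρ : ℝ) (hρ0 : 0 < ρ) (hρ4 : ρ < 1 / 4)
    (hα : ¬ ∃ q r : ℚ, α = (q : ℝ) + (r : ℝ) * ρ)
    (g : ℤ → ℤ)
    (hg : ∀ n : ℤ, g n = if |α * n ^ 2 - round (α * n ^ 2)| < ρ then 1 else 0) :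
    (∀ ε : ℝ, 0 < ε → ∃ N : ℤ, 0 < N ∧ ∀ m : ℤ, 0 < m → kap g m N →
        |α * m ^ 2 - round (α * m ^ 2)| < ε) ∧
      (∀ N : ℤ, 0 < N → ∃ ε : ℝ, 0 < ε ∧ ∀ m : ℤ, 0 < m →
        |α * m ^ 2 - round (α * m ^ 2)| < ε → kap g m N) := by
  obtain ⟨hkap, hnorm⟩ := statement_general α ρ hρ0 (by linarith)
    (fun ⟨q, hq⟩ ↦ hα ⟨q, 0, by simp [hq]⟩) (fun n hn ↦ abs_mul_sq_sub_round_ne hα hn.ne') g hg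
  exact ⟨fun ε hε ↦ (hkap ε hε).imp (by tauto), fun N hN ↦ (hnorm N hN).imp (by tauto)⟩

end Stmt16
end

section
/- The following two assertions hold: (a) for every ε > 0 there exists a positive integer N such that for all positive integers m, m̃, if ν(m, m̃, N) holds then ‖α·(m² − m̃²)‖ < ε; (b) for every positive integer N there exists ε > 0 such that for all positive integers m, m̃, if ‖α·(m² − m̃²)‖ < ε then ν(m, m̃, N) holds. -/
/-!
STATEMENT 17: ν(m, m̃, N) characterises smallness of ‖α·(m² − m̃²)‖.
-/

namespace Stmt17

/-- `μ(m, N)`: `g(n + m) = g(n)` for every positive integer `n ≤ N`. -/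
def mu (g : ℤ → ℤ) (m N : ℤ) : Prop :=
  ∀ n : ℤ, 0 < n → n ≤ N → g (n + m) = g n

/-- `λ(m, N)`: there is a positive integer `n` with `μ(n, N)` and `μ(n + m, N)`. -/
def lam (g : ℤ → ℤ) (m N : ℤ) : Prop :=
  ∃ n : ℤ, 0 < n ∧ mu g n N ∧ mu g (n + m) N

/-- `κ(m, N)`. -/
def kap (g : ℤ → ℤ) (m N : ℤ) : Prop :=
  ∃ M : ℤ, 0 < M ∧ ∀ h : ℤ, 0 < h → g h = 1 → lam g h M →
    ∀ L : ℤ, 0 < L → ∃ n : ℤ, 0 < n ∧ lam g n L ∧ mu g n N ∧ g (h + m + n) = 1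

/-- `ν(m, m̃, N)`. -/
def nu (g : ℤ → ℤ) (m mt N : ℤ) : Prop :=
  ∃ L : ℤ, 0 < L ∧ ∀ n : ℤ, 0 < n → lam g n L → kap g (m + n) L → kap g (mt + n) N

/-- `δ(m, m̃)`. -/
def del (g : ℤ → ℤ) (m mt : ℤ) : Prop :=
  ∀ N : ℤ, 0 < N → ∃ L : ℤ, 0 < L ∧ ∀ n : ℤ, 0 < n →
    nu g (m + n) m L → kap g n L → nu g (mt + n) mt N

/-!
Put `a = α mod 1`. The points `(2na, n²a)` with `n > 0` form a dense half-orbit of a skew product of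
the torus. Jointly with a rotation by `θ`, the closure of this orbit still contains the whole fibre
`{(2na, y, nθ)}` over each `n ≥ 0`. Hence conditions on `g` can be tested at torus points.

* An arc of radius `ρ < 1/4` that is translated into itself is not translated at all. Therefore
  `μ(m, N)` for large `N` forces `(2ma, m²a) ≈ 0`; conversely, `g` on `[1, N]` is stable under small
  shifts because `n²a` never lies on the boundary of the arc.
* `λ(m, N)` compares two points with `μ` and so forces only `2ma ≈ 0`.
* `κ(m, N)` moves the arc by `m²a` along points `h`, `n` with small first coordinate and so detects
  `m²a ≈ 0`.
* `ν(m, m̃, N)` compares `(m + n)²a` with `(m̃ + n)²a` for `2na ≈ 0`, where the cross terms are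
  negligible, and so detects `(m² - m̃²)a ≈ 0`.
-/


open Filter Set Topology

section CompactGroup

variable {G : Type*} [AddGroup G] [TopologicalSpace G] [IsTopologicalAddGroup G] [CompactSpace G]

lemma neg_mem_of_isClosed_of_add_mem {s : Set G} (hs : IsClosed s)
    (hadd : ∀ x ∈ s, ∀ y ∈ s, x + y ∈ s) {x : G} (hx : x ∈ s) : -x ∈ s := by
  have hcluster : MapClusterPt (-x) atTop (· • x : ℕ → G) := by
    simpa only [neg_one_zsmul] using mapClusterPt_self_zsmul_atTop_nsmul x (-1)
  refine hs.mem_of_mapClusterPt hcluster ((eventually_ge_atTop 1).mono fun k hk ↦ ?_)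
  induction k, hk using Nat.le_induction with
  | base => simpa only [one_nsmul] using hx
  | succ k _ ih => simpa only [succ_nsmul] using hadd _ ih _ hx

end CompactGroup

section Circle

lemma exists_zsmul_eq_norm_le (z : UnitAddCircle) {n : ℤ} (hn : 0 < n) :
    ∃ x : UnitAddCircle, n • x = z ∧ ‖x‖ ≤ 1 / n := by
  have hn' : (0 : ℝ) < n := mod_cast hn
  obtain ⟨t, ⟨ht0, ht1⟩, rfl⟩ : z ∈ ((↑) : ℝ → UnitAddCircle) '' Ico 0 (0 + 1) :=
    AddCircle.coe_image_Ico_eq (1 : ℝ) 0 ▸ mem_univ z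
  refine ⟨(t / n : ℝ), ?_, ?_⟩
  · rw [← AddCircle.coe_zsmul, zsmul_eq_mul, mul_div_cancel₀ t hn'.ne']
  · calc ‖((t / n : ℝ) : UnitAddCircle)‖ ≤ ‖t / n‖ := QuotientAddGroup.norm_mk_le_norm
      _ = t / n := Real.norm_of_nonneg (by positivity)
      _ ≤ 1 / n := by gcongr; linarith

lemma exists_tendsto_zero_zsmul_eq (z : ℤ → UnitAddCircle) :
    ∃ x : ℤ → UnitAddCircle, Tendsto x atTop (𝓝 0) ∧ ∀ n > 0, n • x n = z n := by
  have hex (n : ℤ) : ∃ x : UnitAddCircle, 0 < n → n • x = z n ∧ ‖x‖ ≤ 1 / n := by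
    by_cases hn : 0 < n
    · exact (exists_zsmul_eq_norm_le (z n) hn).imp fun x hx _ ↦ hx
    · exact ⟨0, fun h ↦ absurd h hn⟩
  choose x hx using hex
  refine ⟨x, squeeze_zero_norm' ((eventually_gt_atTop 0).mono fun n hn ↦ (hx n hn).2) ?_,
    fun n hn ↦ (hx n hn).1⟩
  exact tendsto_const_nhds.div_atTop tendsto_intCast_atTop_atTop

lemma norm_le_of_forall_norm_lt_norm_add_le {c : UnitAddCircle} {r δ : ℝ} (hr : 0 < r)
    (hδ : 4 * r + 2 * δ < 1) (h : ∀ y : UnitAddCircle, ‖y‖ < r → ‖y + c‖ ≤ r + δ) : ‖c‖ ≤ δ := by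
  obtain ⟨c, rfl⟩ := QuotientAddGroup.mk_surjective c
  have hIoo : ∀ t ∈ Ioo (-r) r, ‖((t + c : ℝ) : UnitAddCircle)‖ ≤ r + δ := fun t ht ↦
    h t (QuotientAddGroup.norm_mk_le_norm.trans_lt (abs_lt.2 ht))
  have hIcc : ∀ t ∈ Icc (-r) r, ‖((t + c : ℝ) : UnitAddCircle)‖ ≤ r + δ := by
    rw [← closure_Ioo (by linarith : -r ≠ r)]
    have hcont : Continuous fun t : ℝ ↦ ‖((t + c : ℝ) : UnitAddCircle)‖ :=
      ((AddCircle.continuous_mk' 1).comp (continuous_add_const c)).norm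
    exact fun t ht ↦ closure_minimal hIoo (isClosed_le hcont continuous_const) ht
  have hright := hIcc r ⟨by linarith, le_rfl⟩
  have hleft := hIcc (-r) ⟨le_rfl, by linarith⟩
  change ‖(c : UnitAddCircle)‖ ≤ δ
  rw [UnitAddCircle.norm_eq] at *
  generalize round (r + c) = k at hright
  generalize round (-r + c) = l at hleft
  rw [abs_le] at hright hleft
  obtain rfl : k = l := by
    have hlt : ((k - l : ℤ) : ℝ) < 1 := by push_cast; linarith
    have hgt : ((-1 : ℤ) : ℝ) < ((k - l : ℤ) : ℝ) := by push_cast; linarith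
    norm_cast at hlt hgt
    omega
  exact (round_le c k).trans (abs_le.2 ⟨by linarith, by linarith⟩)

lemma dense_image_zsmul_Ioi {b : UnitAddCircle} (hb : ¬IsOfFinAddOrder b) :
    Dense ((fun n : ℤ ↦ n • b) '' Ioi 0) := by
  intro x
  have hdense : DenseRange (· • b : ℤ → UnitAddCircle) :=
    AddCircle.denseRange_zsmul_iff.2 (addOrderOf_eq_zero hb)
  have hcluster : MapClusterPt x atTop (· • b : ℤ → UnitAddCircle) :=
    ((mapClusterPt_atTop_nsmul_tfae x b).out 1 3).2 (hdense x)
  exact isClosed_closure.mem_of_mapClusterPt hcluster <|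
    (eventually_gt_atTop 0).mono fun n hn ↦ subset_closure (mem_image_of_mem _ hn)

end Circle

section SkewProduct

/-- The orbit of the origin under the skew product `(x, y) ↦ (x + 2a, y + x + a)` of the torus. -/
def quadOrbit (a : UnitAddCircle) (n : ℤ) : UnitAddCircle × UnitAddCircle :=
  (n • 2 • a, n ^ 2 • a)

/-- The `n`-th iterate of the skew product `(x, y) ↦ (x + 2a, y + x + a)` of the torus. -/
def skewShift (a : UnitAddCircle) (n : ℤ) (w : UnitAddCircle × UnitAddCircle) :
    UnitAddCircle × UnitAddCircle :=
  (w.1 + n • 2 • a, w.2 + n • w.1 + n ^ 2 • a)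

lemma quadOrbit_add (a : UnitAddCircle) (n m : ℤ) :
    quadOrbit a (n + m) = skewShift a n (quadOrbit a m) := by
  ext <;> simp only [quadOrbit, skewShift] <;> module

lemma skewShift_quadOrbit_snd (a : UnitAddCircle) (n m : ℤ) :
    (skewShift a n (quadOrbit a m)).2 = (n + m) ^ 2 • a :=
  (congrArg Prod.snd (quadOrbit_add a n m)).symm

lemma skewShift_eq_add (a : UnitAddCircle) (n : ℤ) (w : UnitAddCircle × UnitAddCircle) :
    skewShift a n w = w + quadOrbit a n + (0, n • w.1) := by
  ext <;> simp only [quadOrbit, skewShift, Prod.fst_add, Prod.snd_add] <;> module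

lemma continuous_skewShift (a : UnitAddCircle) (n : ℤ) : Continuous (skewShift a n) := by
  unfold skewShift
  fun_prop

lemma continuous_skewShift_snd (a : UnitAddCircle) (n : ℤ) :
    Continuous fun w ↦ (skewShift a n w).2 :=
  continuous_snd.comp (continuous_skewShift a n)

variable {A : Type*} [AddCommGroup A] [TopologicalSpace A] {a : UnitAddCircle}

/-- The closure of the positive half-orbit of the origin under the product of the skew product of
the torus defined by `a` and the rotation of `A` by `θ`. -/
def jointOrbitClosure (a : UnitAddCircle) (θ : A) : Set ((UnitAddCircle × UnitAddCircle) × A) :=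
  closure ((fun n : ℤ ↦ (quadOrbit a n, n • θ)) '' Ioi 0)

lemma isClosed_jointOrbitClosure (θ : A) : IsClosed (jointOrbitClosure a θ) := isClosed_closure

lemma mk_mem_jointOrbitClosure (θ : A) {n : ℤ} (hn : 0 < n) :
    (quadOrbit a n, n • θ) ∈ jointOrbitClosure a θ :=
  subset_closure (mem_image_of_mem _ hn)

lemma jointOrbitClosure_subset {θ : A} {s : Set ((UnitAddCircle × UnitAddCircle) × A)}
    (hs : IsClosed s) (h : ∀ n : ℤ, 0 < n → (quadOrbit a n, n • θ) ∈ s) :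
    jointOrbitClosure a θ ⊆ s :=
  closure_minimal (image_subset_iff.2 h) hs

lemma exists_mem_jointOrbitClosure_fst_eq [CompactSpace A] (ha : ¬IsOfFinAddOrder a) (θ : A)
    (x : UnitAddCircle) : ∃ w ∈ jointOrbitClosure a θ, w.1.1 = x := by
  have hclosed : IsClosed ((fun w ↦ w.1.1) '' jointOrbitClosure a θ) :=
    ((isClosed_jointOrbitClosure θ).isCompact.image
      (continuous_fst.comp continuous_fst)).isClosed
  have hb : ¬IsOfFinAddOrder (2 • a) := by simpa using ha
  refine closure_minimal ?_ hclosed (dense_image_zsmul_Ioi hb x)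
  rintro _ ⟨n, hn, rfl⟩
  exact mem_image_of_mem _ (mk_mem_jointOrbitClosure θ hn)

variable [IsTopologicalAddGroup A]

lemma skewShift_mem_jointOrbitClosure {θ : A} {w : (UnitAddCircle × UnitAddCircle) × A}
    (hw : w ∈ jointOrbitClosure a θ) {n : ℤ} (hn : 0 ≤ n) :
    (skewShift a n w.1, w.2 + n • θ) ∈ jointOrbitClosure a θ := by
  have hcont : Continuous fun w : (UnitAddCircle × UnitAddCircle) × A ↦
      (skewShift a n w.1, w.2 + n • θ) :=
    ((continuous_skewShift a n).comp continuous_fst).prodMk (by fun_prop)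
  refine jointOrbitClosure_subset ((isClosed_jointOrbitClosure θ).preimage hcont) (fun m hm ↦ ?_) hw
  have hmem := mk_mem_jointOrbitClosure (a := a) θ (add_pos_of_nonneg_of_pos hn hm)
  rwa [quadOrbit_add, add_comm n m, add_smul] at hmem

-- On the fibre over `0` in the first coordinate the shift acts as translation by an orbit point.
lemma add_mem_jointOrbitClosure {θ : A} {w v : (UnitAddCircle × UnitAddCircle) × A}
    (hw : w ∈ jointOrbitClosure a θ) (hv : v ∈ jointOrbitClosure a θ) (hv0 : v.1.1 = 0) :
    w + v ∈ jointOrbitClosure a θ := by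
  refine jointOrbitClosure_subset
    ((isClosed_jointOrbitClosure θ).preimage (continuous_add_const v)) (fun n hn ↦ ?_) hw
  have hmem := skewShift_mem_jointOrbitClosure hv hn.le
  rwa [skewShift_eq_add, hv0, smul_zero, ← Prod.zero_eq_mk, add_zero, ← Prod.mk_add_mk,
    add_comm v] at hmem

variable [CompactSpace A]

lemma neg_mem_jointOrbitClosure {θ : A} {v : (UnitAddCircle × UnitAddCircle) × A}
    (hv : v ∈ jointOrbitClosure a θ) (hv0 : v.1.1 = 0) : -v ∈ jointOrbitClosure a θ := by
  have hclosed : IsClosed {v | v ∈ jointOrbitClosure a θ ∧ v.1.1 = 0} :=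
    (isClosed_jointOrbitClosure θ).inter
      (isClosed_eq (continuous_fst.comp continuous_fst) continuous_const)
  refine (neg_mem_of_isClosed_of_add_mem hclosed (fun w hw v hv ↦ ?_) ⟨hv, hv0⟩).1
  exact ⟨add_mem_jointOrbitClosure hw.1 hv.1 hv.2, by simp [hw.2, hv.2]⟩

-- Shift a point over `s / n` by `n` steps, where `2na` is close to `0`: relative to the sum of that
-- point and the `n`-th orbit point, the second coordinate moves by `n • (s / n) = s`.
lemma vertical_mem_jointOrbitClosure (ha : ¬IsOfFinAddOrder a) (θ : A) (s : UnitAddCircle) :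
    ((0, s), 0) ∈ jointOrbitClosure a θ := by
  obtain ⟨x, hx0, hxs⟩ := exists_tendsto_zero_zsmul_eq fun _ ↦ s
  choose w hwX hwx using fun n ↦ exists_mem_jointOrbitClosure_fst_eq ha θ (x n)
  obtain ⟨U, hU, hUb⟩ := mapClusterPt_iff_ultrafilter.1 <|
    mapClusterPt_atTop_zsmul_iff_nsmul.2 (mapClusterPt_zero_atTop_nsmul (2 • a))
  have hUpos : ∀ᶠ n in (U : Filter ℤ), 0 < n := hU (eventually_gt_atTop 0)
  have exists_lim (f : ℤ → (UnitAddCircle × UnitAddCircle) × A) :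
      ∃ p, Tendsto f U (𝓝 p) :=
    let ⟨p, _, hp⟩ := isCompact_univ.ultrafilter_le_nhds (U.map f) (by simp)
    ⟨p, hp⟩
  obtain ⟨p, hp⟩ := exists_lim w
  obtain ⟨r, hr⟩ := exists_lim fun n ↦ (quadOrbit a n, n • θ)
  have hpX := (isClosed_jointOrbitClosure θ).mem_of_tendsto hp (.of_forall hwX)
  have hrX := (isClosed_jointOrbitClosure θ).mem_of_tendsto hr
    (hUpos.mono fun n ↦ mk_mem_jointOrbitClosure θ)
  have hp0 : p.1.1 = 0 := tendsto_nhds_unique hp.fst_nhds.fst_nhds (by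
    simpa only [hwx] using hx0.mono_left hU)
  have hr0 : r.1.1 = 0 := tendsto_nhds_unique hr.fst_nhds.fst_nhds hUb
  have hprs : p + r + ((0, s), 0) ∈ jointOrbitClosure a θ := by
    refine (isClosed_jointOrbitClosure θ).mem_of_tendsto ((hp.add hr).add_const ((0, s), 0))
      (hUpos.mono fun n hn ↦ ?_)
    have hmem := skewShift_mem_jointOrbitClosure (hwX n) hn.le
    rwa [skewShift_eq_add, hwx, hxs n hn, ← add_zero ((w n).2 + n • θ), ← Prod.mk_add_mk,
      ← Prod.mk_add_mk] at hmem
  have hpr0 : (p + r).1.1 = 0 := by simp [hp0, hr0]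
  have hneg := neg_mem_jointOrbitClosure (add_mem_jointOrbitClosure hpX hrX hr0) hpr0
  have hmem := add_mem_jointOrbitClosure hprs hneg (by simp [hp0, hr0])
  rwa [← sub_eq_add_neg, add_sub_cancel_left] at hmem

theorem mk_zsmul_mem_jointOrbitClosure (ha : ¬IsOfFinAddOrder a) (θ : A) {n : ℤ} (hn : 0 ≤ n)
    (y : UnitAddCircle) : ((n • 2 • a, y), n • θ) ∈ jointOrbitClosure a θ := by
  have hmem :=
    skewShift_mem_jointOrbitClosure (vertical_mem_jointOrbitClosure ha θ (y - n ^ 2 • a)) hn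
  have hy : y - n ^ 2 • a + n ^ 2 • a = y := sub_add_cancel _ _
  simpa only [skewShift, smul_zero, zero_add, add_zero, hy] using hmem

theorem dense_image_quadOrbit_Ioi (ha : ¬IsOfFinAddOrder a) : Dense (quadOrbit a '' Ioi 0) := by
  rintro ⟨x, y⟩
  have hclosed : IsClosed {x | (x, y) ∈ closure (quadOrbit a '' Ioi 0)} :=
    isClosed_closure.preimage (by fun_prop)
  have hb : ¬IsOfFinAddOrder (2 • a) := by simpa using ha
  refine closure_minimal ?_ hclosed (dense_image_zsmul_Ioi hb x)
  rintro _ ⟨n, hn, rfl⟩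
  refine jointOrbitClosure_subset (isClosed_closure.preimage continuous_fst) (fun m hm ↦ ?_)
    (mk_zsmul_mem_jointOrbitClosure ha (0 : UnitAddCircle) (le_of_lt hn) y)
  exact subset_closure (mem_image_of_mem _ hm)

lemma exists_pos_of_eventually_nhds (ha : ¬IsOfFinAddOrder a)
    {w : UnitAddCircle × UnitAddCircle} {p : UnitAddCircle × UnitAddCircle → Prop}
    (hp : ∀ᶠ v in 𝓝 w, p v) : ∃ n : ℤ, 0 < n ∧ p (quadOrbit a n) := by
  obtain ⟨_, ⟨n, hn, rfl⟩, hpn⟩ :=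
    ((mem_closure_iff_frequently.1 (dense_image_quadOrbit_Ioi ha w)).and_eventually hp).exists
  exact ⟨n, hn, hpn⟩

end SkewProduct

section NearZero

variable {ι E : Type*} [TopologicalSpace E] [Zero E] {s : Set ι} {f : ι → E}

/-- The filter of points of `s` along which `f` tends to `0`. -/
def nearZero (s : Set ι) (f : ι → E) : Filter ι := comap f (𝓝 0) ⊓ 𝓟 s

lemma tendsto_nearZero : Tendsto f (nearZero s f) (𝓝 0) := tendsto_comap.mono_left inf_le_left

lemma eventually_nearZero_iff {p : ι → Prop} :
    (∀ᶠ i in nearZero s f, p i) ↔ ∀ᶠ y in 𝓝 0, ∀ i ∈ s, f i = y → p i := by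
  simp only [nearZero, eventually_inf_principal, eventually_comap, imp.swap]

lemma eventually_mem_nearZero : ∀ᶠ i in nearZero s f, i ∈ s :=
  mem_inf_of_right (mem_principal_self s)

lemma nearZero_Ioi_le_atTop [T1Space E] {f : ℤ → E} (hf : ∀ n > 0, f n ≠ 0) :
    nearZero (Ioi 0) f ≤ atTop := by
  refine tendsto_id'.1 (tendsto_atTop.2 fun k ↦ ?_)
  have hne : ∀ᶠ i in nearZero (Ioi 0) f, ∀ j ∈ Finset.Ioo 0 k, f i ≠ f j :=
    (eventually_all_finset _).2 fun j hj ↦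
      tendsto_nearZero.eventually_ne (hf j (Finset.mem_Ioo.1 hj).1).symm
  filter_upwards [hne, eventually_mem_nearZero] with i hi hi0
  exact not_lt.1 fun hik ↦ hi i (Finset.mem_Ioo.2 ⟨hi0, hik⟩) rfl

/-- For `i ∈ s`, the conditions `P i N` with `N > 0` characterise smallness of `f i`: every
neighbourhood of `0` contains `f i` as soon as `P i N` holds for a suitable `N`, and for every `N`
the condition `P i N` holds as soon as `f i` is close enough to `0`. -/
structure CharacterizesSmall (P : ι → ℤ → Prop) (s : Set ι) (f : ι → E) : Prop where
  exists_forall_mem : ∀ U ∈ 𝓝 (0 : E), ∃ N > 0, ∀ i ∈ s, P i N → f i ∈ U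
  eventually : ∀ N > 0, ∀ᶠ i in nearZero s f, P i N

namespace CharacterizesSmall

variable {P : ι → ℤ → Prop}

lemma exists_forall_of_eventually (h : CharacterizesSmall P s f) {p : E → Prop}
    (hp : ∀ᶠ y in 𝓝 0, p y) : ∃ N > 0, ∀ i ∈ s, P i N → p (f i) :=
  h.exists_forall_mem {y | p y} hp

lemma eventually_nhds (h : CharacterizesSmall P s f) {N : ℤ} (hN : 0 < N) :
    ∀ᶠ y in 𝓝 0, ∀ i ∈ s, f i = y → P i N :=
  eventually_nearZero_iff.1 (h.eventually N hN)

end CharacterizesSmall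

end NearZero

section Detection

variable {a : UnitAddCircle} {ρ : ℝ} {g : ℤ → ℤ}

lemma mu_antitone (g : ℤ → ℤ) (m : ℤ) : Antitone (mu g m) :=
  fun _ _ hN h n hn hnN ↦ h n hn (hnN.trans hN)

lemma lam_antitone (g : ℤ → ℤ) (m : ℤ) : Antitone (lam g m) :=
  fun _ _ hN ⟨n, hn, h₁, h₂⟩ ↦ ⟨n, hn, mu_antitone g _ hN h₁, mu_antitone g _ hN h₂⟩

lemma kap_antitone (g : ℤ → ℤ) (m : ℤ) : Antitone (kap g m) := by
  rintro N N' hN ⟨M, hM, h⟩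
  refine ⟨M, hM, fun k hk hgk hlam L hL ↦ ?_⟩
  obtain ⟨n, hn, hnL, hnN, hgn⟩ := h k hk hgk hlam L hL
  exact ⟨n, hn, hnL, mu_antitone g _ hN hnN, hgn⟩

lemma eq_zero_of_forall_norm_skewShift_snd_le (ha : ¬IsOfFinAddOrder a) (hρ0 : 0 < ρ)
    (hρ4 : ρ < 1 / 4) {w : UnitAddCircle × UnitAddCircle}
    (h : ∀ n : ℤ, 0 < n → ‖n ^ 2 • a‖ < ρ → ‖(skewShift a n w).2‖ ≤ ρ) : w = 0 := by
  have hclosed : IsClosed {v : (UnitAddCircle × UnitAddCircle) × UnitAddCircle |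
      ‖v.1.2‖ < ρ → ‖v.1.2 + (v.2 + w.2)‖ ≤ ρ} := by
    have hcont : Continuous fun v : (UnitAddCircle × UnitAddCircle) × UnitAddCircle ↦ v.1.2 :=
      continuous_snd.comp continuous_fst
    exact isClosed_imp (isOpen_lt hcont.norm continuous_const)
      (isClosed_le (hcont.add (continuous_snd.add_const w.2)).norm continuous_const)
  have hsub : jointOrbitClosure a w.1 ⊆ {v | ‖v.1.2‖ < ρ → ‖v.1.2 + (v.2 + w.2)‖ ≤ ρ} := by
    refine jointOrbitClosure_subset hclosed fun n hn hlt ↦ ?_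
    have heq : (skewShift a n w).2 = n ^ 2 • a + (n • w.1 + w.2) := by
      simp only [skewShift]
      abel
    exact heq ▸ h n hn hlt
  have hzero {n : ℤ} (hn : 0 ≤ n) : n • w.1 + w.2 = 0 := by
    refine norm_le_zero_iff.1 (norm_le_of_forall_norm_lt_norm_add_le hρ0 (by linarith) ?_)
    intro y hy
    simpa only [add_zero] using hsub (mk_zsmul_mem_jointOrbitClosure ha w.1 hn y) hy
  have hw₂ : w.2 = 0 := by simpa using hzero le_rfl
  have hw₁ : w.1 = 0 := by simpa [hw₂] using hzero zero_le_one
  exact Prod.ext hw₁ hw₂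

lemma eventually_nearZero_mu (hbd : ∀ n : ℤ, 0 < n → ‖n ^ 2 • a‖ ≠ ρ)
    (hg : ∀ m n, g m = g n ↔ (‖m ^ 2 • a‖ < ρ ↔ ‖n ^ 2 • a‖ < ρ)) (N : ℤ) :
    ∀ᶠ m in nearZero (Ioi 0) (quadOrbit a), mu g m N := by
  have heach {n : ℤ} (hn : 0 < n) : ∀ᶠ m in nearZero (Ioi 0) (quadOrbit a), g (n + m) = g n := by
    have hlim : Tendsto (fun m ↦ ‖(skewShift a n (quadOrbit a m)).2‖)
        (nearZero (Ioi 0) (quadOrbit a)) (𝓝 ‖n ^ 2 • a‖) :=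
      ((continuous_skewShift_snd a n).norm.tendsto' 0 _ (by simp [skewShift])).comp tendsto_nearZero
    simp only [skewShift_quadOrbit_snd] at hlim
    simp only [hg]
    rcases (hbd n hn).lt_or_gt with hlt | hgt
    · exact (hlim.eventually_lt_const hlt).mono fun m hm ↦ iff_of_true hm hlt
    · exact (hlim.eventually_const_lt hgt).mono fun m hm ↦ iff_of_false hm.not_gt hgt.not_gt
  filter_upwards [(eventually_all_finset (Finset.Ioc 0 N)).2 fun n hn ↦
    heach (Finset.mem_Ioc.1 hn).1] with m hm n hn hnN
  exact hm n (Finset.mem_Ioc.2 ⟨hn, hnN⟩)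

theorem characterizesSmall_mu (ha : ¬IsOfFinAddOrder a) (hρ0 : 0 < ρ) (hρ4 : ρ < 1 / 4)
    (hbd : ∀ n : ℤ, 0 < n → ‖n ^ 2 • a‖ ≠ ρ)
    (hg : ∀ m n, g m = g n ↔ (‖m ^ 2 • a‖ < ρ ↔ ‖n ^ 2 • a‖ < ρ)) :
    CharacterizesSmall (mu g) (Ioi 0) (quadOrbit a) := by
  refine ⟨fun U hU ↦ ?_, fun N _ ↦ eventually_nearZero_mu hbd hg N⟩
  by_contra! hfail
  choose! m _ hmu hmU using hfail
  obtain ⟨w, hwU, hcluster⟩ : ∃ w ∈ (interior U)ᶜ, MapClusterPt w atTop (quadOrbit a ∘ m) :=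
    isOpen_interior.isClosed_compl.isCompact.exists_mapClusterPt <| tendsto_principal.2 <|
      (eventually_gt_atTop 0).mono fun N hN hmem ↦ hmU N hN (interior_subset hmem)
  refine hwU (mem_interior_iff_mem_nhds.2 ?_)
  suffices w = 0 by rwa [this]
  refine eq_zero_of_forall_norm_skewShift_snd_le ha hρ0 hρ4 fun n hn hlt ↦ ?_
  have hclosed : IsClosed {w | ‖(skewShift a n w).2‖ ≤ ρ} :=
    isClosed_le (continuous_skewShift_snd a n).norm continuous_const
  refine hclosed.mem_of_mapClusterPt hcluster ((eventually_ge_atTop n).mono fun N hnN ↦ ?_)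
  rw [mem_ofPred_eq, Function.comp_apply, skewShift_quadOrbit_snd]
  exact (((hg _ _).1 (hmu N (hn.trans_le hnN) n hn hnN)).2 hlt).le

-- Solving `m x = -m²a` with `x` small gives `skewShift a m (x, 0) = (x + 2ma, 0)`, so if an orbit
-- point `n` is close to `(x, 0)`, then both it and the orbit point `n + m` are close to `0`.
lemma eventually_nearZero_lam (ha : ¬IsOfFinAddOrder a)
    (hmu : CharacterizesSmall (mu g) (Ioi 0) (quadOrbit a)) {N : ℤ} (hN : 0 < N) :
    ∀ᶠ m in nearZero (Ioi 0) fun n : ℤ ↦ n • 2 • a, lam g m N := by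
  obtain ⟨x, hx0, hxa⟩ := exists_tendsto_zero_zsmul_eq fun m ↦ -(m ^ 2 • a)
  have hb : ∀ n > (0 : ℤ), n • 2 • a ≠ 0 := fun n hn hna ↦ ha <| by
    simpa using isOfFinAddOrder_iff_zsmul_eq_zero.2 ⟨n, hn.ne', hna⟩
  have hx : Tendsto x (nearZero (Ioi 0) fun n : ℤ ↦ n • 2 • a) (𝓝 0) :=
    hx0.mono_left (nearZero_Ioi_le_atTop hb)
  have hxb : Tendsto (fun m ↦ x m + m • 2 • a) (nearZero (Ioi 0) fun n : ℤ ↦ n • 2 • a) (𝓝 0) := by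
    simpa only [add_zero] using hx.add tendsto_nearZero
  have hmuN := eventually_eventually_nhds.2 (hmu.eventually_nhds hN)
  filter_upwards [(hx.prodMk_nhds tendsto_const_nhds).eventually hmuN,
    (hxb.prodMk_nhds tendsto_const_nhds).eventually hmuN, eventually_mem_nearZero]
    with m hmu₁ hmu₂ hm
  have hshift : skewShift a m (x m, 0) = (x m + m • 2 • a, 0) := by simp [skewShift, hxa m hm]
  rw [← hshift] at hmu₂
  obtain ⟨n, hn, hn₁, hn₂⟩ := exists_pos_of_eventually_nhds ha
    (hmu₁.and ((continuous_skewShift a m).continuousAt.eventually hmu₂))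
  refine ⟨n, hn, hn₁ n hn rfl, hn₂ (n + m) (add_pos hn hm) ?_⟩
  rw [add_comm, quadOrbit_add]

theorem characterizesSmall_lam (ha : ¬IsOfFinAddOrder a)
    (hmu : CharacterizesSmall (mu g) (Ioi 0) (quadOrbit a)) :
    CharacterizesSmall (lam g) (Ioi 0) fun n : ℤ ↦ n • 2 • a := by
  refine ⟨fun U hU ↦ ?_, fun N ↦ eventually_nearZero_lam ha hmu⟩
  obtain ⟨V, hV, hVU⟩ := exists_nhds_half_neg hU
  obtain ⟨N, hN, hNV⟩ := hmu.exists_forall_of_eventually (continuousAt_fst.eventually_mem hV)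
  refine ⟨N, hN, fun m hm ⟨n, hn, hmu₁, hmu₂⟩ ↦ ?_⟩
  have hdiff := hVU _ (hNV (n + m) (add_pos hn hm) hmu₂) _ (hNV n hn hmu₁)
  have heq : (n + m) • 2 • a - n • 2 • a = m • 2 • a := by module
  exact heq ▸ hdiff

section Lam

variable (ha : ¬IsOfFinAddOrder a)
  (hlam : CharacterizesSmall (lam g) (Ioi 0) fun n : ℤ ↦ n • 2 • a)
include ha hlam

lemma exists_pos_lam_of_eventually_nhds {y : UnitAddCircle} {L : ℤ} (hL : 0 < L)
    {p : UnitAddCircle × UnitAddCircle → Prop} (hp : ∀ᶠ v in 𝓝 (0, y), p v) :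
    ∃ n : ℤ, 0 < n ∧ lam g n L ∧ p (quadOrbit a n) := by
  obtain ⟨n, hn, hnp, hnL⟩ := exists_pos_of_eventually_nhds ha
    (hp.and (continuousAt_fst.eventually (hlam.eventually_nhds hL)))
  exact ⟨n, hn, hnL n hn rfl, hnp⟩

lemma norm_sq_zsmul_le_of_kap (hρ0 : 0 < ρ) {δ : ℝ} (hδ : 4 * ρ + 2 * δ < 1)
    (hg : ∀ n, g n = 1 ↔ ‖n ^ 2 • a‖ < ρ) {N : ℤ}
    (hN : ∀ n : ℤ, 0 < n → mu g n N → ‖n ^ 2 • a‖ < δ) {m : ℤ} (hm : kap g m N) :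
    ‖m ^ 2 • a‖ ≤ δ := by
  refine norm_le_of_forall_norm_lt_norm_add_le hρ0 hδ fun y hy ↦ ?_
  by_contra! hfar
  obtain ⟨M, hM, hmM⟩ := hm
  have hy_mem : ∀ᶠ v in 𝓝 ((0 : UnitAddCircle), y), ‖v.2‖ < ρ :=
    continuous_snd.norm.continuousAt.eventually_lt_const hy
  have hy_far : ∀ᶠ v in 𝓝 ((0 : UnitAddCircle), y), ρ + δ < ‖(skewShift a m v).2‖ :=
    (continuous_skewShift_snd a m).norm.continuousAt.eventually_const_lt
      (by simpa [skewShift] using hfar)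
  obtain ⟨h, hh, hhM, hhρ, hhm⟩ := exists_pos_lam_of_eventually_nhds ha hlam hM (hy_mem.and hy_far)
  rw [skewShift_quadOrbit_snd, add_comm m h] at hhm
  have hcont : Continuous fun x : UnitAddCircle ↦ ‖(h + m) ^ 2 • a + (h + m) • x‖ := by fun_prop
  have hstay : ∀ᶠ x in 𝓝 (0 : UnitAddCircle), ρ + δ < ‖(h + m) ^ 2 • a + (h + m) • x‖ :=
    hcont.continuousAt.eventually_const_lt (by simpa only [smul_zero, add_zero] using hhm)
  obtain ⟨L, hL, hLstay⟩ := hlam.exists_forall_of_eventually hstay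
  obtain ⟨n, hn, hnL, hnN, hgn⟩ := hmM h hh ((hg h).2 hhρ) hhM L hL
  refine (hLstay n hn hnL).not_ge ?_
  calc ‖(h + m) ^ 2 • a + (h + m) • n • 2 • a‖ = ‖(h + m + n) ^ 2 • a - n ^ 2 • a‖ := by
        congr 1; module
    _ ≤ ‖(h + m + n) ^ 2 • a‖ + ‖n ^ 2 • a‖ := norm_sub_le _ _
    _ ≤ ρ + δ := add_le_add ((hg _).1 hgn).le (hN n hn hnN).le

-- The witness `n` is an orbit point close to `(0, -m²a - 2hma)`, so that `(h + m + n)²a ≈ h²a`.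
lemma eventually_nearZero_kap (hg : ∀ n, g n = 1 ↔ ‖n ^ 2 • a‖ < ρ)
    (hmu : CharacterizesSmall (mu g) (Ioi 0) (quadOrbit a)) {N : ℤ} (hN : 0 < N) :
    ∀ᶠ m in nearZero (Ioi 0) fun n : ℤ ↦ n ^ 2 • a, kap g m N := by
  have hlim : Tendsto (fun m ↦ (0, -(m ^ 2 • a))) (nearZero (Ioi 0) fun n : ℤ ↦ n ^ 2 • a)
      (𝓝 (0 : UnitAddCircle × UnitAddCircle)) :=
    tendsto_const_nhds.prodMk_nhds <|
      (continuous_neg.tendsto' (0 : UnitAddCircle) 0 neg_zero).comp tendsto_nearZero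
  have hmuN := eventually_eventually_nhds.2 (eventually_eventually_nhds.2 (hmu.eventually_nhds hN))
  filter_upwards [hlim.eventually hmuN] with m hmuN
  have hcont : Continuous fun x : UnitAddCircle ↦ ((0 : UnitAddCircle), -(m ^ 2 • a) - m • x) := by
    fun_prop
  obtain ⟨M, hM, hMmu⟩ := hlam.exists_forall_of_eventually
    ((hcont.tendsto' 0 (0, -(m ^ 2 • a)) (by simp)).eventually hmuN)
  refine ⟨M, hM, fun h hh hgh hhM L hL ↦ ?_⟩
  have hreturn : (skewShift a (h + m) (0, -(m ^ 2 • a) - m • h • 2 • a)).2 = h ^ 2 • a := by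
    simp only [skewShift]
    module
  have hgood : ∀ᶠ v in 𝓝 ((0 : UnitAddCircle), -(m ^ 2 • a) - m • h • 2 • a),
      ‖(skewShift a (h + m) v).2‖ < ρ :=
    (continuous_skewShift_snd a (h + m)).norm.continuousAt.eventually_lt_const
      (by simpa only [hreturn] using (hg h).1 hgh)
  obtain ⟨n, hn, hnL, hnN, hnρ⟩ := exists_pos_lam_of_eventually_nhds ha hlam hL
    ((hMmu h hh hhM).and hgood)
  rw [skewShift_quadOrbit_snd] at hnρ
  exact ⟨n, hn, hnL, hnN n hn rfl, (hg _).2 hnρ⟩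

theorem characterizesSmall_kap (hρ0 : 0 < ρ) (hρ4 : ρ < 1 / 4)
    (hg : ∀ n, g n = 1 ↔ ‖n ^ 2 • a‖ < ρ)
    (hmu : CharacterizesSmall (mu g) (Ioi 0) (quadOrbit a)) :
    CharacterizesSmall (kap g) (Ioi 0) fun n : ℤ ↦ n ^ 2 • a := by
  refine ⟨fun U hU ↦ ?_, fun N ↦ eventually_nearZero_kap ha hlam hg hmu⟩
  obtain ⟨ε, hε, hεU⟩ := Metric.nhds_basis_closedBall.mem_iff.1 hU
  obtain ⟨δ, hδ, hδlt⟩ := exists_between (lt_min hε (by linarith : 0 < (1 - 4 * ρ) / 2))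
  obtain ⟨hδε, hδρ⟩ := lt_min_iff.1 hδlt
  obtain ⟨N, hN, hNδ⟩ := hmu.exists_forall_of_eventually
    (continuousAt_snd.eventually_mem (Metric.ball_mem_nhds (0 : UnitAddCircle) hδ))
  refine ⟨N, hN, fun m _ hmN ↦ hεU (mem_closedBall_zero_iff.2 (le_trans ?_ hδε.le))⟩
  exact norm_sq_zsmul_le_of_kap ha hlam hρ0 (by linarith) hg
    (fun n hn hnN ↦ mem_ball_zero_iff.1 (hNδ n hn hnN)) hmN

end Lam

lemma eventually_nearZero_nu
    (hlam : CharacterizesSmall (lam g) (Ioi 0) fun n : ℤ ↦ n • 2 • a)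
    (hkap : CharacterizesSmall (kap g) (Ioi 0) fun n : ℤ ↦ n ^ 2 • a) {N : ℤ} (hN : 0 < N) :
    ∀ᶠ p in nearZero (Ioi 0 ×ˢ Ioi 0) fun p : ℤ × ℤ ↦ (p.1 ^ 2 - p.2 ^ 2) • a,
      nu g p.1 p.2 N := by
  have hneg : Tendsto (fun p : ℤ × ℤ ↦ -((p.1 ^ 2 - p.2 ^ 2) • a))
      (nearZero (Ioi 0 ×ˢ Ioi 0) fun p : ℤ × ℤ ↦ (p.1 ^ 2 - p.2 ^ 2) • a) (𝓝 0) :=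
    (continuous_neg.tendsto' (0 : UnitAddCircle) 0 neg_zero).comp tendsto_nearZero
  filter_upwards [hneg.eventually (eventually_eventually_nhds.2 (hkap.eventually_nhds hN)),
    eventually_mem_nearZero] with ⟨m, mt⟩ hkapN ⟨hm, hmt⟩
  have hcont : Continuous fun v : UnitAddCircle × UnitAddCircle ↦
      v.2 - (m ^ 2 - mt ^ 2) • a + (mt - m) • v.1 := by fun_prop
  have hev := (hcont.tendsto' (0, 0) (-((m ^ 2 - mt ^ 2) • a)) (by simp)).eventually hkapN
  rw [nhds_prod_eq] at hev
  obtain ⟨p, hp, q, hq, hpq⟩ := eventually_prod_iff.1 hev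
  obtain ⟨L₁, hL₁, hL₁p⟩ := hlam.exists_forall_of_eventually hp
  obtain ⟨L₂, _, hL₂q⟩ := hkap.exists_forall_of_eventually hq
  refine ⟨max L₁ L₂, lt_max_of_lt_left hL₁, fun n hn hnL hmn ↦ ?_⟩
  refine hpq (hL₁p n hn (lam_antitone g n (le_max_left _ _) hnL))
    (hL₂q (m + n) (add_pos hm hn) (kap_antitone g _ (le_max_right _ _) hmn))
    (mt + n) (add_pos hmt hn) ?_
  module

theorem characterizesSmall_nu (ha : ¬IsOfFinAddOrder a)
    (hlam : CharacterizesSmall (lam g) (Ioi 0) fun n : ℤ ↦ n • 2 • a)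
    (hkap : CharacterizesSmall (kap g) (Ioi 0) fun n : ℤ ↦ n ^ 2 • a) :
    CharacterizesSmall (fun p : ℤ × ℤ ↦ nu g p.1 p.2) (Ioi 0 ×ˢ Ioi 0)
      fun p ↦ (p.1 ^ 2 - p.2 ^ 2) • a := by
  refine ⟨fun U hU ↦ ?_, fun N ↦ eventually_nearZero_nu hlam hkap⟩
  obtain ⟨V, hV, hVclosed, hVU⟩ := exists_mem_nhds_isClosed_subset (neg_mem_nhds_zero _ hU)
  obtain ⟨N, hN, hNV⟩ := hkap.exists_forall_mem V hV
  refine ⟨N, hN, fun ⟨m, mt⟩ ⟨hm, hmt⟩ ⟨L, hL, hmL⟩ ↦ ?_⟩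
  suffices (skewShift a mt (0, -(m ^ 2 • a))).2 ∈ V by
    have heq : -(skewShift a mt (0, -(m ^ 2 • a))).2 = (m ^ 2 - mt ^ 2) • a := by
      simp only [skewShift]
      module
    exact heq ▸ hVU this
  by_contra hout
  have hreturn : (skewShift a m (0, -(m ^ 2 • a))).2 = 0 := by
    simp only [skewShift]
    module
  have hkapL := ((continuous_skewShift_snd a m).tendsto' _ _ hreturn).eventually
    (hkap.eventually_nhds hL)
  have houtV := (continuous_skewShift_snd a mt).continuousAt.eventually_mem
    (hVclosed.isOpen_compl.mem_nhds hout)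
  obtain ⟨n, hn, hnL, hnm, hnmt⟩ := exists_pos_lam_of_eventually_nhds ha hlam hL (hkapL.and houtV)
  simp only [skewShift_quadOrbit_snd] at hnm hnmt
  exact hnmt (hNV (mt + n) (add_pos hmt hn) (hmL n hn hnL (hnm (m + n) (add_pos hm hn) rfl)))

end Detection

section Irrational

variable {α ρ : ℝ}

lemma norm_zsmul_coe_unitAddCircle (α : ℝ) (k : ℤ) :
    ‖k • (α : UnitAddCircle)‖ = |α * k - round (α * k)| := by
  rw [← AddCircle.coe_zsmul, UnitAddCircle.norm_eq, zsmul_eq_mul, mul_comm]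

lemma not_isOfFinAddOrder_coe_unitAddCircle (hα : Irrational α) :
    ¬IsOfFinAddOrder (α : UnitAddCircle) := by
  rw [AddCircle.isOfFinAddOrder_iff_exists_rat_eq_div, div_one]
  exact hα

lemma abs_mul_sq_sub_round_ne (hρ0 : 0 < ρ) (hα : ¬∃ q r : ℚ, α = (q : ℝ) + (r : ℝ) * ρ) {n : ℤ}
    (hn : 0 < n) : |α * n ^ 2 - round (α * n ^ 2)| ≠ ρ := by
  intro h
  have hn' : (n : ℝ) ≠ 0 := mod_cast hn.ne'
  generalize round (α * n ^ 2) = k at h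
  refine hα ?_
  rcases (abs_eq hρ0.le).1 h with h | h
  · refine ⟨k / n ^ 2, 1 / n ^ 2, ?_⟩
    push_cast
    field_simp
    linarith
  · refine ⟨k / n ^ 2, -1 / n ^ 2, ?_⟩
    push_cast
    field_simp
    linarith

end Irrational

open scoped Classical in
theorem statement_general (α ρ : ℝ) (hρ0 : 0 < ρ) (hρ4 : ρ < 1 / 4) (hα : Irrational α)
    (hbd : ∀ n : ℤ, 0 < n → |α * n ^ 2 - round (α * n ^ 2)| ≠ ρ)
    (g : ℤ → ℤ)
    (hg : ∀ n : ℤ, g n = if |α * n ^ 2 - round (α * n ^ 2)| < ρ then 1 else 0) :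
    (∀ ε : ℝ, 0 < ε → ∃ N : ℤ, 0 < N ∧ ∀ m mt : ℤ, 0 < m → 0 < mt → nu g m mt N →
        |α * ((m : ℝ) ^ 2 - (mt : ℝ) ^ 2) - round (α * ((m : ℝ) ^ 2 - (mt : ℝ) ^ 2))| < ε) ∧
      (∀ N : ℤ, 0 < N → ∃ ε : ℝ, 0 < ε ∧ ∀ m mt : ℤ, 0 < m → 0 < mt →
        |α * ((m : ℝ) ^ 2 - (mt : ℝ) ^ 2) - round (α * ((m : ℝ) ^ 2 - (mt : ℝ) ^ 2))| < ε →
          nu g m mt N) := by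
  have hsq (n : ℤ) : |α * n ^ 2 - round (α * n ^ 2)| = ‖n ^ 2 • (α : UnitAddCircle)‖ := by
    simp [norm_zsmul_coe_unitAddCircle]
  have hdiff (m mt : ℤ) : |α * ((m : ℝ) ^ 2 - (mt : ℝ) ^ 2) -
      round (α * ((m : ℝ) ^ 2 - (mt : ℝ) ^ 2))| = ‖(m ^ 2 - mt ^ 2) • (α : UnitAddCircle)‖ := by
    simp [norm_zsmul_coe_unitAddCircle]
  simp only [hsq] at hbd hg
  simp only [hdiff]
  have ha := not_isOfFinAddOrder_coe_unitAddCircle hα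
  have hmu := characterizesSmall_mu ha hρ0 hρ4 hbd fun m n ↦ (by grind : g m = g n ↔ _)
  have hlam := characterizesSmall_lam ha hmu
  have hkap := characterizesSmall_kap ha hlam hρ0 hρ4 (fun n ↦ by simp [hg]) hmu
  have hnu := characterizesSmall_nu ha hlam hkap
  refine ⟨fun ε hε ↦ ?_, fun N hN ↦ ?_⟩
  · obtain ⟨N, hN, h⟩ := hnu.exists_forall_mem _ (Metric.ball_mem_nhds (0 : UnitAddCircle) hε)
    exact ⟨N, hN, fun m mt hm hmt hmN ↦ mem_ball_zero_iff.1 (h (m, mt) ⟨hm, hmt⟩ hmN)⟩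
  · obtain ⟨ε, hε, h⟩ := Metric.eventually_nhds_iff_ball.1 (hnu.eventually_nhds hN)
    exact ⟨ε, hε, fun m mt hm hmt hlt ↦ h _ (mem_ball_zero_iff.2 hlt) (m, mt) ⟨hm, hmt⟩ rfl⟩

open scoped Classical in
theorem statement (α ρ : ℝ) (hρ0 : 0 < ρ) (hρ4 : ρ < 1 / 4)
    (hα : ¬ ∃ q r : ℚ, α = (q : ℝ) + (r : ℝ) * ρ)
    (g : ℤ → ℤ)
    (hg : ∀ n : ℤ, g n = if |α * n ^ 2 - round (α * n ^ 2)| < ρ then 1 else 0) :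
    (∀ ε : ℝ, 0 < ε → ∃ N : ℤ, 0 < N ∧ ∀ m mt : ℤ, 0 < m → 0 < mt → nu g m mt N →
        |α * ((m : ℝ) ^ 2 - (mt : ℝ) ^ 2) - round (α * ((m : ℝ) ^ 2 - (mt : ℝ) ^ 2))| < ε) ∧
      (∀ N : ℤ, 0 < N → ∃ ε : ℝ, 0 < ε ∧ ∀ m mt : ℤ, 0 < m → 0 < mt →
        |α * ((m : ℝ) ^ 2 - (mt : ℝ) ^ 2) - round (α * ((m : ℝ) ^ 2 - (mt : ℝ) ^ 2))| < ε →
          nu g m mt N) := by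
  have hirr : Irrational α := fun ⟨q, hq⟩ ↦ hα ⟨q, 0, by simp [hq]⟩
  exact statement_general α ρ hρ0 hρ4 hirr (fun _ hn ↦ abs_mul_sq_sub_round_ne hρ0 hα hn) g hg

end Stmt17
end
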